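/- arXiv:1001.5160 — 10 statements merged into one kernel-verified Lean document; each statement's English description precedes it below -/
import Mathlib

section
/- Let c(ε) = ∫₀¹ ∫_x^{x+1} e^{ε^{-2}(S(y)−S(x))} dy dx and μ^ε(x) = c(ε)^{-1} ∫_x^{x+1} e^{ε^{-2}(S(y)−S(x))} dy. Then for every x ∈ ℝ, lim_{ε↓0} −ε² log μ^ε(x) = max_{x'∈[0,1]} max_{y'∈[x',x'+1]} (S(y')−S(x')) − max_{y∈[x,x+1]} (S(y)−S(x)), which also equals min_{y∈[x,x+1]} (S(x)−S(y)) − min_{x'∈[0,1]} min_{y'∈[x',x'+1]} (S(x')−S(y')). -/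
open Set Filter Topology

open MeasureTheory in
/-- Laplace principle on a compact set of unit volume. -/
lemma laplace_aux {E : Type*} [TopologicalSpace E] [T2Space E] [MeasurableSpace E] [BorelSpace E]
    (ν : Measure E) [ν.IsOpenPosMeasure] (A : Set E) (hA : IsCompact A) (hne : A.Nonempty)
    (hcl : A ⊆ closure (interior A)) (hν : ν A = 1) (F : E → ℝ) (hF : Continuous F) :
    (∀ k : ℝ, 0 < ∫ p in A, Real.exp (k * F p) ∂ν) ∧
    Tendsto (fun ε : ℝ => ε ^ 2 * Real.log (∫ p in A, Real.exp ((ε ^ 2)⁻¹ * F p) ∂ν))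
      (𝓝[>] 0) (𝓝 (sSup (F '' A))) := by
  have hAm : MeasurableSet A := hA.measurableSet
  have hfin : ∀ B : Set E, B ⊆ A → ν B ≠ ⊤ := fun B hB =>
    ne_top_of_le_ne_top (by simp [hν]) (measure_mono hB)
  have hcont : ∀ k : ℝ, Continuous (fun p => Real.exp (k * F p)) := fun k => by fun_prop
  have hint : ∀ k : ℝ, IntegrableOn (fun p => Real.exp (k * F p)) A ν := by
    intro k
    obtain ⟨C, hC⟩ := hA.exists_bound_of_continuousOn (hcont k).continuousOn
    exact Measure.integrableOn_of_bounded (M := C) (hfin A subset_rfl)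
      (hcont k).measurable.aestronglyMeasurable
      (by filter_upwards [ae_restrict_mem hAm] with p hp using hC p hp)
  obtain ⟨p0, hp0, hmax⟩ := hA.exists_isMaxOn hne hF.continuousOn
  have hM : sSup (F '' A) = F p0 :=
    IsGreatest.csSup_eq ⟨mem_image_of_mem _ hp0, by rintro _ ⟨p, hp, rfl⟩; exact hmax hp⟩
  rw [hM]
  -- lower bound
  have hlow : ∀ a < F p0, ∃ v : ℝ, 0 < v ∧ ∀ k : ℝ, 0 ≤ k →
      v * Real.exp (k * a) ≤ ∫ p in A, Real.exp (k * F p) ∂ν := by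
    intro a ha
    set U := F ⁻¹' (Ioi a) with hU
    have hUo : IsOpen U := isOpen_Ioi.preimage hF
    have hUne : (U ∩ interior A).Nonempty := mem_closure_iff.1 (hcl hp0) U hUo ha
    have hpos : 0 < ν (U ∩ A) := lt_of_lt_of_le
      ((hUo.inter isOpen_interior).measure_pos ν hUne)
      (measure_mono (inter_subset_inter_right _ interior_subset))
    refine ⟨ν.real (U ∩ A), ENNReal.toReal_pos hpos.ne' (hfin _ inter_subset_right), ?_⟩
    intro k hk
    have hUm : MeasurableSet (U ∩ A) := hUo.measurableSet.inter hAm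
    calc ν.real (U ∩ A) * Real.exp (k * a) = ∫ p in U ∩ A, Real.exp (k * a) ∂ν := by
          rw [setIntegral_const, smul_eq_mul]
      _ ≤ ∫ p in U ∩ A, Real.exp (k * F p) ∂ν := by
          refine setIntegral_mono_on (integrableOn_const (hfin _ inter_subset_right))
            ((hint k).mono_set inter_subset_right) hUm ?_
          intro p hp
          exact Real.exp_le_exp.2 (mul_le_mul_of_nonneg_left (le_of_lt hp.1) hk)
      _ ≤ _ := setIntegral_mono_set (hint k)
            (Eventually.of_forall fun p => (Real.exp_pos _).le)
            (Eventually.of_forall fun p hp => hp.2)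
  have hpos : ∀ k : ℝ, 0 < ∫ p in A, Real.exp (k * F p) ∂ν := by
    intro k
    rw [setIntegral_pos_iff_support_of_nonneg_ae
      (Eventually.of_forall fun p => (Real.exp_pos _).le) (hint k)]
    have : Function.support (fun p => Real.exp (k * F p)) = univ := by
      ext p; simp [(Real.exp_pos _).ne']
    rw [this, univ_inter, hν]; exact one_pos
  refine ⟨hpos, ?_⟩
  have hup : ∀ k : ℝ, 0 ≤ k → ∫ p in A, Real.exp (k * F p) ∂ν ≤ Real.exp (k * F p0) := by
    intro k hk
    calc _ ≤ ∫ p in A, Real.exp (k * F p0) ∂ν := by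
          refine setIntegral_mono_on (hint k) (integrableOn_const (hfin _ subset_rfl)) hAm ?_
          intro p hp
          exact Real.exp_le_exp.2 (mul_le_mul_of_nonneg_left (hmax hp) hk)
      _ = _ := by rw [setIntegral_const, smul_eq_mul, Measure.real, hν]; simp
  rw [tendsto_order]
  constructor
  · intro a ha
    obtain ⟨v, hv, hb⟩ := hlow ((a + F p0) / 2) (by linarith)
    have ht : Tendsto (fun ε : ℝ => ε ^ 2 * Real.log v + (a + F p0) / 2) (𝓝[>] 0)
        (𝓝 ((a + F p0) / 2)) := by
      have : Continuous (fun ε : ℝ => ε ^ 2 * Real.log v + (a + F p0) / 2) := by fun_prop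
      have h := this.tendsto 0
      simp only [ne_eq, OfNat.ofNat_ne_zero, not_false_eq_true, zero_pow, zero_mul, zero_add] at h
      exact h.mono_left nhdsWithin_le_nhds
    filter_upwards [ht.eventually_const_lt (show a < (a + F p0) / 2 by linarith),
      self_mem_nhdsWithin] with ε h1 h2
    have h2 : 0 < ε ^ 2 := pow_pos h2 2
    refine h1.trans_le ?_
    have h3 := Real.log_le_log (by positivity) (hb (ε ^ 2)⁻¹ (by positivity))
    rw [Real.log_mul hv.ne' (Real.exp_pos _).ne', Real.log_exp] at h3
    calc ε ^ 2 * Real.log v + (a + F p0) / 2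
        = ε ^ 2 * (Real.log v + (ε ^ 2)⁻¹ * ((a + F p0) / 2)) := by
          rw [mul_add, mul_inv_cancel_left₀ h2.ne']
      _ ≤ _ := mul_le_mul_of_nonneg_left h3 h2.le
  · intro a ha
    filter_upwards [self_mem_nhdsWithin] with ε h2
    have h2 : 0 < ε ^ 2 := pow_pos h2 2
    refine lt_of_le_of_lt ?_ ha
    have h3 := Real.log_le_log (hpos _) (hup (ε ^ 2)⁻¹ (by positivity))
    rw [Real.log_exp] at h3
    calc _ ≤ ε ^ 2 * ((ε ^ 2)⁻¹ * F p0) := mul_le_mul_of_nonneg_left h3 h2.le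
      _ = _ := by rw [mul_inv_cancel_left₀ h2.ne']

lemma sInf_neg_aux (f g : ℝ → ℝ) (A : Set ℝ) (h : ∀ y, g y = - f y) :
    sInf (g '' A) = - sSup (f '' A) := by
  rw [Real.sInf_def, ← Set.image_neg_eq_neg, image_image]
  simp [h]

open MeasureTheory in
lemma inner_aux (S : ℝ → ℝ) (x k : ℝ) :
    ∫ y in x..(x + 1), Real.exp (k * (S y - S x))
      = ∫ t in Icc (0:ℝ) 1, Real.exp (k * (S (x + t) - S x)) := by
  rw [integral_Icc_eq_integral_Ioc, ← intervalIntegral.integral_of_le zero_le_one,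
    intervalIntegral.integral_comp_add_left (fun y => Real.exp (k * (S y - S x))) x, add_zero]

lemma img_aux (S : ℝ → ℝ) (x : ℝ) :
    (fun y => S y - S x) '' Icc x (x + 1) = (fun t => S (x + t) - S x) '' Icc 0 1 := by
  have : Icc x (x + 1) = (fun t => x + t) '' Icc 0 1 := by simp [add_comm]
  rw [this, image_image]

/-- small-noise large deviations of the invariant density `μ^ε`:
`lim_{ε↓0} −ε² log μ^ε(x) = max_{x'∈[0,1]} max_{y'∈[x',x'+1]} (S(y')−S(x'))
  − max_{y∈[x,x+1]} (S(y)−S(x))`, which also equals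
`min_{y∈[x,x+1]} (S(x)−S(y)) − min_{x'∈[0,1]} min_{y'∈[x',x'+1]} (S(x')−S(y'))`. -/
theorem stmt_1
    (b : ℝ → ℝ) (K : NNReal) (hb : LipschitzWith K b) (hbper : ∀ x, b (x + 1) = b x)
    (S : ℝ → ℝ) (hS : ∀ x, S x = -2 * ∫ t in (0:ℝ)..x, b t)
    (c : ℝ → ℝ)
    (hc : ∀ ε : ℝ, 0 < ε →
      c ε = ∫ x in (0:ℝ)..1, ∫ y in x..(x + 1), Real.exp ((ε ^ 2)⁻¹ * (S y - S x)))
    (μ : ℝ → ℝ → ℝ)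
    (hμ : ∀ ε : ℝ, 0 < ε → ∀ x,
      μ ε x = (c ε)⁻¹ * ∫ y in x..(x + 1), Real.exp ((ε ^ 2)⁻¹ * (S y - S x)))
    (x : ℝ) :
    Tendsto (fun ε => -(ε ^ 2) * Real.log (μ ε x)) (nhdsWithin 0 (Ioi 0))
      (nhds (sSup ((fun x' => sSup ((fun y => S y - S x') '' Icc x' (x' + 1))) '' Icc 0 1)
        - sSup ((fun y => S y - S x) '' Icc x (x + 1)))) ∧
    sSup ((fun x' => sSup ((fun y => S y - S x') '' Icc x' (x' + 1))) '' Icc 0 1)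
        - sSup ((fun y => S y - S x) '' Icc x (x + 1))
      = sInf ((fun y => S x - S y) '' Icc x (x + 1))
        - sInf ((fun x' => sInf ((fun y => S x' - S y) '' Icc x' (x' + 1))) '' Icc 0 1) := by
  have hbc : Continuous b := hb.continuous
  have hSc : Continuous S := by
    have : S = fun x => -2 * ∫ t in (0:ℝ)..x, b t := funext hS
    rw [this]
    exact continuous_const.mul
      (intervalIntegral.continuous_primitive (fun a b => hbc.intervalIntegrable a b) 0)
  have hclI : Icc (0:ℝ) 1 ⊆ closure (interior (Icc (0:ℝ) 1)) := by
    rw [interior_Icc, closure_Ioo zero_ne_one]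
  constructor
  · have L1 := laplace_aux MeasureTheory.volume (Icc (0:ℝ) 1) isCompact_Icc ⟨0, by simp⟩ hclI
      (by simp) (fun t => S (x + t) - S x) (by fun_prop)
    have L2 := laplace_aux MeasureTheory.volume (Icc (0:ℝ) 1 ×ˢ Icc (0:ℝ) 1)
      (isCompact_Icc.prod isCompact_Icc) ⟨(0, 0), by simp⟩
      (by rw [interior_prod_eq, closure_prod_eq]; exact prod_mono hclI hclI)
      (by rw [MeasureTheory.Measure.volume_eq_prod, MeasureTheory.Measure.prod_prod]; simp)
      (fun p : ℝ × ℝ => S (p.1 + p.2) - S p.1) (by fun_prop)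
    have hc' : ∀ ε : ℝ, 0 < ε → c ε = ∫ p in Icc (0:ℝ) 1 ×ˢ Icc (0:ℝ) 1,
        Real.exp ((ε ^ 2)⁻¹ * (S (p.1 + p.2) - S p.1)) := by
      intro ε hε
      rw [hc ε hε, MeasureTheory.Measure.volume_eq_prod, MeasureTheory.setIntegral_prod,
        intervalIntegral.integral_of_le zero_le_one, ← MeasureTheory.integral_Icc_eq_integral_Ioc]
      · simp_rw [inner_aux]
      · refine ContinuousOn.integrableOn_compact (isCompact_Icc.prod isCompact_Icc) ?_
        fun_prop
    have hsup : sSup ((fun x' => sSup ((fun y => S y - S x') '' Icc x' (x' + 1))) '' Icc 0 1)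
        = sSup ((fun p : ℝ × ℝ => S (p.1 + p.2) - S p.1) '' (Icc (0:ℝ) 1 ×ˢ Icc (0:ℝ) 1)) := by
      simp_rw [img_aux]
      have hKc : IsCompact (Icc (0:ℝ) 1 ×ˢ Icc (0:ℝ) 1) := isCompact_Icc.prod isCompact_Icc
      have hFc : Continuous (fun p : ℝ × ℝ => S (p.1 + p.2) - S p.1) := by fun_prop
      obtain ⟨p0, hp0, hmax⟩ := hKc.exists_isMaxOn ⟨(0, 0), by simp⟩ hFc.continuousOn
      have e1 : sSup ((fun p : ℝ × ℝ => S (p.1 + p.2) - S p.1) ''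
          (Icc (0:ℝ) 1 ×ˢ Icc (0:ℝ) 1)) = S (p0.1 + p0.2) - S p0.1 :=
        IsGreatest.csSup_eq ⟨mem_image_of_mem _ hp0, by rintro _ ⟨p, hp, rfl⟩; exact hmax hp⟩
      have hle : ∀ x' ∈ Icc (0:ℝ) 1, sSup ((fun t => S (x' + t) - S x') '' Icc 0 1)
          ≤ S (p0.1 + p0.2) - S p0.1 := by
        intro x' hx'
        refine csSup_le (Set.Nonempty.image _ ⟨0, by simp⟩) ?_
        rintro _ ⟨t, ht, rfl⟩
        exact hmax (show (x', t) ∈ Icc (0:ℝ) 1 ×ˢ Icc (0:ℝ) 1 from ⟨hx', ht⟩)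
      rw [e1]
      refine IsGreatest.csSup_eq ⟨⟨p0.1, hp0.1, le_antisymm (hle _ hp0.1) ?_⟩, ?_⟩
      · refine le_csSup ⟨S (p0.1 + p0.2) - S p0.1, ?_⟩ ⟨p0.2, hp0.2, rfl⟩
        rintro _ ⟨t, ht, rfl⟩
        exact hmax (show (p0.1, t) ∈ Icc (0:ℝ) 1 ×ˢ Icc (0:ℝ) 1 from ⟨hp0.1, ht⟩)
      · rintro _ ⟨x', hx', rfl⟩
        exact hle x' hx'
    rw [hsup, img_aux]
    refine (L2.2.sub L1.2).congr' ?_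
    filter_upwards [self_mem_nhdsWithin] with ε hε
    rw [hμ ε hε, hc' ε hε, inner_aux, Real.log_mul (inv_ne_zero (L2.1 _).ne') (L1.1 _).ne',
      Real.log_inv]
    ring
  · rw [sInf_neg_aux (fun y => S y - S x) (fun y => S x - S y) _ (fun y => by ring),
      sInf_neg_aux (fun x' => sSup ((fun y => S y - S x') '' Icc x' (x' + 1))) _ _
        (fun x' => sInf_neg_aux (fun y => S y - S x') (fun y => S x' - S y) _ (fun y => by ring))]
    ring
end

section
/- For every x ∈ ℝ, lim_{λ→∞} −λ^{-1} log μ^λ(x) = max_{x'∈[0,1]} max_{y'∈[x',x'+1]} (S(y')−S(x')) − max_{y∈[x,x+1]} (S(y)−S(x)), which also equals min_{y∈[x,x+1]} (S(x)−S(y)) − min_{x'∈[0,1]} min_{y'∈[x',x'+1]} (S(x')−S(y')). -/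
open Set Filter Topology

open MeasureTheory unitInterval in
lemma unitInterval_openPos : (volume : Measure I).IsOpenPosMeasure := by
  constructor
  rintro U hU ⟨p, hp⟩
  obtain ⟨V, hV, rfl⟩ := isOpen_induced_iff.mp hU
  have hcl : (p : ℝ) ∈ closure (Ioo (0:ℝ) 1) := by
    rw [closure_Ioo (by norm_num)]; exact p.2
  have hne : (V ∩ Ioo (0:ℝ) 1).Nonempty := mem_closure_iff.mp hcl V hV hp
  have hpos : 0 < volume (V ∩ Ioo (0:ℝ) 1) := (hV.inter isOpen_Ioo).measure_pos _ hne
  rw [unitInterval.volume_apply]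
  refine (hpos.trans_le (measure_mono ?_)).ne'
  rintro y ⟨hy, hy2⟩
  exact ⟨⟨y, hy2.1.le, hy2.2.le⟩, hy, rfl⟩

open MeasureTheory in
/-- Laplace principle on a compact probability space. -/
lemma laplace_compact {X : Type*} [TopologicalSpace X] [CompactSpace X] [MeasurableSpace X]
    [OpensMeasurableSpace X] (ν : Measure X) [IsProbabilityMeasure ν] [ν.IsOpenPosMeasure]
    (G φ : X → ℝ) (hG : Continuous G) (hφ : Continuous φ)
    (hGpos : ∀ p, 0 < G p) (p0 : X) (hmax : ∀ p, φ p ≤ φ p0)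
    (hint : ∀ l : ℝ, Integrable (fun p => G p * Real.exp (l * φ p)) ν) :
    (∀ l : ℝ, 0 < l → 0 < ∫ p, G p * Real.exp (l * φ p) ∂ν) ∧
    Tendsto (fun l : ℝ => (1 / l) * Real.log (∫ p, G p * Real.exp (l * φ p) ∂ν)) atTop
      (nhds (φ p0)) := by
  haveI : Nonempty X := ⟨p0⟩
  obtain ⟨a, ha⟩ := (isCompact_univ (X := X)).exists_isMinOn univ_nonempty hG.continuousOn
  obtain ⟨b, hb⟩ := (isCompact_univ (X := X)).exists_isMaxOn univ_nonempty hG.continuousOn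
  have ha' : ∀ p, G a ≤ G p := fun p => ha.2 (mem_univ p)
  have hb' : ∀ p, G p ≤ G b := fun p => hb.2 (mem_univ p)
  have hup : ∀ l : ℝ, 0 < l →
      ∫ p, G p * Real.exp (l * φ p) ∂ν ≤ G b * Real.exp (l * φ p0) := by
    intro l hl
    calc ∫ p, G p * Real.exp (l * φ p) ∂ν ≤ ∫ p, G b * Real.exp (l * φ p0) ∂ν := by
          apply integral_mono (hint l) (integrable_const _)
          intro p
          have := hb' p
          have := hmax p
          have := (hGpos b).le
          show G p * Real.exp (l * φ p) ≤ G b * Real.exp (l * φ p0)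
          gcongr
      _ = _ := by simp
  have hlow : ∀ ε : ℝ, 0 < ε → ∃ c : ℝ, 0 < c ∧ ∀ l : ℝ, 0 < l →
      c * Real.exp (l * (φ p0 - ε)) ≤ ∫ p, G p * Real.exp (l * φ p) ∂ν := by
    intro ε hε
    let U : Set X := {p | φ p0 - ε < φ p}
    have hUo : IsOpen U := isOpen_lt continuous_const hφ
    have hUne : U.Nonempty := ⟨p0, by simp [U, hε]⟩
    have hUpos : 0 < ν.real U :=
      ENNReal.toReal_pos (hUo.measure_pos ν hUne).ne' (measure_ne_top _ _)
    refine ⟨ν.real U * G a, mul_pos hUpos (hGpos a), fun l hl => ?_⟩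
    calc ν.real U * G a * Real.exp (l * (φ p0 - ε))
        = ∫ p in U, G a * Real.exp (l * (φ p0 - ε)) ∂ν := by
          simp [mul_assoc]
      _ ≤ ∫ p in U, G p * Real.exp (l * φ p) ∂ν := by
          apply setIntegral_mono_on (integrable_const _) (hint l).integrableOn hUo.measurableSet
          intro p hp
          have hp' : φ p0 - ε < φ p := hp
          have := (hGpos p).le
          gcongr
          exact ha' p
      _ ≤ _ := by
          apply setIntegral_le_integral (hint l)
          exact Eventually.of_forall fun p => (mul_pos (hGpos p) (Real.exp_pos _)).le
  have hpos : ∀ l : ℝ, 0 < l → 0 < ∫ p, G p * Real.exp (l * φ p) ∂ν := by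
    intro l hl
    obtain ⟨c, hc, h⟩ := hlow 1 one_pos
    exact (mul_pos hc (Real.exp_pos _)).trans_le (h l hl)
  refine ⟨hpos, ?_⟩
  have hlim : ∀ A C : ℝ, Tendsto (fun l : ℝ => A + (1 / l) * C) atTop (nhds A) := by
    intro A C
    have h1 : Tendsto (fun l : ℝ => 1 / l) atTop (nhds 0) := by
      simpa using tendsto_inv_atTop_zero (𝕜 := ℝ)
    simpa using (h1.mul_const C).const_add A
  rw [tendsto_order]
  constructor
  · intro A hA
    obtain ⟨c, hc, h⟩ := hlow ((φ p0 - A) / 2) (by linarith)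
    have := (hlim (φ p0 - (φ p0 - A) / 2) (Real.log c)).eventually (lt_mem_nhds
      (show A < φ p0 - (φ p0 - A) / 2 by linarith))
    filter_upwards [this, eventually_gt_atTop 0] with l h1 hl
    refine h1.trans_le ?_
    have h2 := Real.log_le_log (mul_pos hc (Real.exp_pos _)) (h l hl)
    rw [Real.log_mul hc.ne' (Real.exp_pos _).ne', Real.log_exp] at h2
    have h3 := mul_le_mul_of_nonneg_left h2 (one_div_pos.mpr hl).le
    refine le_trans (le_of_eq ?_) h3
    field_simp
    ring
  · intro A hA
    have := (hlim (φ p0) (Real.log (G b))).eventually (gt_mem_nhds hA)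
    filter_upwards [this, eventually_gt_atTop 0] with l h1 hl
    refine lt_of_le_of_lt ?_ h1
    have h2 := Real.log_le_log (hpos l hl) (hup l hl)
    rw [Real.log_mul (hGpos b).ne' (Real.exp_pos _).ne', Real.log_exp] at h2
    have h3 := mul_le_mul_of_nonneg_left h2 (one_div_pos.mpr hl).le
    refine le_trans h3 (le_of_eq ?_)
    field_simp
    ring

open MeasureTheory unitInterval in
lemma inner_eq (h : ℝ → ℝ) (x : ℝ) :
    ∫ y in x..(x + 1), h y = ∫ t : I, h (x + t) := by
  have h1 : ∫ t in (0:ℝ)..1, h (x + t) = ∫ y in x..(x + 1), h y := by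
    rw [intervalIntegral.integral_comp_add_left]; simp
  rw [← h1, intervalIntegral.integral_of_le zero_le_one, ← integral_Icc_eq_integral_Ioc]
  exact (integral_subtype measurableSet_Icc (fun t => h (x + t))).symm

lemma sInf_neg_image (s : Set ℝ) (f : ℝ → ℝ) : sInf ((fun y => - f y) '' s) = - sSup (f '' s) := by
  rw [← Real.sInf_neg, ← Set.image_neg_eq_neg, Set.image_image]

/-- large deviations as `λ → ∞` of the stationary density `μ^λ` of the
mechanical variable of the PDMP:
`lim_{λ→∞} −λ⁻¹ log μ^λ(x) = max_{x'∈[0,1]} max_{y'∈[x',x'+1]} (S(y')−S(x'))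
  − max_{y∈[x,x+1]} (S(y)−S(x))`, which also equals
`min_{y∈[x,x+1]} (S(x)−S(y)) − min_{x'∈[0,1]} min_{y'∈[x',x'+1]} (S(x')−S(y'))`. -/
theorem stmt_2
    (F0 F1 r01 r10 : ℝ → ℝ)
    (K0 K1 : NNReal) (hF0 : LipschitzWith K0 F0) (hF1 : LipschitzWith K1 F1)
    (hF0per : ∀ x, F0 (x + 1) = F0 x) (hF1per : ∀ x, F1 (x + 1) = F1 x)
    (hF0ne : ∀ x, F0 x ≠ 0) (hF1ne : ∀ x, F1 x ≠ 0)
    (hr01 : Continuous r01) (hr10 : Continuous r10)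
    (hr01pos : ∀ x, 0 < r01 x) (hr10pos : ∀ x, 0 < r10 x)
    (hr01per : ∀ x, r01 (x + 1) = r01 x) (hr10per : ∀ x, r10 (x + 1) = r10 x)
    (S : ℝ → ℝ) (hS : ∀ x, S x = ∫ y in (0:ℝ)..x, (r01 y / F0 y + r10 y / F1 y))
    (g : ℝ → ℝ → ℝ)
    (hg : ∀ x y, g x y = r10 y / (F0 x * F1 y) + r01 y / (F1 x * F0 y))
    (hgpos : ∀ x y, 0 < g x y)
    (Z : ℝ → ℝ)
    (hZ : ∀ l : ℝ, 0 < l →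
      Z l = ∫ x in (0:ℝ)..1, ∫ y in x..(x + 1), g x y * Real.exp (l * (S y - S x)))
    (μ : ℝ → ℝ → ℝ)
    (hμ : ∀ l : ℝ, 0 < l → ∀ x,
      μ l x = (Z l)⁻¹ * ∫ y in x..(x + 1), g x y * Real.exp (l * (S y - S x)))
    (x : ℝ) :
    Tendsto (fun l => -(1 / l) * Real.log (μ l x)) atTop
      (nhds (sSup ((fun x' => sSup ((fun y => S y - S x') '' Icc x' (x' + 1))) '' Icc 0 1)
        - sSup ((fun y => S y - S x) '' Icc x (x + 1)))) ∧
    sSup ((fun x' => sSup ((fun y => S y - S x') '' Icc x' (x' + 1))) '' Icc 0 1)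
        - sSup ((fun y => S y - S x) '' Icc x (x + 1))
      = sInf ((fun y => S x - S y) '' Icc x (x + 1))
        - sInf ((fun x' => sInf ((fun y => S x' - S y) '' Icc x' (x' + 1))) '' Icc 0 1) := by
  have hF0c := hF0.continuous
  have hF1c := hF1.continuous
  have hfc : Continuous (fun y => r01 y / F0 y + r10 y / F1 y) :=
    (hr01.div hF0c hF0ne).add (hr10.div hF1c hF1ne)
  have hSc : Continuous S := by
    have : S = fun x => ∫ y in (0:ℝ)..x, (r01 y / F0 y + r10 y / F1 y) := funext hS
    rw [this]
    exact intervalIntegral.continuous_primitive (fun a b => hfc.intervalIntegrable a b) 0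
  have hgc : Continuous (fun p : ℝ × ℝ => g p.1 p.2) := by
    simp only [hg]
    refine Continuous.add (Continuous.div (by fun_prop) (by fun_prop) ?_)
      (Continuous.div (by fun_prop) (by fun_prop) ?_)
    · exact fun p => mul_ne_zero (hF0ne _) (hF1ne _)
    · exact fun p => mul_ne_zero (hF1ne _) (hF0ne _)
  haveI := unitInterval_openPos
  constructor
  · -- the inner integral
    let G1 : unitInterval → ℝ := fun t => g x (x + t)
    let φ1 : unitInterval → ℝ := fun t => S (x + t) - S x
    have hG1 : Continuous G1 := hgc.comp (by fun_prop : Continuous fun t : unitInterval => (x, x + (t:ℝ)))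
    have hφ1 : Continuous φ1 := by fun_prop
    obtain ⟨p1, -, hp1⟩ := (isCompact_univ (X := unitInterval)).exists_isMaxOn univ_nonempty
      hφ1.continuousOn
    have hp1' : ∀ p, φ1 p ≤ φ1 p1 := fun p => hp1 (mem_univ p)
    obtain ⟨pos1, lim1⟩ := laplace_compact (MeasureTheory.volume : MeasureTheory.Measure unitInterval)
      G1 φ1 hG1 hφ1 (fun _ => hgpos _ _) p1 hp1'
      (fun l => Continuous.integrable_of_hasCompactSupport (by fun_prop)
        (HasCompactSupport.of_compactSpace _))
    -- the double integral
    let G2 : unitInterval × unitInterval → ℝ := fun p => g p.1 (p.1 + p.2)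
    let φ2 : unitInterval × unitInterval → ℝ := fun p => S (p.1 + p.2) - S p.1
    have hG2 : Continuous G2 := hgc.comp (by fun_prop :
      Continuous fun p : unitInterval × unitInterval => ((p.1:ℝ), (p.1:ℝ) + (p.2:ℝ)))
    have hφ2 : Continuous φ2 := by fun_prop
    obtain ⟨p2, -, hp2⟩ := (isCompact_univ (X := unitInterval × unitInterval)).exists_isMaxOn
      univ_nonempty hφ2.continuousOn
    have hp2' : ∀ p, φ2 p ≤ φ2 p2 := fun p => hp2 (mem_univ p)
    have hint2 : ∀ l : ℝ, MeasureTheory.Integrable (fun p => G2 p * Real.exp (l * φ2 p))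
        ((MeasureTheory.volume : MeasureTheory.Measure unitInterval).prod MeasureTheory.volume) :=
      fun l => Continuous.integrable_of_hasCompactSupport (by fun_prop)
        (HasCompactSupport.of_compactSpace _)
    obtain ⟨pos2, lim2⟩ := laplace_compact
      ((MeasureTheory.volume : MeasureTheory.Measure unitInterval).prod MeasureTheory.volume)
      G2 φ2 hG2 hφ2 (fun _ => hgpos _ _) p2 hp2' hint2
    -- identification of the suprema
    have sup1 : sSup ((fun y => S y - S x) '' Icc x (x + 1)) = φ1 p1 := by
      refine IsGreatest.csSup_eq ⟨⟨x + p1, ⟨?_, ?_⟩, rfl⟩, ?_⟩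
      · linarith [p1.2.1]
      · linarith [p1.2.2]
      · rintro _ ⟨y, hy, rfl⟩
        have := hp1' ⟨y - x, by linarith [hy.1], by linarith [hy.2]⟩
        simpa [φ1] using this
    have bd : ∀ x' ∈ Icc (0:ℝ) 1, ∀ y ∈ Icc x' (x' + 1), S y - S x' ≤ φ2 p2 := by
      intro x' hx' y hy
      have := hp2' ⟨⟨x', hx'⟩, ⟨y - x', by linarith [hy.1], by linarith [hy.2]⟩⟩
      simpa [φ2] using this
    have bd' : ∀ x' ∈ Icc (0:ℝ) 1,
        sSup ((fun y => S y - S x') '' Icc x' (x' + 1)) ≤ φ2 p2 := by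
      intro x' hx'
      apply csSup_le ((nonempty_Icc.mpr (by linarith)).image _)
      rintro _ ⟨y, hy, rfl⟩
      exact bd x' hx' y hy
    have sup2 : sSup ((fun x' => sSup ((fun y => S y - S x') '' Icc x' (x' + 1))) '' Icc 0 1)
        = φ2 p2 := by
      refine IsGreatest.csSup_eq ⟨⟨p2.1, p2.1.2, ?_⟩, ?_⟩
      · apply le_antisymm (bd' _ p2.1.2)
        apply le_csSup
        · refine ⟨φ2 p2, ?_⟩
          rintro _ ⟨y, hy, rfl⟩
          exact bd _ p2.1.2 y hy
        · exact ⟨p2.1 + p2.2, ⟨by linarith [p2.2.2.1], by linarith [p2.2.2.2]⟩, rfl⟩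
      · rintro _ ⟨x', hx', rfl⟩
        exact bd' x' hx'
    rw [sup1, sup2]
    refine (lim2.sub lim1).congr' ?_
    filter_upwards [eventually_gt_atTop 0] with l hl
    have e1 : ∫ y in x..(x + 1), g x y * Real.exp (l * (S y - S x))
        = ∫ p, G1 p * Real.exp (l * φ1 p) := inner_eq _ x
    have e2 : Z l = ∫ p, G2 p * Real.exp (l * φ2 p)
        ∂((MeasureTheory.volume : MeasureTheory.Measure unitInterval).prod
          MeasureTheory.volume) := by
      rw [hZ l hl, MeasureTheory.integral_prod _ (hint2 l)]
      have h0 := inner_eq (fun x => ∫ y in x..(x + 1), g x y * Real.exp (l * (S y - S x))) 0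
      simp only [zero_add] at h0
      rw [h0]
      congr 1
      funext t
      exact inner_eq _ _
    rw [hμ l hl, e1, e2, Real.log_mul (inv_ne_zero (pos2 l hl).ne') (pos1 l hl).ne', Real.log_inv]
    ring
  · have h1 : ∀ z, sInf ((fun y => S z - S y) '' Icc z (z + 1))
        = - sSup ((fun y => S y - S z) '' Icc z (z + 1)) := by
      intro z
      rw [← sInf_neg_image]
      simp only [neg_sub]
    simp only [h1]
    rw [sInf_neg_image]
    ring
end

section
/- If S(1) ≠ 0 and S is not monotone, then the set U = {x ∈ ℝ : Φ(x) ≠ min{0, −S(1)}} is open and nonempty, and the complement ℝ \ U has nonempty interior. -/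
open Set Filter Topology

lemma aux_interval (S F : ℝ → ℝ) (hF : Continuous F) (hd : ∀ x, HasDerivAt S (F x) x) (L : ℝ)
    (hL : 0 < L) (hp : ∀ x, S (x + 1) = S x + L) :
    ∃ z δ : ℝ, 0 < δ ∧ ∀ w ∈ Ioo z (z + δ), ∀ y ∈ Icc (w - 1) w, S y ≤ S w := by
  have hSc : Continuous S := continuous_iff_continuousAt.2 fun x => (hd x).continuousAt
  obtain ⟨z, hz, hmax⟩ := (isCompact_Icc (a := (-1 : ℝ)) (b := 0)).exists_isMaxOn
    ⟨0, by norm_num⟩ (f := fun x => S x - L / 2 * x) (by fun_prop)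
  have hmax' : ∀ y ∈ Icc (-1 : ℝ) 0, S y - L / 2 * y ≤ S z - L / 2 * z := fun y hy => hmax hy
  have key : ∀ y ∈ Icc (z - 1) z, S y - L / 2 * y ≤ S z - L / 2 * z := by
    intro y hy
    by_cases h : -1 ≤ y
    · exact hmax' y ⟨h, hy.2.trans hz.2⟩
    · push Not at h
      have h1 := hmax' (y + 1) ⟨by linarith [hy.1, hz.1], by linarith⟩
      rw [hp] at h1
      linarith
  have hFz : 0 < F z := by
    by_contra hcon
    have hlt : F z < L / 2 := by linarith
    obtain ⟨d, hd0, hball⟩ := Metric.eventually_nhds_iff.1 (hF.continuousAt.eventually_lt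
      (continuousAt_const (y := L / 2)) hlt)
    set e := min (d / 2) 1 with he
    have he0 : 0 < e := by positivity
    have he1 : e ≤ 1 := min_le_right _ _
    have hed : e ≤ d / 2 := min_le_left _ _
    obtain ⟨c, hc, hce⟩ := exists_hasDerivAt_eq_slope S F (show z - e < z by linarith)
      hSc.continuousOn (fun x _ => hd x)
    have h1 := hball (y := c) (by
      rw [Real.dist_eq, abs_lt]; constructor <;> linarith [hc.1, hc.2])
    have h2 := key (z - e) ⟨by linarith, by linarith⟩
    rw [hce, div_lt_iff₀ (by linarith)] at h1
    linarith
  obtain ⟨d, hd0, hball⟩ := Metric.eventually_nhds_iff.1 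
    ((continuousAt_const (y := (0:ℝ))).eventually_lt hF.continuousAt hFz)
  have mono : ∀ a b, z ≤ a → a ≤ b → b < z + d → S a ≤ S b := by
    intro a b ha hab hb
    rcases hab.eq_or_lt with rfl | hab
    · exact le_rfl
    obtain ⟨c, hc, hce⟩ := exists_hasDerivAt_eq_slope S F hab
      hSc.continuousOn (fun x _ => hd x)
    have h1 := hball (y := c) (by
      rw [Real.dist_eq, abs_lt]; constructor <;> linarith [hc.1, hc.2])
    rw [hce, lt_div_iff₀ (by linarith)] at h1
    linarith
  refine ⟨z, d, hd0, fun w hw y hy => ?_⟩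
  by_cases h : z ≤ y
  · exact mono y w h hy.2 hw.2
  · push Not at h
    have h1 := key y ⟨by linarith [hy.1, hw.1], h.le⟩
    have h2 := mono z w le_rfl hw.1.le hw.2
    have h3 : 0 < L / 2 * (z - y) := mul_pos (by linarith) (by linarith)
    linarith

/-- If `S(1) ≠ 0` and `S` is not monotone, then
`U = {x : Φ(x) ≠ min{0, −S(1)}}` is open and nonempty, and
`ℝ \ U` has nonempty interior. -/
theorem stmt_6
    (F : ℝ → ℝ) (hF : Continuous F) (hFper : ∀ x, F (x + 1) = F x)
    (S : ℝ → ℝ) (hS : ∀ x, S x = ∫ t in (0:ℝ)..x, F t)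
    (Φ : ℝ → ℝ) (hΦ : ∀ x, Φ x = sInf ((fun y => S x - S y) '' Icc x (x + 1)))
    (hS1 : S 1 ≠ 0) (hmon : ¬ Monotone S) (hant : ¬ Antitone S) :
    IsOpen {x : ℝ | Φ x ≠ min 0 (-S 1)} ∧
    {x : ℝ | Φ x ≠ min 0 (-S 1)}.Nonempty ∧
    (interior {x : ℝ | Φ x ≠ min 0 (-S 1)}ᶜ).Nonempty := by
  have hd : ∀ x, HasDerivAt S (F x) x := by
    intro x
    rw [funext hS]
    exact intervalIntegral.integral_hasDerivAt_right (hF.intervalIntegrable _ _)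
      (hF.stronglyMeasurableAtFilter _ _) hF.continuousAt
  have hSc : Continuous S := continuous_iff_continuousAt.2 fun x => (hd x).continuousAt
  have hp : ∀ x, S (x + 1) = S x + S 1 := by
    intro x
    have hper : Function.Periodic F 1 := hFper
    have h1 := hper.intervalIntegral_add_eq x 0
    have h2 := intervalIntegral.integral_add_adjacent_intervals
      (hF.intervalIntegrable (μ := MeasureTheory.volume) 0 x)
      (hF.intervalIntegrable (μ := MeasureTheory.volume) x (x + 1))
    rw [hS, hS x, hS 1, ← h2, h1, zero_add]
  have hpn : ∀ (n : ℕ) x, S (x + n) = S x + n * S 1 := by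
    intro n
    induction n with
    | zero => simp
    | succ k ih =>
      intro x
      push_cast
      rw [← add_assoc, hp, ih]; ring
  have hU : ∀ x, Φ x ≠ min 0 (-S 1) ↔ ∃ y ∈ Ioo x (x + 1), S x - S y < min 0 (-S 1) := by
    intro x
    have hbdd : BddBelow ((fun y => S x - S y) '' Icc x (x + 1)) :=
      (isCompact_Icc.image (by fun_prop)).bddBelow
    have hle : Φ x ≤ min 0 (-S 1) := by
      rw [hΦ]
      refine le_min ?_ ?_
      · exact csInf_le hbdd ⟨x, ⟨le_rfl, by linarith⟩, by simp⟩
      · exact csInf_le hbdd ⟨x + 1, ⟨by linarith, le_rfl⟩, by simp only [hp]; ring⟩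
    constructor
    · intro hne
      have hlt := lt_of_le_of_ne hle hne
      rw [hΦ] at hlt
      obtain ⟨_, ⟨y, hy, rfl⟩, hylt⟩ := exists_lt_of_csInf_lt
        ((nonempty_Icc.2 (by linarith)).image _) hlt
      simp only at hylt
      refine ⟨y, ⟨lt_of_le_of_ne hy.1 ?_, lt_of_le_of_ne hy.2 ?_⟩, hylt⟩
      · rintro rfl
        linarith [min_le_left 0 (-S 1)]
      · rintro rfl
        rw [hp] at hylt
        linarith [min_le_right 0 (-S 1)]
    · rintro ⟨y, hy, hlt⟩
      refine ne_of_lt (lt_of_le_of_lt ?_ hlt)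
      rw [hΦ]
      exact csInf_le hbdd ⟨y, ⟨hy.1.le, hy.2.le⟩, rfl⟩
  have hset : {x : ℝ | Φ x ≠ min 0 (-S 1)} =
      {x : ℝ | ∃ y ∈ Ioo x (x + 1), S x - S y < min 0 (-S 1)} := by
    ext x; exact hU x
  rw [hset]
  refine ⟨?_, ?_, ?_⟩
  · have : {x : ℝ | ∃ y ∈ Ioo x (x + 1), S x - S y < min 0 (-S 1)} =
        ⋃ y, ({x | x < y} ∩ {x | y < x + 1} ∩ {x | S x - S y < min 0 (-S 1)}) := by
      ext x; simp [and_assoc]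
    rw [this]
    refine isOpen_iUnion fun y => IsOpen.inter (IsOpen.inter ?_ ?_) ?_
    · exact isOpen_lt continuous_id continuous_const
    · exact isOpen_lt continuous_const (by fun_prop)
    · exact isOpen_lt (by fun_prop) continuous_const
  · rcases lt_or_gt_of_ne hS1 with hneg | hpos
    · rw [min_eq_left (by linarith)]
      simp only [Antitone, not_forall, not_le] at hant
      obtain ⟨a, b, hab, hlt⟩ := hant
      have hn1 := Nat.floor_le (sub_nonneg.2 hab)
      have hn2 := Nat.lt_floor_add_one (b - a)
      set n := ⌊b - a⌋₊
      have h1 := hpn n a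
      have h2 : (n : ℝ) * S 1 ≤ 0 := mul_nonpos_of_nonneg_of_nonpos (by positivity) hneg.le
      refine ⟨a + n, b, ⟨lt_of_le_of_ne (by linarith) ?_, by linarith⟩, by linarith⟩
      intro h
      rw [h] at h1
      linarith
    · rw [min_eq_right (by linarith)]
      simp only [Monotone, not_forall, not_le] at hmon
      obtain ⟨a, b, hab, hlt⟩ := hmon
      have hn1 := Nat.floor_le (sub_nonneg.2 hab)
      have hn2 := Nat.lt_floor_add_one (b - a)
      set n := ⌊b - a⌋₊
      have h1 := hpn n a
      have h2 : 0 ≤ (n : ℝ) * S 1 := by positivity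
      have h3 := hp (b - 1)
      rw [sub_add_cancel] at h3
      refine ⟨b - 1, a + n, ⟨by linarith, lt_of_le_of_ne (by linarith) ?_⟩, by linarith⟩
      intro h
      rw [h, sub_add_cancel] at h1
      linarith
  · rcases lt_or_gt_of_ne hS1 with hneg | hpos
    · rw [min_eq_left (by linarith)]
      obtain ⟨z, δ, hδ, H⟩ := aux_interval (fun x => S (-x)) (fun x => -F (-x)) (by fun_prop)
        (fun x => by
          have := (hd (-x)).comp x (hasDerivAt_neg x)
          simpa [Function.comp_def] using this) (-S 1) (by linarith) (fun x => by
          have := hp (-(x + 1))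
          rw [show -(x + 1) + 1 = -x by ring] at this
          linarith)
      refine ⟨-(z + δ / 2), mem_interior.2 ⟨Ioo (-(z + δ)) (-z), ?_, isOpen_Ioo,
        by constructor <;> linarith⟩⟩
      rintro x hx ⟨y, hy, hlt⟩
      have := H (-x) ⟨by linarith [hx.2], by linarith [hx.1]⟩ (-y)
        ⟨by linarith [hy.2], by linarith [hy.1]⟩
      simp only [neg_neg] at this
      linarith
    · rw [min_eq_right (by linarith)]
      obtain ⟨z, δ, hδ, H⟩ := aux_interval S F hF hd (S 1) hpos hp
      refine ⟨z - 1 + δ / 2, mem_interior.2 ⟨Ioo (z - 1) (z - 1 + δ), ?_, isOpen_Ioo,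
        by constructor <;> linarith⟩⟩
      rintro x hx ⟨y, hy, hlt⟩
      have := H (x + 1) ⟨by linarith [hx.1], by linarith [hx.2]⟩ y
        ⟨by linarith [hy.1], hy.2.le⟩
      rw [hp] at this
      linarith
end

section
/- Assume S(1) ≠ 0 and S is not monotone, and set U = {x ∈ ℝ : Φ(x) ≠ min{0, −S(1)}}. Then on each connected component of U the function Φ equals S up to an additive constant: if (a,b) is a connected component of U, then Φ(x) = S(x) − S(a) + Φ(a) for all x ∈ (a,b). -/
open Set Filter Topology

/-- Assume `S(1) ≠ 0` and `S` is not monotone, and let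
`U = {x : Φ(x) ≠ min{0, −S(1)}}`. On each connected component `(a,b)` of the
open set `U` (characterized by `(a,b) ⊆ U` with endpoints `a, b ∉ U`),
`Φ` equals `S` up to an additive constant:
`Φ(x) = S(x) − S(a) + Φ(a)` for all `x ∈ (a,b)`. -/
theorem stmt_7
    (F : ℝ → ℝ) (hF : Continuous F) (hFper : ∀ x, F (x + 1) = F x)
    (S : ℝ → ℝ) (hS : ∀ x, S x = ∫ t in (0:ℝ)..x, F t)
    (Φ : ℝ → ℝ) (hΦ : ∀ x, Φ x = sInf ((fun y => S x - S y) '' Icc x (x + 1)))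
    (hS1 : S 1 ≠ 0) (hmon : ¬ Monotone S) (hant : ¬ Antitone S) :
    ∀ a b : ℝ, a < b →
      Ioo a b ⊆ {x : ℝ | Φ x ≠ min 0 (-S 1)} →
      a ∉ {x : ℝ | Φ x ≠ min 0 (-S 1)} →
      b ∉ {x : ℝ | Φ x ≠ min 0 (-S 1)} →
      ∀ x ∈ Ioo a b, Φ x = S x - S a + Φ a := by
  have hint : ∀ u v : ℝ, IntervalIntegrable F MeasureTheory.volume u v :=
    fun u v => hF.intervalIntegrable u v
  have hc : Continuous S := by
    have : S = fun x => ∫ t in (0:ℝ)..x, F t := funext hS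
    rw [this]
    exact intervalIntegral.continuous_primitive hint 0
  have hp : ∀ x, S (x + 1) = S x + S 1 := by
    intro x
    have h1 : (∫ t in x..(x + 1), F t) = ∫ t in (0:ℝ)..(0 + 1), F t :=
      Function.Periodic.intervalIntegral_add_eq (f := F) (T := 1) hFper x 0
    have h2 := intervalIntegral.integral_add_adjacent_intervals (hint 0 x) (hint x (x + 1))
    rw [zero_add] at h1
    rw [hS (x + 1), hS x, hS 1, ← h2, h1]
  have hchar : ∀ x y, y ∈ Icc x (x + 1) → (∀ z ∈ Icc x (x + 1), S z ≤ S y) →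
      Φ x = S x - S y := by
    intro x y hy hz
    rw [hΦ]
    apply IsLeast.csInf_eq
    refine ⟨⟨y, hy, rfl⟩, ?_⟩
    rintro _ ⟨z, hz', rfl⟩
    have := hz z hz'
    simp only
    linarith
  have hmax : ∀ u v, u ≤ v → ∃ y ∈ Icc u v, ∀ z ∈ Icc u v, S z ≤ S y := by
    intro u v huv
    obtain ⟨y, hy, h⟩ := isCompact_Icc.exists_isMaxOn (nonempty_Icc.2 huv) hc.continuousOn
    exact ⟨y, hy, fun z hz => h hz⟩
  have hle : ∀ x, ∀ z ∈ Icc x (x + 1), S z ≤ S x - Φ x := by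
    intro x z hz
    obtain ⟨y, hy, h⟩ := hmax x (x + 1) (by linarith)
    have := hchar x y hy h
    have := h z hz
    linarith
  have hΦp : ∀ x, Φ (x + 1) = Φ x := by
    intro x
    obtain ⟨y, hy, h⟩ := hmax x (x + 1) (by linarith)
    rw [hchar x y hy h, hchar (x + 1) (y + 1) ⟨by linarith [hy.1], by linarith [hy.2]⟩, hp, hp]
    · ring
    · intro z hz
      have h1 := h (z - 1) ⟨by linarith [hz.1], by linarith [hz.2]⟩
      have h2 := hp (z - 1)
      have h3 := hp y
      rw [sub_add_cancel] at h2
      linarith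
  intro a b hab hU ha hb x hx
  simp only [mem_ofPred_eq, not_not] at ha hb
  have hU' : ∀ y, a < y → y < b → Φ y ≠ min 0 (-S 1) := fun y h1 h2 => hU ⟨h1, h2⟩
  have hba : b ≤ a + 1 := by
    by_contra h
    push Not at h
    exact hU' (a + 1) (by linarith) h (by rw [hΦp, ha])
  obtain ⟨hx1, hx2⟩ := hx
  rcases lt_or_gt_of_ne hS1 with hneg | hpos
  · have hm : min 0 (-S 1) = 0 := min_eq_left (by linarith)
    rw [hm] at ha hb hU'
    have key : ∀ w, a < w → w < b → ∀ z ∈ Icc w (w + 1), S z ≤ S b := by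
      intro w h1 h2
      obtain ⟨y, hy, h⟩ := hmax w b h2.le
      have hb1 : ∀ z ∈ Icc b (b + 1), S z ≤ S b := by
        intro z hz
        have := hle b z hz
        linarith
      have hyb : y = b := by
        by_contra hne
        have hlt : y < b := lt_of_le_of_ne hy.2 hne
        refine hU' y (by linarith [hy.1]) hlt ?_
        rw [hchar y y ⟨le_rfl, by linarith⟩, sub_self]
        intro z hz
        rcases le_total z b with h3 | h3
        · exact h z ⟨by linarith [hy.1, hz.1], h3⟩
        · exact (hb1 z ⟨h3, by linarith [hz.2]⟩).trans (h b ⟨h2.le, le_rfl⟩)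
      subst hyb
      intro z hz
      rcases le_total z y with h3 | h3
      · exact h z ⟨hz.1, h3⟩
      · exact hb1 z ⟨h3, by linarith [hz.2]⟩
    have hSab : S a ≤ S b := by
      have ht : Tendsto S (𝓝[>] a) (𝓝 (S a)) := hc.continuousAt.tendsto.mono_left nhdsWithin_le_nhds
      refine le_of_tendsto ht ?_
      filter_upwards [Ioo_mem_nhdsGT hab] with w hw
      exact key w hw.1 hw.2 w ⟨le_rfl, by linarith⟩
    have hSba := hle a b ⟨hab.le, hba⟩
    rw [hchar x b ⟨hx2.le, by linarith⟩ (key x hx1 hx2), ha]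
    linarith
  · have hm : min 0 (-S 1) = -S 1 := min_eq_right (by linarith)
    rw [hm] at ha hb hU'
    have ha1 : ∀ z ∈ Icc a (a + 1), S z ≤ S (a + 1) := by
      intro z hz
      have := hle a z hz
      rw [hp]
      linarith
    obtain ⟨y, hy, h⟩ := hmax (a + 1) (x + 1) (by linarith)
    have hya : y = a + 1 := by
      by_contra hne
      have hlt : a + 1 < y := lt_of_le_of_ne hy.1 (Ne.symm hne)
      refine hU' (y - 1) (by linarith) (by linarith [hy.2]) ?_
      have h2 := hp (y - 1)
      rw [sub_add_cancel] at h2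
      rw [hchar (y - 1) y ⟨by linarith, by linarith⟩]
      · linarith
      · intro z hz
        rcases le_total z (a + 1) with h3 | h3
        · exact (ha1 z ⟨by linarith [hz.1], h3⟩).trans (h (a + 1) ⟨le_rfl, by linarith⟩)
        · exact h z ⟨h3, by linarith [hz.2, hy.2]⟩
    subst hya
    rw [hchar x (a + 1) ⟨by linarith, by linarith⟩, ha, hp]
    · ring
    · intro z hz
      rcases le_total z (a + 1) with h3 | h3
      · exact ha1 z ⟨by linarith [hz.1], h3⟩
      · exact h z ⟨h3, hz.2⟩
end

section
/- Let H : 𝕋 × ℝ → ℝ be a Hamiltonian such that (A) p ↦ H(x,p) is convex for every x ∈ 𝕋, and (B) H(x,0) = H(x,F(x)) = 0 for every x ∈ 𝕋. Then the 1-periodic function Φ is a viscosity solution of the stationary Hamilton–Jacobi equation H(x, ∇Φ(x)) = 0 on 𝕋; that is, for every x, H(x,p) ≥ 0 for all p ∈ D⁻Φ(x) and H(x,p) ≤ 0 for all p ∈ D⁺Φ(x). -/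
open Set Filter Topology

/-- The superdifferential `D⁺φ(x)`. -/
def Dplus (φ : ℝ → ℝ) (x : ℝ) : Set ℝ :=
  {p | Filter.limsup (fun y => (φ y - φ x - p * (y - x)) / |y - x|) (nhdsWithin x {x}ᶜ) ≤ 0}

/-- The subdifferential `D⁻φ(x)`. -/
def Dminus (φ : ℝ → ℝ) (x : ℝ) : Set ℝ :=
  {p | 0 ≤ Filter.liminf (fun y => (φ y - φ x - p * (y - x)) / |y - x|) (nhdsWithin x {x}ᶜ)}


theorem S_est (F : ℝ → ℝ) (hF : Continuous F)
    (S : ℝ → ℝ) (hS : ∀ x, S x = ∫ t in (0:ℝ)..x, F t) (x ε : ℝ) (hε : 0 < ε) :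
    ∃ δ > 0, ∀ a b, x - δ < a → a ≤ b → b < x + δ →
      (F x - ε) * (b - a) ≤ S b - S a ∧ S b - S a ≤ (F x + ε) * (b - a) := by
  obtain ⟨δ, hδ, h⟩ := Metric.continuousAt_iff.1 (hF.continuousAt (x := x)) ε hε
  refine ⟨δ, hδ, fun a b ha hab hb => ?_⟩
  have hsub : S b - S a = ∫ t in a..b, F t := by
    rw [hS, hS]
    exact intervalIntegral.integral_interval_sub_left (hF.intervalIntegrable _ _)
      (hF.intervalIntegrable _ _)
  have hb' : ∀ t ∈ Icc a b, F x - ε ≤ F t ∧ F t ≤ F x + ε := by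
    intro t ht
    have h1 : dist t x < δ := by
      rw [Real.dist_eq, abs_lt]; constructor <;> linarith [ht.1, ht.2]
    have h2 := h h1
    rw [Real.dist_eq, abs_lt] at h2
    constructor <;> linarith [h2.1, h2.2]
  have hc : ∀ c : ℝ, ∫ _t in a..b, c = c * (b - a) := by
    intro c; rw [intervalIntegral.integral_const, smul_eq_mul]; ring
  rw [hsub, ← hc, ← hc]
  constructor
  · exact intervalIntegral.integral_mono_on hab (by simp) (hF.intervalIntegrable _ _)
      fun t ht => (hb' t ht).1
  · exact intervalIntegral.integral_mono_on hab (hF.intervalIntegrable _ _) (by simp)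
      fun t ht => (hb' t ht).2

theorem Phi_est (F S M Φ : ℝ → ℝ) (c x ε δ : ℝ) (hε : 0 < ε)
    (hSc : ∀ x, S (x + 1) = S x + c)
    (hM : ∀ x, ∀ y ∈ Icc x (x + 1), S y ≤ M x)
    (hM' : ∀ x, ∃ y ∈ Icc x (x + 1), S y = M x)
    (hΦ : ∀ x, Φ x = S x - M x)
    (h : ∀ a b, x - δ < a → a ≤ b → b < x + δ →
      (F x - ε) * (b - a) ≤ S b - S a ∧ S b - S a ≤ (F x + ε) * (b - a))
    (a b : ℝ) (ha : x - δ < a) (hab : a ≤ b) (hb : b < x + δ) :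
    (min 0 (F x) - 2 * ε) * (b - a) ≤ Φ b - Φ a ∧
      Φ b - Φ a ≤ (max 0 (F x) + 2 * ε) * (b - a) := by
  rw [hΦ, hΦ]
  have hd : 0 ≤ b - a := by linarith
  obtain ⟨h1, h2⟩ := h a b ha hab hb
  have hεd : 0 ≤ ε * (b - a) := by positivity
  have u : M b - M a ≤ (max 0 (F x) + ε) * (b - a) := by
    obtain ⟨z, hz, hzM⟩ := hM' b
    rcases le_total z (a + 1) with hza | hza
    · have := hM a z ⟨by linarith [hz.1], hza⟩
      have : 0 ≤ (max 0 (F x) + ε) * (b - a) := by positivity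
      linarith
    · have e1 := (h a (z - 1) ha (by linarith) (by linarith [hz.2])).2
      have e2 := hM a (a + 1) ⟨by linarith, le_rfl⟩
      have e3 := hSc (z - 1)
      rw [sub_add_cancel] at e3
      have e4 := hSc a
      have e5 : (F x + ε) * (z - 1 - a) ≤ (max 0 (F x) + ε) * (z - 1 - a) :=
        mul_le_mul_of_nonneg_right (by linarith [le_max_right 0 (F x)]) (by linarith)
      have e6 : (max 0 (F x) + ε) * (z - 1 - a) ≤ (max 0 (F x) + ε) * (b - a) :=
        mul_le_mul_of_nonneg_left (by linarith [hz.2]) (by positivity)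
      linarith
  have l : M a - M b ≤ (max 0 (-F x) + ε) * (b - a) := by
    obtain ⟨z, hz, hzM⟩ := hM' a
    rcases le_total b z with hza | hza
    · have := hM b z ⟨hza, by linarith [hz.2]⟩
      have : 0 ≤ (max 0 (-F x) + ε) * (b - a) := by positivity
      linarith
    · have e1 := (h z b (by linarith [hz.1]) hza hb).1
      have e2 := hM b b ⟨by linarith, by linarith⟩
      have e5 : (-F x + ε) * (b - z) ≤ (max 0 (-F x) + ε) * (b - z) :=
        mul_le_mul_of_nonneg_right (by linarith [le_max_right 0 (-F x)]) (by linarith)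
      have e6 : (max 0 (-F x) + ε) * (b - z) ≤ (max 0 (-F x) + ε) * (b - a) :=
        mul_le_mul_of_nonneg_left (by linarith [hz.1]) (by positivity)
      linarith
  rcases le_total 0 (F x) with hf | hf
  · rw [max_eq_right hf] at *
    rw [max_eq_left (by linarith)] at l
    rw [min_eq_left hf]
    constructor <;> linarith
  · rw [max_eq_left hf] at *
    rw [max_eq_right (by linarith)] at l
    rw [min_eq_right hf]
    constructor <;> linarith

set_option maxHeartbeats 4000000

theorem stmt_10
    (F : ℝ → ℝ) (hF : Continuous F) (hFper : ∀ x, F (x + 1) = F x)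
    (S : ℝ → ℝ) (hS : ∀ x, S x = ∫ t in (0:ℝ)..x, F t)
    (Φ : ℝ → ℝ) (hΦ : ∀ x, Φ x = sInf ((fun y => S x - S y) '' Icc x (x + 1)))
    (H : ℝ → ℝ → ℝ) (hHper : ∀ x p, H (x + 1) p = H x p)
    (hHconv : ∀ x, ConvexOn ℝ Set.univ (H x))
    (hH0 : ∀ x, H x 0 = 0) (hHF : ∀ x, H x (F x) = 0) :
    Continuous Φ ∧ (∀ x, Φ (x + 1) = Φ x) ∧
    (∀ x : ℝ, ∀ p ∈ Dminus Φ x, 0 ≤ H x p) ∧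
    (∀ x : ℝ, ∀ p ∈ Dplus Φ x, H x p ≤ 0) := by
  have hScont : Continuous S := by
    have : S = fun x => ∫ t in (0:ℝ)..x, F t := funext hS
    rw [this]
    exact intervalIntegral.continuous_primitive (fun a b => hF.intervalIntegrable a b) 0
  obtain ⟨c, hSc⟩ : ∃ c, ∀ x, S (x + 1) = S x + c := by
    refine ⟨∫ t in (0:ℝ)..1, F t, fun x => ?_⟩
    have hp : Function.Periodic F 1 := hFper
    have h1 := hp.intervalIntegral_add_eq x 0
    rw [zero_add] at h1
    rw [hS, hS, ← h1]
    exact (intervalIntegral.integral_add_adjacent_intervals (hF.intervalIntegrable _ _)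
      (hF.intervalIntegrable _ _)).symm
  obtain ⟨M, hM⟩ : ∃ M : ℝ → ℝ, ∀ x, Φ x = S x - M x := ⟨fun x => S x - Φ x, fun x => by ring⟩
  have key : ∀ x, (∀ y ∈ Icc x (x + 1), S y ≤ M x) ∧ ∃ y ∈ Icc x (x + 1), S y = M x := by
    intro x
    obtain ⟨z, hz, hzmax⟩ := (isCompact_Icc (a := x) (b := x + 1)).exists_isMaxOn
      ⟨x, by simp⟩ hScont.continuousOn
    have hl : IsLeast ((fun y => S x - S y) '' Icc x (x + 1)) (S x - S z) := by
      refine ⟨⟨z, hz, rfl⟩, ?_⟩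
      rintro _ ⟨y, hy, rfl⟩
      have : S y ≤ S z := hzmax hy
      simp only
      linarith
    have h1 : Φ x = S x - S z := by rw [hΦ, hl.csInf_eq]
    have h2 : S z = M x := by linarith [hM x]
    refine ⟨fun y hy => ?_, z, hz, h2⟩
    have : S y ≤ S z := hzmax hy
    linarith
  have hMle := fun x => (key x).1
  have hMex := fun x => (key x).2
  have est : ∀ x ε : ℝ, 0 < ε → ∃ δ > 0, ∀ a b, x - δ < a → a ≤ b → b < x + δ →
      ((F x - ε) * (b - a) ≤ S b - S a ∧ S b - S a ≤ (F x + ε) * (b - a)) ∧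
      ((min 0 (F x) - 2 * ε) * (b - a) ≤ Φ b - Φ a ∧
      Φ b - Φ a ≤ (max 0 (F x) + 2 * ε) * (b - a)) := by
    intro x ε hε
    obtain ⟨δ, hδ, h⟩ := S_est F hF S hS x ε hε
    exact ⟨δ, hδ, fun a b ha hab hb => ⟨h a b ha hab hb,
      Phi_est F S M Φ c x ε δ hε hSc hMle hMex hM h a b ha hab hb⟩⟩
  have lip : ∀ x, ∃ δ > 0, ∀ y, |y - x| < δ → |Φ y - Φ x| ≤ (|F x| + 2) * |y - x| := by
    intro x
    obtain ⟨δ, hδ, h⟩ := est x 1 one_pos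
    refine ⟨δ, hδ, fun y hy => ?_⟩
    rw [abs_lt] at hy
    have m1 : max 0 (F x) ≤ |F x| := max_le (abs_nonneg _) (le_abs_self _)
    have m2 : -|F x| ≤ min 0 (F x) := le_min (by linarith [abs_nonneg (F x)]) (neg_abs_le _)
    rcases le_total x y with hxy | hxy
    · obtain ⟨h1, h2⟩ := (h x y (by linarith) hxy (by linarith)).2
      rw [abs_of_nonneg (sub_nonneg.2 hxy), abs_le]
      have e1 := mul_le_mul_of_nonneg_right m1 (sub_nonneg.2 hxy)
      have e2 := mul_le_mul_of_nonneg_right m2 (sub_nonneg.2 hxy)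
      constructor <;> linarith
    · obtain ⟨h1, h2⟩ := (h y x (by linarith) hxy (by linarith)).2
      rw [abs_of_nonpos (sub_nonpos.2 hxy), abs_le]
      have e1 := mul_le_mul_of_nonneg_right m1 (sub_nonneg.2 hxy)
      have e2 := mul_le_mul_of_nonneg_right m2 (sub_nonneg.2 hxy)
      constructor <;> linarith
  have bdd : ∀ x p : ℝ, ∀ᶠ y in 𝓝[≠] x,
      |(Φ y - Φ x - p * (y - x)) / (|y - x|)| ≤ |F x| + 2 + |p| := by
    intro x p
    obtain ⟨δ, hδ, h⟩ := lip x
    have : ∀ᶠ y in 𝓝 x, |y - x| < δ := by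
      filter_upwards [Metric.ball_mem_nhds x hδ] with y hy
      simpa [Real.dist_eq] using hy
    filter_upwards [this.filter_mono nhdsWithin_le_nhds, self_mem_nhdsWithin] with y hy hne
    have hpos : 0 < |y - x| := abs_pos.2 (sub_ne_zero.2 hne)
    rw [abs_div, abs_abs, div_le_iff₀ hpos]
    have := abs_sub (Φ y - Φ x) (p * (y - x))
    rw [abs_mul] at this
    linarith [h y hy]
  have unfold_ev : ∀ x : ℝ, ∀ P : ℝ → Prop, (∀ᶠ y in 𝓝[≠] x, P y) →
      ∃ δ > 0, ∀ y, y ≠ x → |y - x| < δ → P y := by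
    intro x P hP
    rw [eventually_nhdsWithin_iff, Metric.eventually_nhds_iff] at hP
    obtain ⟨δ, hδ, h⟩ := hP
    exact ⟨δ, hδ, fun y hy hd => h (by rwa [Real.dist_eq]) hy⟩
  have hplus : ∀ x, ∀ p ∈ Dplus Φ x, ∀ ε > 0, ∃ δ > 0, ∀ y, y ≠ x → |y - x| < δ →
      Φ y - Φ x - p * (y - x) ≤ ε * |y - x| := by
    intro x p hp ε hε
    have hb : IsBoundedUnder (· ≤ ·) (𝓝[≠] x)
        (fun y => (Φ y - Φ x - p * (y - x)) / |y - x|) :=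
      ⟨|F x| + 2 + |p|, by
        rw [eventually_map]
        filter_upwards [bdd x p] with y hy using (abs_le.1 hy).2⟩
    obtain ⟨δ, hδ, h⟩ := unfold_ev x _
      (eventually_lt_of_limsup_lt (lt_of_le_of_lt hp hε) hb)
    refine ⟨δ, hδ, fun y hy hd => ?_⟩
    have := h y hy hd
    rw [div_lt_iff₀ (abs_pos.2 (sub_ne_zero.2 hy))] at this
    exact this.le
  have hminus : ∀ x, ∀ p ∈ Dminus Φ x, ∀ ε > 0, ∃ δ > 0, ∀ y, y ≠ x → |y - x| < δ →
      -ε * |y - x| ≤ Φ y - Φ x - p * (y - x) := by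
    intro x p hp ε hε
    have hb : IsBoundedUnder (· ≥ ·) (𝓝[≠] x)
        (fun y => (Φ y - Φ x - p * (y - x)) / |y - x|) :=
      ⟨-(|F x| + 2 + |p|), by
        rw [eventually_map]
        filter_upwards [bdd x p] with y hy using (abs_le.1 hy).1⟩
    obtain ⟨δ, hδ, h⟩ := unfold_ev x _
      (eventually_lt_of_lt_liminf (lt_of_lt_of_le (neg_lt_zero.2 hε) hp) hb)
    refine ⟨δ, hδ, fun y hy hd => ?_⟩
    have := h y hy hd
    rw [lt_div_iff₀ (abs_pos.2 (sub_ne_zero.2 hy))] at this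
    exact this.le
  refine ⟨?_, ?_, ?_, ?_⟩
  · rw [continuous_iff_continuousAt]
    intro x
    obtain ⟨δ, hδ, h⟩ := lip x
    refine continuousAt_of_locally_lipschitz hδ (|F x| + 2) fun y hy => ?_
    rw [Real.dist_eq] at *
    exact h y hy
  · intro x
    rw [hM, hM, hSc]
    have : M (x + 1) = M x + c := by
      apply le_antisymm
      · obtain ⟨z, hz, e⟩ := hMex (x + 1)
        have := hMle x (z - 1) ⟨by linarith [hz.1], by linarith [hz.2]⟩
        have e2 := hSc (z - 1)
        rw [sub_add_cancel] at e2
        linarith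
      · obtain ⟨z, hz, e⟩ := hMex x
        have := hMle (x + 1) (z + 1) ⟨by linarith [hz.1], by linarith [hz.2]⟩
        have e2 := hSc z
        linarith
    rw [this]; ring
  · intro x p hp
    have h1 : p ≤ max 0 (F x) := by
      apply le_of_forall_pos_le_add
      intro ε hε
      obtain ⟨δ, hδ, h⟩ := hminus x p hp (ε / 3) (by positivity)
      obtain ⟨δ', hδ', h'⟩ := est x (ε / 3) (by positivity)
      obtain ⟨t, ht0, ht⟩ := exists_between (lt_min hδ hδ')
      have ht1 := ht.trans_le (min_le_left _ _)
      have ht2 := ht.trans_le (min_le_right _ _)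
      have a1 := h (x + t) (by linarith) (by rw [add_sub_cancel_left, abs_of_pos ht0]; exact ht1)
      have a2 := (h' x (x + t) (by linarith) (by linarith) (by linarith)).2.2
      rw [add_sub_cancel_left] at *
      rw [abs_of_pos ht0] at a1
      refine le_of_mul_le_mul_right ?_ ht0
      linarith
    have h2 : min 0 (F x) ≤ p := by
      apply le_of_forall_pos_le_add
      intro ε hε
      obtain ⟨δ, hδ, h⟩ := hminus x p hp (ε / 3) (by positivity)
      obtain ⟨δ', hδ', h'⟩ := est x (ε / 3) (by positivity)
      obtain ⟨t, ht0, ht⟩ := exists_between (lt_min hδ hδ')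
      have ht1 := ht.trans_le (min_le_left _ _)
      have ht2 := ht.trans_le (min_le_right _ _)
      have e : |x - t - x| = t := by rw [sub_sub_cancel_left, abs_neg, abs_of_pos ht0]
      have a1 := h (x - t) (by linarith) (by rw [e]; exact ht1)
      have a2 := (h' (x - t) x (by linarith) (by linarith) (by linarith)).2.1
      rw [e] at a1
      rw [sub_sub_cancel] at a2
      refine le_of_mul_le_mul_right ?_ ht0
      linarith
    by_cases hp0 : p = 0
    · rw [hp0, hH0]
    by_cases hpF : p = F x
    · rw [hpF, hHF]
    exfalso
    rcases le_total 0 (F x) with hf | hf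
    · rw [max_eq_right hf] at h1
      rw [min_eq_left hf] at h2
      have h1 := lt_of_le_of_ne h1 hpF
      have h2 := lt_of_le_of_ne h2 (Ne.symm hp0)
      obtain ⟨ε, hε, hε'⟩ := exists_between
        (show 0 < min p (F x - p) / 2 from half_pos (lt_min h2 (by linarith)))
      have i1 := min_le_left p (F x - p)
      have i2 := min_le_right p (F x - p)
      obtain ⟨δ, hδ, h⟩ := hminus x p hp ε hε
      obtain ⟨δ', hδ', h'⟩ := est x ε hε
      obtain ⟨t, ht0, ht⟩ := exists_between (lt_min hδ hδ')
      have ht1 := ht.trans_le (min_le_left _ _)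
      have ht2 := ht.trans_le (min_le_right _ _)
      obtain ⟨z, hz, hzM⟩ := hMex x
      have hz1 : z = x + 1 := by
        by_contra hne
        have hlt := lt_of_le_of_ne hz.2 hne
        obtain ⟨s, hs0, hs⟩ := exists_between (lt_min ht0 (show 0 < x + 1 - z by linarith))
        have hs1 := hs.trans_le (min_le_left _ _)
        have hs2 := hs.trans_le (min_le_right _ _)
        have e : |x - s - x| = s := by rw [sub_sub_cancel_left, abs_neg, abs_of_pos hs0]
        have a1 := h (x - s) (by linarith) (by rw [e]; linarith)
        have a2 := (h' (x - s) x (by linarith) (by linarith) (by linarith)).1.1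
        have a3 := hMle (x - s) z ⟨by linarith [hz.1], by linarith⟩
        rw [e] at a1
        rw [sub_sub_cancel] at a2
        have a4 := hM x
        have a5 := hM (x - s)
        have : 0 < (F x - p - 2 * ε) * s := mul_pos (by linarith) hs0
        linarith
      have a1 := h (x + t) (by linarith) (by rw [add_sub_cancel_left, abs_of_pos ht0]; exact ht1)
      rw [add_sub_cancel_left, abs_of_pos ht0] at a1
      have a2 := hMle (x + t) (x + t + 1) ⟨by linarith, le_rfl⟩
      rw [hSc] at a2
      rw [hz1, hSc] at hzM
      have a4 := hM x
      have a5 := hM (x + t)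
      have : 0 < (p - ε) * t := mul_pos (by linarith) ht0
      linarith
    · rw [max_eq_left hf] at h1
      rw [min_eq_right hf] at h2
      have h1 := lt_of_le_of_ne h1 hp0
      have h2 := lt_of_le_of_ne h2 (Ne.symm hpF)
      obtain ⟨ε, hε, hε'⟩ := exists_between
        (show 0 < min (-p) (p - F x) / 2 from half_pos (lt_min (by linarith) (by linarith)))
      have i1 := min_le_left (-p) (p - F x)
      have i2 := min_le_right (-p) (p - F x)
      obtain ⟨δ, hδ, h⟩ := hminus x p hp ε hε
      obtain ⟨δ', hδ', h'⟩ := est x ε hε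
      obtain ⟨t, ht0, ht⟩ := exists_between (lt_min hδ hδ')
      have ht1 := ht.trans_le (min_le_left _ _)
      have ht2 := ht.trans_le (min_le_right _ _)
      obtain ⟨z, hz, hzM⟩ := hMex x
      have hz1 : z = x := by
        by_contra hne
        have hlt := lt_of_le_of_ne hz.1 (Ne.symm hne)
        obtain ⟨s, hs0, hs⟩ := exists_between (lt_min ht0 (show 0 < z - x by linarith))
        have hs1 := hs.trans_le (min_le_left _ _)
        have hs2 := hs.trans_le (min_le_right _ _)
        have a1 := h (x + s) (by linarith)
          (by rw [add_sub_cancel_left, abs_of_pos hs0]; linarith)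
        have a2 := (h' x (x + s) (by linarith) (by linarith) (by linarith)).1.2
        have a3 := hMle (x + s) z ⟨by linarith, by linarith [hz.2]⟩
        rw [add_sub_cancel_left, abs_of_pos hs0] at a1
        rw [add_sub_cancel_left] at a2
        have a4 := hM x
        have a5 := hM (x + s)
        have : 0 < (p - F x - 2 * ε) * s := mul_pos (by linarith) hs0
        linarith
      have e : |x - t - x| = t := by rw [sub_sub_cancel_left, abs_neg, abs_of_pos ht0]
      have a1 := h (x - t) (by linarith) (by rw [e]; exact ht1)
      rw [e] at a1
      have a2 := hMle (x - t) (x - t) ⟨le_rfl, by linarith⟩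
      rw [hz1] at hzM
      have a4 := hM x
      have a5 := hM (x - t)
      have : 0 < (-p - ε) * t := mul_pos (by linarith) ht0
      linarith
  · intro x p hp
    have h1 : p ≤ max 0 (F x) := by
      apply le_of_forall_pos_le_add
      intro ε hε
      obtain ⟨δ, hδ, h⟩ := hplus x p hp (ε / 3) (by positivity)
      obtain ⟨δ', hδ', h'⟩ := est x (ε / 3) (by positivity)
      obtain ⟨t, ht0, ht⟩ := exists_between (lt_min hδ hδ')
      have ht1 := ht.trans_le (min_le_left _ _)
      have ht2 := ht.trans_le (min_le_right _ _)
      have e : |x - t - x| = t := by rw [sub_sub_cancel_left, abs_neg, abs_of_pos ht0]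
      have a1 := h (x - t) (by linarith) (by rw [e]; exact ht1)
      have a2 := (h' (x - t) x (by linarith) (by linarith) (by linarith)).2.2
      rw [e] at a1
      rw [sub_sub_cancel] at a2
      refine le_of_mul_le_mul_right ?_ ht0
      linarith
    have h2 : min 0 (F x) ≤ p := by
      apply le_of_forall_pos_le_add
      intro ε hε
      obtain ⟨δ, hδ, h⟩ := hplus x p hp (ε / 3) (by positivity)
      obtain ⟨δ', hδ', h'⟩ := est x (ε / 3) (by positivity)
      obtain ⟨t, ht0, ht⟩ := exists_between (lt_min hδ hδ')
      have ht1 := ht.trans_le (min_le_left _ _)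
      have ht2 := ht.trans_le (min_le_right _ _)
      have a1 := h (x + t) (by linarith) (by rw [add_sub_cancel_left, abs_of_pos ht0]; exact ht1)
      have a2 := (h' x (x + t) (by linarith) (by linarith) (by linarith)).2.1
      rw [add_sub_cancel_left] at *
      rw [abs_of_pos ht0] at a1
      refine le_of_mul_le_mul_right ?_ ht0
      linarith
    have hseg : p ∈ segment ℝ (0 : ℝ) (F x) := by
      rw [segment_eq_uIcc]; exact ⟨h2, h1⟩
    have := (hHconv x).le_on_segment (mem_univ 0) (mem_univ (F x)) hseg
    rwa [hH0, hHF, max_self] at this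
end

section
/- Let b ∈ ℝ be such that S(b+1) = max_{y∈[b,b+1]} S(y). Then for every x ∈ [b, b+1], Φ(x) = S(x) − S(1) − max_{y∈[b,x]} S(y). -/
open Set Filter Topology

/-- If `b ∈ ℝ` satisfies `S(b+1) = max_{y∈[b,b+1]} S(y)`, then for
every `x ∈ [b,b+1]` one has `Φ(x) = S(x) − S(1) − max_{y∈[b,x]} S(y)`. -/
theorem stmt_13
    (F : ℝ → ℝ) (hF : Continuous F) (hFper : ∀ x, F (x + 1) = F x)
    (S : ℝ → ℝ) (hS : ∀ x, S x = ∫ t in (0:ℝ)..x, F t)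
    (Φ : ℝ → ℝ) (hΦ : ∀ x, Φ x = sInf ((fun y => S x - S y) '' Icc x (x + 1)))
    (b : ℝ) (hb : ∀ y ∈ Icc b (b + 1), S y ≤ S (b + 1)) :
    ∀ x ∈ Icc b (b + 1), Φ x = S x - S 1 - sSup (S '' Icc b x) := by
  have hint : ∀ a c : ℝ, IntervalIntegrable F MeasureTheory.volume a c :=
    fun a c => hF.intervalIntegrable a c
  have hper : Function.Periodic F 1 := hFper
  have hadd : ∀ y, S (y + 1) = S y + S 1 := by
    intro y
    have h1 := intervalIntegral.integral_add_adjacent_intervals (hint 0 y) (hint y (y + 1))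
    have h2 := hper.intervalIntegral_add_eq y 0
    rw [zero_add] at h2
    rw [hS, hS y, hS 1, ← h1, h2]
  have hcont : Continuous S := by
    have h : S = fun x => ∫ t in (0:ℝ)..x, F t := funext hS
    rw [h]
    exact intervalIntegral.continuous_primitive hint 0
  intro x hx
  obtain ⟨m, hm, hmax⟩ := isCompact_Icc.exists_isMaxOn (nonempty_Icc.2 hx.1) hcont.continuousOn
  have hmax' : ∀ y ∈ Icc b x, S y ≤ S m := fun y hy => hmax hy
  have h1 : IsGreatest (S '' Icc b x) (S m) := by
    refine ⟨mem_image_of_mem _ hm, ?_⟩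
    rintro _ ⟨y, hy, rfl⟩
    exact hmax' y hy
  have h2 : IsLeast ((fun y => S x - S y) '' Icc x (x + 1)) (S x - S (m + 1)) := by
    refine ⟨⟨m + 1, ⟨by linarith [hm.1, hx.2], by linarith [hm.2]⟩, rfl⟩, ?_⟩
    rintro _ ⟨y, hy, rfl⟩
    have hy1 := hy.1
    have hy2 := hy.2
    have hxb := hx.1
    have hm1 := hadd m
    show S x - S (m + 1) ≤ S x - S y
    rcases le_total y (b + 1) with h | h
    · have h3 := hb y ⟨by linarith, h⟩
      have h4 := hmax' b ⟨le_refl b, hxb⟩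
      have h5 := hadd b
      linarith
    · have h4 := hmax' (y - 1) ⟨by linarith, by linarith⟩
      have h5 := hadd (y - 1)
      rw [sub_add_cancel] at h5
      linarith
  rw [hΦ, h1.csSup_eq, h2.csInf_eq, hadd m]
  ring
end

section
/- Suppose S(1) > 0 and S has a point of local maximum a ∈ ℝ. Then there exists a point b ∈ ℝ of local maximum of S such that S(b+1) = max_{y∈[b,b+1]} S(y); such a b can be taken as a point of [a,a+1] at which S attains max_{y∈[a,a+1]} S(y). -/
open Set Filter Topology

/-- Suppose `S(1) > 0` and `S` has a point of local maximum `a`.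
Then there exists a point `b ∈ [a,a+1]` of local maximum of `S` such that
`S(b+1) = max_{y∈[b,b+1]} S(y)`; such a `b` can be taken as a point of
`[a,a+1]` at which `S` attains `max_{y∈[a,a+1]} S(y)`. -/
theorem stmt_14
    (F : ℝ → ℝ) (hF : Continuous F) (hFper : ∀ x, F (x + 1) = F x)
    (S : ℝ → ℝ) (hS : ∀ x, S x = ∫ t in (0:ℝ)..x, F t)
    (hS1 : 0 < S 1) (a : ℝ) (ha : IsLocalMax S a) :
    ∃ b ∈ Icc a (a + 1), IsLocalMax S b ∧
      (∀ y ∈ Icc a (a + 1), S y ≤ S b) ∧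
      (∀ y ∈ Icc b (b + 1), S y ≤ S (b + 1)) := by
  have hint : ∀ u v : ℝ, IntervalIntegrable F MeasureTheory.volume u v :=
    fun u v => hF.intervalIntegrable u v
  have hstep : ∀ x, S (x + 1) = S x + S 1 := by
    intro x
    have hper : Function.Periodic F 1 := hFper
    have h1 := hper.intervalIntegral_add_eq x 0
    rw [zero_add] at h1
    rw [hS (x + 1), hS x, hS 1, ← h1]
    exact (intervalIntegral.integral_add_adjacent_intervals (hint _ _) (hint _ _)).symm
  have hcont : Continuous S := by
    have : S = fun x => ∫ t in (0:ℝ)..x, F t := funext hS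
    rw [this]
    exact intervalIntegral.continuous_primitive hint 0
  obtain ⟨b, hb, hmax⟩ := isCompact_Icc.exists_isMaxOn
    (nonempty_Icc.2 (by linarith : a ≤ a + 1)) hcont.continuousOn
  have hmax' : ∀ y ∈ Icc a (a + 1), S y ≤ S b := fun y hy => hmax hy
  refine ⟨b, hb, ?_, hmax', ?_⟩
  · have hba : a < b := by
      rcases hb.1.lt_or_eq with h | h
      · exact h
      · have h2 := hmax' (a + 1) ⟨by linarith, le_rfl⟩
        rw [hstep a, ← h] at h2
        linarith
    rcases hb.2.lt_or_eq with h | h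
    · exact hmax.isLocalMax (Icc_mem_nhds hba h)
    · subst h
      have ht : Tendsto (fun x : ℝ => x - 1) (𝓝 (a + 1)) (𝓝 a) := by
        have : Continuous (fun x : ℝ => x - 1) := by fun_prop
        simpa using this.tendsto (a + 1)
      filter_upwards [ht.eventually ha] with x hx
      have h3 := hstep (x - 1)
      rw [sub_add_cancel] at h3
      rw [h3, hstep a]
      linarith
  · intro y hy
    rw [hstep b]
    rcases le_total y (a + 1) with h | h
    · have := hmax' y ⟨hb.1.trans hy.1, h⟩
      linarith
    · have h3 := hstep (y - 1)
      rw [sub_add_cancel] at h3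
      have := hmax' (y - 1) ⟨by linarith, by linarith [hy.2, hb.2]⟩
      linarith
end

section
/- Assume S(1) ≠ 0 and S is not monotone, and set U = {x ∈ ℝ : Φ(x) ≠ min{0, −S(1)}}. Then for every maximal connected component (u⁻, u⁺) of the open set U, one has F(u⁻) ≤ 0 and F(u⁺) ≥ 0. -/
open Set Filter Topology

lemma aux_pos (F S : ℝ → ℝ) (hF : Continuous F) (hd : ∀ x, HasDerivAt S (F x) x)
    (u : ℝ) (hu : 0 < F u) :
    ∃ e > 0, e < 1 ∧ StrictMonoOn S (Icc (u - e) (u + e)) := by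
  have h : ∀ᶠ x in 𝓝 u, 0 < F x := hF.continuousAt.eventually (lt_mem_nhds hu)
  obtain ⟨e, he, h⟩ := Metric.eventually_nhds_iff.1 h
  refine ⟨min (e/2) (1/2), by positivity, by
    have := min_le_right (e/2) (1/2); linarith, ?_⟩
  apply strictMonoOn_of_deriv_pos (convex_Icc _ _)
  · exact fun x _ => (hd x).continuousAt.continuousWithinAt
  · intro x hx
    rw [interior_Icc] at hx
    rw [(hd x).deriv]
    apply h
    have := min_le_left (e/2) (1/2)
    rw [Real.dist_eq, abs_lt]
    constructor <;> linarith [hx.1, hx.2]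

/-- Assume `S(1) ≠ 0` and `S` is not monotone, and let
`U = {x : Φ(x) ≠ min{0, −S(1)}}`. For every maximal connected component
`(u⁻,u⁺)` of the open set `U` (characterized by `(u⁻,u⁺) ⊆ U` with endpoints
`u⁻, u⁺ ∉ U`), one has `F(u⁻) ≤ 0` and `F(u⁺) ≥ 0`. -/
theorem stmt_16
    (F : ℝ → ℝ) (hF : Continuous F) (hFper : ∀ x, F (x + 1) = F x)
    (S : ℝ → ℝ) (hS : ∀ x, S x = ∫ t in (0:ℝ)..x, F t)
    (Φ : ℝ → ℝ) (hΦ : ∀ x, Φ x = sInf ((fun y => S x - S y) '' Icc x (x + 1)))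
    (hS1 : S 1 ≠ 0) (hmon : ¬ Monotone S) (hant : ¬ Antitone S) :
    ∀ u₁ u₂ : ℝ, u₁ < u₂ →
      Ioo u₁ u₂ ⊆ {x : ℝ | Φ x ≠ min 0 (-S 1)} →
      u₁ ∉ {x : ℝ | Φ x ≠ min 0 (-S 1)} →
      u₂ ∉ {x : ℝ | Φ x ≠ min 0 (-S 1)} →
      F u₁ ≤ 0 ∧ 0 ≤ F u₂ := by
  have hd : ∀ x, HasDerivAt S (F x) x := by
    intro x
    have : S = fun x => ∫ t in (0:ℝ)..x, F t := funext hS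
    rw [this]
    exact hF.integral_hasStrictDerivAt 0 x |>.hasDerivAt
  have hc : Continuous S := continuous_iff_continuousAt.2 fun x => (hd x).continuousAt
  have hper : ∀ x, S (x + 1) = S x + S 1 := by
    intro x
    have h1 := Function.Periodic.intervalIntegral_add_eq (f := F) (T := 1) hFper x 0
    have h2 := intervalIntegral.integral_add_adjacent_intervals
      (hF.intervalIntegrable (μ := MeasureTheory.volume) 0 x) (hF.intervalIntegrable x (x+1))
    rw [hS, hS x, hS 1, ← h2, h1]; simp
  have key : ∀ x, Φ x = min 0 (-S 1) ↔ ∀ y ∈ Icc x (x+1), S y ≤ S x + max 0 (S 1) := by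
    intro x
    have hm : min 0 (-S 1) = - max 0 (S 1) := by
      rw [← neg_zero, min_neg_neg, neg_zero]
    have hbdd : BddBelow ((fun y => S x - S y) '' Icc x (x + 1)) :=
      (isCompact_Icc.image (by fun_prop)).bddBelow
    rw [hΦ, hm]
    constructor
    · intro h y hy
      have := csInf_le hbdd (mem_image_of_mem _ hy)
      simp only [h] at this
      linarith
    · intro h
      apply le_antisymm
      · rcases max_cases 0 (S 1) with h0 | h0
        · rw [h0.1]
          exact csInf_le hbdd ⟨x, ⟨le_refl _, by linarith⟩, by simp⟩
        · rw [h0.1]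
          exact csInf_le hbdd ⟨x+1, ⟨by linarith, le_refl _⟩, by simp [hper]⟩
      · apply le_csInf ((nonempty_Icc.2 (by linarith)).image _)
        rintro _ ⟨y, hy, rfl⟩
        have := h y hy
        simp only
        linarith
  intro u₁ u₂ hlt hU h1 h2
  simp only [mem_ofPred_eq, not_not, key] at h1 h2
  have hU' : ∀ x ∈ Ioo u₁ u₂, ¬ ∀ y ∈ Icc x (x+1), S y ≤ S x + max 0 (S 1) :=
    fun x hx h => hU hx ((key x).2 h)
  have neg : ∀ u, F u < 0 → ∃ e > 0, e < 1 ∧ StrictMonoOn (fun x => - S x) (Icc (u - e) (u + e)) :=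
    fun u hu => aux_pos (fun x => - F x) (fun x => - S x) hF.neg (fun x => (hd x).fun_neg) u
      (by simpa using hu)
  rcases lt_or_gt_of_ne hS1 with hs | hs
  · rw [max_eq_left hs.le] at h1 h2 hU'
    simp only [add_zero] at h1 h2 hU'
    constructor
    · by_contra! hu
      obtain ⟨e, he, he1, hm⟩ := aux_pos F S hF hd u₁ hu
      have := hm ⟨by linarith, by linarith⟩ ⟨by linarith, le_refl _⟩ (by linarith : u₁ < u₁ + e)
      linarith [h1 (u₁ + e) ⟨by linarith, by linarith⟩]
    · by_contra! hu
      obtain ⟨e, he, he1, hm⟩ := neg u₂ hu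
      obtain ⟨x, hx1, hx2⟩ := exists_between (max_lt hlt (by linarith : u₂ - e < u₂))
      have ha := (le_max_left _ _).trans_lt hx1
      have hb := (le_max_right _ _).trans_lt hx1
      apply hU' x ⟨ha, hx2⟩
      have hm' : ∀ y ∈ Icc x u₂, S y ≤ S x := fun y hy => by
        have := hm.monotoneOn ⟨hb.le, by linarith⟩ ⟨by linarith [hy.1], by linarith [hy.2]⟩ hy.1
        linarith
      intro y hy
      rcases le_total y u₂ with h | h
      · exact hm' y ⟨hy.1, h⟩
      · exact (h2 y ⟨h, by linarith [hy.2]⟩).trans (hm' u₂ ⟨hx2.le, le_refl _⟩)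
  · rw [max_eq_right hs.le] at h1 h2 hU'
    simp only [← hper] at h1 h2 hU'
    constructor
    · by_contra! hu
      rw [← hFper] at hu
      obtain ⟨e, he, he1, hm⟩ := aux_pos F S hF hd (u₁ + 1) hu
      obtain ⟨x, hx1, hx2⟩ := exists_between (lt_min hlt (by linarith : u₁ < u₁ + e))
      have ha := hx2.trans_le (min_le_left _ _)
      have hb := hx2.trans_le (min_le_right _ _)
      apply hU' x ⟨hx1, ha⟩
      have hm' : ∀ y ∈ Icc (u₁ + 1) (x + 1), S y ≤ S (x + 1) := fun y hy =>
        hm.monotoneOn ⟨by linarith [hy.1], by linarith [hy.2]⟩ ⟨by linarith, by linarith⟩ hy.2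
      intro y hy
      rcases le_total y (u₁ + 1) with h | h
      · exact (h1 y ⟨by linarith [hy.1], h⟩).trans (hm' _ ⟨le_refl _, by linarith⟩)
      · exact hm' y ⟨h, hy.2⟩
    · by_contra! hu
      rw [← hFper] at hu
      obtain ⟨e, he, he1, hm⟩ := neg _ hu
      have := hm ⟨le_refl _, by linarith⟩ ⟨by linarith, by linarith⟩
        (by linarith : u₂ + 1 - e < u₂ + 1)
      simp only at this
      linarith [h2 (u₂ + 1 - e) ⟨by linarith, by linarith⟩]
end

section
/- For every x ∈ 𝕋 and every lift x̄ ∈ ℝ of x, W(x) + max_{y∈[x̄, x̄+1]} (S(y) − S(x̄)) = ∫₀¹ F₊(s) ds, where F₊ = max(F,0). In particular the left-hand side does not depend on x. -/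
open Set Filter Topology

namespace Bianca

def Zs (F : ℝ → ℝ) : Set ℝ := {x : ℝ | F x = 0 ∧ x ∈ Icc (0:ℝ) 1}

theorem comp_zero (F : ℝ → ℝ) (s s1 r : ℝ) (hs : s ∈ Zs F) (hs1 : s1 ∈ Zs F)
    (h : (ConnectedComponents.mk (⟨s, hs⟩ : Zs F)) = ConnectedComponents.mk ⟨s1, hs1⟩)
    (h1 : s ≤ r) (h2 : r ≤ s1) : F r = 0 := by
  have hpre : IsPreconnected (Subtype.val '' (connectedComponent (⟨s, hs⟩ : Zs F))) :=
    isPreconnected_connectedComponent.image _ continuous_subtype_val.continuousOn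
  have hoc := hpre.ordConnected
  rw [ConnectedComponents.coe_eq_coe] at h
  have m1 : s ∈ (Subtype.val '' (connectedComponent (⟨s, hs⟩ : Zs F))) :=
    ⟨⟨s, hs⟩, mem_connectedComponent, rfl⟩
  have m2 : s1 ∈ (Subtype.val '' (connectedComponent (⟨s, hs⟩ : Zs F))) :=
    ⟨⟨s1, hs1⟩, by rw [h]; exact mem_connectedComponent, rfl⟩
  obtain ⟨z, -, hz⟩ := hoc.out m1 m2 ⟨h1, h2⟩
  rw [← hz]; exact z.2.1

theorem pigeon (F : ℝ → ℝ) (hfin : Finite (ConnectedComponents (Zs F))) (l : Filter ℝ)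
    (h : ∃ᶠ s in l, s ∈ Zs F) :
    ∃ c : ConnectedComponents (Zs F), ∃ᶠ s in l, ∃ hs : s ∈ Zs F,
      ConnectedComponents.mk (⟨s, hs⟩ : Zs F) = c := by
  by_contra hc0
  have hc : ∀ c : ConnectedComponents (Zs F), ∀ᶠ s in l, ¬ ∃ hs : s ∈ Zs F,
      ConnectedComponents.mk (⟨s, hs⟩ : Zs F) = c :=
    fun c => not_frequently.1 fun h => hc0 ⟨c, h⟩
  rw [← eventually_all] at hc
  apply h
  filter_upwards [hc] with s hs hsZ
  exact hs _ ⟨hsZ, rfl⟩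

theorem left0 (F : ℝ → ℝ) (hfin : Finite (ConnectedComponents (Zs F))) (t : ℝ)
    (h0 : 0 < t) (h1 : t ≤ 1) (h : ∀ l < t, ∃ s ∈ Ioo l t, F s = 0) :
    ∃ l < t, ∀ s ∈ Ioo l t, F s = 0 := by
  have hf : ∃ᶠ s in 𝓝[<] t, s ∈ Zs F := by
    rw [(nhdsLT_basis t).frequently_iff]
    intro l hl
    obtain ⟨s, hs, hs0⟩ := h (max l 0) (max_lt hl h0)
    have := max_lt_iff.1 hs.1
    exact ⟨s, ⟨this.1, hs.2⟩, hs0, this.2.le, by linarith [hs.2]⟩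
  obtain ⟨c, hc⟩ := pigeon F hfin _ hf
  rw [(nhdsLT_basis t).frequently_iff] at hc
  obtain ⟨s, hs, hsZ, hsc⟩ := hc (t - 1) (by linarith)
  refine ⟨s, hs.2, fun r hr => ?_⟩
  obtain ⟨s1, hs1, hs1Z, hs1c⟩ := hc r hr.2
  exact comp_zero F s s1 r hsZ hs1Z (hsc.trans hs1c.symm) hr.1.le hs1.1.le

theorem right0 (F : ℝ → ℝ) (hfin : Finite (ConnectedComponents (Zs F))) (t : ℝ)
    (h0 : 0 ≤ t) (h1 : t < 1) (h : ∀ l > t, ∃ s ∈ Ioo t l, F s = 0) :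
    ∃ l > t, ∀ s ∈ Ioo t l, F s = 0 := by
  have hf : ∃ᶠ s in 𝓝[>] t, s ∈ Zs F := by
    rw [(nhdsGT_basis t).frequently_iff]
    intro l hl
    obtain ⟨s, hs, hs0⟩ := h (min l 1) (lt_min hl h1)
    have := lt_min_iff.1 hs.2
    exact ⟨s, ⟨hs.1, this.1⟩, hs0, by linarith [hs.1], this.2.le⟩
  obtain ⟨c, hc⟩ := pigeon F hfin _ hf
  rw [(nhdsGT_basis t).frequently_iff] at hc
  obtain ⟨s, hs, hsZ, hsc⟩ := hc (t + 1) (by linarith)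
  refine ⟨s, hs.1, fun r hr => ?_⟩
  obtain ⟨s1, hs1, hs1Z, hs1c⟩ := hc r hr.1
  exact comp_zero F s1 s r hs1Z hsZ (hs1c.trans hsc.symm) hs1.2.le hr.2.le

theorem left1 (F : ℝ → ℝ) (hper : Function.Periodic F 1)
    (hfin : Finite (ConnectedComponents (Zs F))) (t : ℝ)
    (h : ∀ l < t, ∃ s ∈ Ioo l t, F s = 0) :
    ∃ l < t, ∀ s ∈ Ioo l t, F s = 0 := by
  have hk : ∀ (s : ℝ) (k : ℤ), F (s + k) = F s := fun s k => by
    simpa using hper.int_mul k s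
  have e1 := Int.ceil_lt_add_one t
  have e2 := Int.le_ceil t
  obtain ⟨l, hl, hl2⟩ := left0 F hfin (t - (⌈t⌉ - 1 : ℤ)) (by push_cast; linarith)
    (by push_cast; linarith) (by
      intro l hl
      obtain ⟨s, hs, hs0⟩ := h (l + (⌈t⌉ - 1 : ℤ)) (by linarith)
      refine ⟨s - (⌈t⌉ - 1 : ℤ), ⟨by linarith [hs.1], by linarith [hs.2]⟩, ?_⟩
      rw [← hk _ (⌈t⌉ - 1), sub_add_cancel, hs0])
  refine ⟨l + (⌈t⌉ - 1 : ℤ), by linarith, fun s hs => ?_⟩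
  have := hl2 (s - (⌈t⌉ - 1 : ℤ)) ⟨by linarith [hs.1], by linarith [hs.2]⟩
  rwa [← hk _ (⌈t⌉ - 1), sub_add_cancel] at this

theorem right1 (F : ℝ → ℝ) (hper : Function.Periodic F 1)
    (hfin : Finite (ConnectedComponents (Zs F))) (t : ℝ)
    (h : ∀ l > t, ∃ s ∈ Ioo t l, F s = 0) :
    ∃ l > t, ∀ s ∈ Ioo t l, F s = 0 := by
  have hk : ∀ (s : ℝ) (k : ℤ), F (s + k) = F s := fun s k => by
    simpa using hper.int_mul k s
  have e1 := Int.lt_floor_add_one t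
  have e2 := Int.floor_le t
  obtain ⟨l, hl, hl2⟩ := right0 F hfin (t - ⌊t⌋) (by linarith)
    (by linarith) (by
      intro l hl
      obtain ⟨s, hs, hs0⟩ := h (l + ⌊t⌋) (by linarith)
      refine ⟨s - ⌊t⌋, ⟨by linarith [hs.1], by linarith [hs.2]⟩, ?_⟩
      rw [← hk _ ⌊t⌋, sub_add_cancel, hs0])
  refine ⟨l + ⌊t⌋, by linarith, fun s hs => ?_⟩
  have := hl2 (s - ⌊t⌋) ⟨by linarith [hs.1], by linarith [hs.2]⟩
  rwa [← hk _ ⌊t⌋, sub_add_cancel] at this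

theorem exists_stable (F : ℝ → ℝ) (hF : Continuous F) (hper : Function.Periodic F 1)
    (hfin : Finite (ConnectedComponents (Zs F))) (v w : ℝ) (hvw : v < w)
    (hv : F v < 0) (hw : 0 < F w) :
    ∃ a b, v < a ∧ a ≤ b ∧ b < w ∧ (∀ x ∈ Icc a b, F x = 0) ∧
      ∃ ε > 0, (∀ x ∈ Ico (a - ε) a, F x < 0) ∧ (∀ x ∈ Ioc b (b + ε), 0 < F x) := by
  set A : Set ℝ := {z | z ∈ Icc v w ∧ F z < 0} with hA
  have hvA : v ∈ A := ⟨⟨le_rfl, hvw.le⟩, hv⟩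
  have hAb : BddAbove A := ⟨w, fun z hz => hz.1.2⟩
  set a := sSup A with ha
  have hlub : IsLUB A a := isLUB_csSup ⟨v, hvA⟩ hAb
  have hva : v ≤ a := hlub.1 hvA
  have haw : a ≤ w := hlub.2 fun z hz => hz.1.2
  have hpos : ∀ z, a < z → z ≤ w → 0 ≤ F z := by
    intro z hz hzw
    by_contra hneg
    have := hlub.1 (show z ∈ A from ⟨⟨by linarith, hzw⟩, not_le.1 hneg⟩)
    linarith
  have hle : F a ≤ 0 := by
    have : a ∈ closure A := hlub.mem_closure ⟨v, hvA⟩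
    have h2 : closure A ⊆ {z | F z ≤ 0} :=
      closure_minimal (fun z hz => hz.2.le) (isClosed_le hF continuous_const)
    exact h2 this
  have haw' : a < w := lt_of_le_of_ne haw (by intro h; rw [h] at hle; linarith)
  have hge : 0 ≤ F a := by
    by_contra hneg
    push Not at hneg
    have hn : ∀ᶠ z in 𝓝[>] a, F z < 0 :=
      (hF.continuousAt.eventually (gt_mem_nhds hneg)).filter_mono nhdsWithin_le_nhds
    have hn2 : ∀ᶠ z in 𝓝[>] a, z ∈ Ioo a w := Ioo_mem_nhdsGT haw'
    obtain ⟨z, hz, hz2⟩ := (hn.and hn2).exists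
    linarith [hpos z hz2.1 hz2.2.le]
  have hFa : F a = 0 := le_antisymm hle hge
  have hva' : v < a := lt_of_le_of_ne hva (by intro h; rw [← h] at hFa; linarith)
  have hfreq : ∀ l < a, ∃ s ∈ Ioo l a, F s < 0 := by
    intro l hl
    obtain ⟨s, hs, hls, hsa⟩ := hlub.exists_between hl
    refine ⟨s, ⟨hls, lt_of_le_of_ne hsa ?_⟩, hs.2⟩
    rintro rfl
    have := hs.2
    linarith
  -- left side
  obtain ⟨l, hl, hlneg⟩ : ∃ l < a, ∀ s ∈ Ioo l a, F s < 0 := by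
    have h1 : ∃ l < a, ∀ s ∈ Ioo l a, F s ≠ 0 := by
      by_contra! hcon
      obtain ⟨l, hl, hl2⟩ := left1 F hper hfin a hcon
      obtain ⟨s, hs, hs2⟩ := hfreq l hl
      linarith [hl2 s hs]
    obtain ⟨l, hl, hl2⟩ := h1
    refine ⟨l, hl, fun s hs => ?_⟩
    by_contra hneg
    obtain ⟨s', hs', hs'2⟩ := hfreq s hs.2
    obtain ⟨z, hz, hz0⟩ := intermediate_value_Icc' hs'.1.le hF.continuousOn
      (show (0:ℝ) ∈ Icc (F s') (F s) from ⟨hs'2.le, not_lt.1 hneg⟩)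
    exact hl2 z ⟨by linarith [hs.1, hz.1], by linarith [hz.2, hs'.2]⟩ hz0
  -- b
  set B : Set ℝ := {z | z ∈ Icc a w ∧ ∀ r ∈ Icc a z, F r = 0} with hB
  have haB : a ∈ B := ⟨⟨le_rfl, haw⟩, fun r hr => by
    rw [le_antisymm hr.2 hr.1]; exact hFa⟩
  have hBb : BddAbove B := ⟨w, fun z hz => hz.1.2⟩
  set b := sSup B with hb
  have hlubB : IsLUB B b := isLUB_csSup ⟨a, haB⟩ hBb
  have hab : a ≤ b := hlubB.1 haB
  have hbw : b ≤ w := hlubB.2 fun z hz => hz.1.2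
  have hFb : F b = 0 := by
    have : b ∈ closure B := hlubB.mem_closure ⟨a, haB⟩
    have h2 : closure B ⊆ {z | F z = 0} :=
      closure_minimal (fun z hz => hz.2 z ⟨hz.1.1, le_rfl⟩) (isClosed_eq hF continuous_const)
    exact h2 this
  have hzero : ∀ r ∈ Icc a b, F r = 0 := by
    intro r hr
    rcases eq_or_lt_of_le hr.2 with h | h
    · rw [h]; exact hFb
    · obtain ⟨z, hz, hz1, -⟩ := hlubB.exists_between h
      exact hz.2 r ⟨hr.1, hz1.le⟩
  have hbw' : b < w := lt_of_le_of_ne hbw (by intro h; rw [h] at hFb; linarith)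
  obtain ⟨m, hm, hmpos⟩ : ∃ m > b, ∀ s ∈ Ioo b m, F s ≠ 0 := by
    by_contra! hcon
    obtain ⟨m, hm, hm2⟩ := right1 F hper hfin b hcon
    set z := (b + min m w) / 2
    have hbm : b < min m w := lt_min hm hbw'
    have hzb : b < z := by simp only [z]; linarith
    have hzm : z < min m w := by simp only [z]; linarith
    have := lt_min_iff.1 hzm
    have : z ∈ B := ⟨⟨by linarith, this.2.le⟩, fun r hr => by
      rcases le_or_gt r b with h | h
      · exact hzero r ⟨hr.1, h⟩
      · exact hm2 r ⟨h, by linarith [hr.2, this.1]⟩⟩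
    linarith [hlubB.1 this]
  have hbm : b < min m w := lt_min hm hbw'
  refine ⟨a, b, hva', hab, hbw', hzero, min ((a - l) / 2) ((min m w - b) / 2),
    lt_min (by linarith) (by linarith), ?_, ?_⟩
  · intro s hs
    have := min_le_left ((a - l) / 2) ((min m w - b) / 2)
    exact hlneg s ⟨by linarith [hs.1], hs.2⟩
  · intro s hs
    have h3 := min_le_right ((a - l) / 2) ((min m w - b) / 2)
    have h4 : s < min m w := by linarith [hs.2]
    have h5 := lt_min_iff.1 h4
    exact lt_of_le_of_ne (hpos s (by linarith [hs.1]) h5.2.le)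
      (Ne.symm (hmpos s ⟨hs.1, h5.1⟩))

theorem gap0 (F : ℝ → ℝ) (hF : Continuous F) (U T : ℝ) (hUT : U ≤ T)
    (h : ∀ v ∈ Ioo U T, ∀ w ∈ Ioo U T, v < w → F v < 0 → 0 < F w → False) :
    ∃ Y ∈ Icc U T, (∀ s ∈ Ico U Y, 0 ≤ F s) ∧ (∀ s ∈ Ioo Y T, F s ≤ 0) := by
  set A : Set ℝ := {z | z = U ∨ (z ∈ Ioo U T ∧ 0 < F z)} with hA
  have hUA : U ∈ A := Or.inl rfl
  have hub : T ∈ upperBounds A := by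
    rintro z (rfl | hz)
    · exact hUT
    · exact hz.1.2.le
  have hlub : IsLUB A (sSup A) := isLUB_csSup ⟨U, hUA⟩ ⟨T, hub⟩
  have key : ∀ s ∈ Ioo U (sSup A), 0 ≤ F s := by
    intro s hs
    by_contra hneg
    obtain ⟨z, hz, hsz, -⟩ := hlub.exists_between hs.2
    rcases hz with rfl | hz
    · linarith [hs.1]
    · exact h s ⟨hs.1, by linarith [hz.1.2]⟩ z hz.1 hsz (not_le.1 hneg) hz.2
  refine ⟨sSup A, ⟨hlub.1 hUA, hlub.2 hub⟩, fun s hs => ?_, fun s hs => ?_⟩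
  · by_contra hneg
    have hn : ∀ᶠ z in 𝓝[>] s, F z < 0 :=
      (hF.continuousAt.eventually (gt_mem_nhds (not_le.1 hneg))).filter_mono nhdsWithin_le_nhds
    have hn2 : ∀ᶠ z in 𝓝[>] s, z ∈ Ioo s (sSup A) := Ioo_mem_nhdsGT hs.2
    obtain ⟨z, hz, hz2⟩ := (hn.and hn2).exists
    linarith [key z ⟨by linarith [hs.1, hz2.1], hz2.2⟩]
  · by_contra hneg
    have hU := hlub.1 hUA
    have := hlub.1 (show s ∈ A from Or.inr ⟨⟨by linarith [hs.1], hs.2⟩, not_le.1 hneg⟩)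
    linarith [hs.1]

theorem gap (F : ℝ → ℝ) (hF : Continuous F) (hper : Function.Periodic F 1)
    (hfin : Finite (ConnectedComponents (Zs F)))
    {ℓ : ℕ} (a b p : Fin ℓ → ℝ) (hp : ∀ i, p i ∈ Icc (a i) (b i))
    (hexh : ∀ a' b' : ℝ, a' ≤ b' → (∀ x ∈ Icc a' b', F x = 0) →
      (∃ ε > 0, (∀ x ∈ Ico (a' - ε) a', F x < 0) ∧
        (∀ x ∈ Ioc b' (b' + ε), 0 < F x)) →
      ∃ (i : Fin ℓ) (k : ℤ), a' = a i + k ∧ b' = b i + k)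
    (U T : ℝ) (hUT : U ≤ T) (hno : ∀ (i : Fin ℓ) (k : ℤ), p i + k ∉ Ioo U T) :
    ∃ Y ∈ Icc U T, (∀ s ∈ Ico U Y, 0 ≤ F s) ∧ (∀ s ∈ Ioo Y T, F s ≤ 0) := by
  apply gap0 F hF U T hUT
  intro v hv w hw hvw h1 h2
  obtain ⟨a', b', h3, h4, h5, h6, h7⟩ := exists_stable F hF hper hfin v w hvw h1 h2
  obtain ⟨i, k, h8, h9⟩ := hexh a' b' h4 h6 h7
  have := hp i
  exact hno i k ⟨by linarith [hv.1, this.1], by linarith [hw.2, this.2]⟩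

end Bianca
namespace Bianca

theorem fract_lift (x s u t : ℝ) (k : ℤ) (hs : s ∈ Ico x (x + 1)) (ht : t ∈ Ico x (x + 1))
    (htu : t = u + k) : Int.fract (s - u) = if t ≤ s then s - t else s - t + 1 := by
  split_ifs with h
  · rw [Int.fract_eq_iff]
    exact ⟨by linarith, by linarith [hs.2, ht.1], k, by rw [htu]; ring⟩
  · rw [Int.fract_eq_iff]
    exact ⟨by linarith [hs.1, ht.2], by linarith, k - 1, by rw [htu]; push_cast; ring⟩

theorem lift_mem (x u : ℝ) : x + Int.fract (u - x) ∈ Ico x (x + 1) :=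
  ⟨by linarith [Int.fract_nonneg (u - x)], by linarith [Int.fract_lt_one (u - x)]⟩

theorem lift_eq (x u : ℝ) : ∃ k : ℤ, x + Int.fract (u - x) = u + k :=
  ⟨-⌊u - x⌋, by rw [Int.fract]; push_cast; ring⟩

theorem lift_unique (x u : ℝ) (k : ℤ) (h : u + k ∈ Ico x (x + 1)) :
    x + Int.fract (u - x) = u + k := by
  have : Int.fract (u - x) = u + k - x := by
    rw [Int.fract_eq_iff]
    exact ⟨by linarith [h.1], by linarith [h.2], -k, by push_cast; ring⟩
  rw [this]; ring

theorem arc_le (G : ℝ → ℝ) (hper : Function.Periodic G 1)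
    (h0 : ∀ s, 0 ≤ G s) (u v u' v' : ℝ) (k m : ℤ) (hu : u' = u + k) (hv : v' = v + m)
    (h1 : u' ≤ v') (h2 : v' ≤ u' + 1) :
    ∫ s in u..(u + Int.fract (v - u)), G s ≤ ∫ s in u'..v', G s := by
  rcases eq_or_lt_of_le h2 with h | h
  · have : Int.fract (v - u) = 0 := by
      rw [Int.fract_eq_iff]
      refine ⟨le_rfl, one_pos, k - m + 1, ?_⟩
      push_cast; linarith
    rw [this, add_zero, intervalIntegral.integral_same]
    exact intervalIntegral.integral_nonneg h1 fun s _ => h0 s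
  · have : Int.fract (v - u) = v' - u' := by
      rw [Int.fract_eq_iff]
      refine ⟨by linarith, by linarith, k - m, ?_⟩
      push_cast; linarith
    have e : ∀ s, G (s + k) = G s := fun s => by simpa using hper.int_mul k s
    have e2 := intervalIntegral.integral_comp_add_right (a := u) (b := u + (v' - u')) G (k : ℝ)
    simp only [e] at e2
    rw [this, e2, hu]
    apply le_of_eq
    congr 1
    ring

theorem arc_eq (G : ℝ → ℝ) (hper : Function.Periodic G 1) (u v x : ℝ) :
    ∫ s in u..(u + Int.fract (v - u)), G s =
      ∫ s in x..(x + 1), indicator {s | Int.fract (s - u) < Int.fract (v - u)} G s := by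
  set d := Int.fract (v - u) with hd
  have hd0 : 0 ≤ d := Int.fract_nonneg _
  have hd1 : d < 1 := Int.fract_lt_one _
  set A := {s | Int.fract (s - u) < d} with hA
  have hAm : MeasurableSet A :=
    measurableSet_lt (measurable_fract.comp (measurable_id.sub_const u)) measurable_const
  have hp : Function.Periodic (indicator A G) 1 := by
    intro s
    have : s + 1 ∈ A ↔ s ∈ A := by
      simp only [hA, mem_ofPred_eq]
      rw [show s + 1 - u = (s - u) + 1 by ring, Int.fract_add_one]
    by_cases h : s ∈ A
    · rw [indicator_of_mem h, indicator_of_mem (this.2 h), hper]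
    · rw [indicator_of_notMem h, indicator_of_notMem (fun h' => h (this.1 h'))]
  rw [hp.intervalIntegral_add_eq x u, intervalIntegral.integral_of_le (by linarith),
    intervalIntegral.integral_of_le (by linarith),
    MeasureTheory.integral_Ioc_eq_integral_Ioo, MeasureTheory.integral_Ioc_eq_integral_Ioo,
    MeasureTheory.setIntegral_indicator hAm]
  congr 2
  ext s
  simp only [mem_Ioo, mem_inter_iff, hA, mem_ofPred_eq]
  constructor
  · rintro ⟨h1, h2⟩
    have : Int.fract (s - u) = s - u := Int.fract_eq_self.2 ⟨by linarith, by linarith⟩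
    exact ⟨⟨h1, by linarith⟩, by linarith⟩
  · rintro ⟨⟨h1, h2⟩, h3⟩
    have : Int.fract (s - u) = s - u := Int.fract_eq_self.2 ⟨by linarith, by linarith⟩
    exact ⟨h1, by linarith⟩

theorem arc_ind_integrable (G : ℝ → ℝ) (hG : Continuous G) (u d c e : ℝ) :
    IntervalIntegrable (indicator {s | Int.fract (s - u) < d} G) MeasureTheory.volume c e := by
  have hAm : MeasurableSet {s | Int.fract (s - u) < d} :=
    measurableSet_lt (measurable_fract.comp (measurable_id.sub_const u)) measurable_const
  have := hG.intervalIntegrable (μ := MeasureTheory.volume) c e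
  exact ⟨this.1.indicator hAm, this.2.indicator hAm⟩

/-- coverage -/
theorem cover {ℓ : ℕ} (x : ℝ) (p q : Fin ℓ → ℝ) (g : Fin ℓ → Fin ℓ) (r : Fin ℓ)
    (hq : ∀ j, q j = if j = r then x else p (g j))
    (hreach : ∀ j, ∃ n, g^[n] j = r) (dir : Fin ℓ → Prop) (j : Fin ℓ) :
    (∀ s ∈ Ico x (x + Int.fract (p j - x)),
      ∃ j, ¬ dir j ∧ Int.fract (s - q j) < Int.fract (p j - q j)) ∨
    (∀ s ∈ Ico (x + Int.fract (p j - x)) (x + 1),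
      ∃ j, dir j ∧ Int.fract (s - p j) < Int.fract (q j - p j)) := by
  set Cm : ℝ → Prop := fun s => ∃ j, ¬ dir j ∧ Int.fract (s - q j) < Int.fract (p j - q j)
  set Cp : ℝ → Prop := fun s => ∃ j, dir j ∧ Int.fract (s - p j) < Int.fract (q j - p j)
  set D : ℝ → Prop := fun t => (∀ s ∈ Ico x t, Cm s) ∨ (∀ s ∈ Ico t (x + 1), Cp s) with hD
  have step : ∀ j, D (x + Int.fract (q j - x)) → D (x + Int.fract (p j - x)) := by
    intro j hj
    obtain ⟨k, hk⟩ := lift_eq x (p j)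
    obtain ⟨m, hm⟩ := lift_eq x (q j)
    have hP := lift_mem x (p j)
    have hQ := lift_mem x (q j)
    set P := x + Int.fract (p j - x)
    set Q := x + Int.fract (q j - x)
    have hqs : Int.fract (q j - p j) = if P ≤ Q then Q - P else Q - P + 1 := by
      rw [← fract_lift x Q (p j) P k hQ hP hk,
        show Q - p j = q j - p j + m by rw [hm]; ring, Int.fract_add_intCast]
    have hps : Int.fract (p j - q j) = if Q ≤ P then P - Q else P - Q + 1 := by
      rw [← fract_lift x P (q j) Q m hP hQ hm,
        show P - q j = p j - q j + k by rw [hk]; ring, Int.fract_add_intCast]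
    by_cases hdir : dir j
    · have cov : ∀ s ∈ Ico x (x + 1), (if P ≤ s then s - P else s - P + 1) <
          (if P ≤ Q then Q - P else Q - P + 1) → Cp s := by
        intro s hs h
        refine ⟨j, hdir, ?_⟩
        rwa [hqs, fract_lift x s (p j) P k hs hP hk]
      by_cases hPQ : P ≤ Q
      · rcases hj with hj | hj
        · left
          intro s hs
          exact hj s ⟨hs.1, by linarith [hs.2]⟩
        · right
          intro s hs
          by_cases hsQ : Q ≤ s
          · exact hj s ⟨hsQ, hs.2⟩
          · apply cov s ⟨by linarith [hs.1, hP.1], hs.2⟩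
            rw [if_pos hs.1, if_pos hPQ]; linarith
      · right
        intro s hs
        apply cov s ⟨by linarith [hs.1, hP.1], hs.2⟩
        rw [if_pos hs.1, if_neg hPQ]; linarith [hs.2, hQ.1]
    · have cov : ∀ s ∈ Ico x (x + 1), (if Q ≤ s then s - Q else s - Q + 1) <
          (if Q ≤ P then P - Q else P - Q + 1) → Cm s := by
        intro s hs h
        refine ⟨j, hdir, ?_⟩
        rwa [hps, fract_lift x s (q j) Q m hs hQ hm]
      by_cases hPQ : Q ≤ P
      · rcases hj with hj | hj
        · left
          intro s hs
          by_cases hsQ : Q ≤ s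
          · apply cov s ⟨hs.1, by linarith [hs.2, hP.2]⟩
            rw [if_pos hsQ, if_pos hPQ]; linarith [hs.2]
          · exact hj s ⟨hs.1, not_le.1 hsQ⟩
        · right
          intro s hs
          exact hj s ⟨by linarith [hs.1], hs.2⟩
      · left
        intro s hs
        apply cov s ⟨hs.1, by linarith [hs.2, hP.2]⟩
        rw [if_neg (by linarith [hs.2]), if_neg hPQ]; linarith [hs.2]
  have hr : D (x + Int.fract (p r - x)) := by
    apply step
    rw [hq, if_pos rfl, sub_self, Int.fract_zero, add_zero]
    left
    intro s hs
    exact absurd hs.2 (not_lt.2 hs.1)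
  have main : ∀ n j, g^[n] j = r → D (x + Int.fract (p j - x)) := by
    intro n
    induction n with
    | zero => intro j hj; simp only [Function.iterate_zero, id] at hj; rw [hj]; exact hr
    | succ n ih =>
      intro j hj
      by_cases h : j = r
      · rw [h]; exact hr
      · rw [Function.iterate_succ_apply] at hj
        apply step
        rw [hq, if_neg h]
        exact ih _ hj
  obtain ⟨n, hn⟩ := hreach j
  exact main n j hn

noncomputable def cost (F : ℝ → ℝ) (u v : ℝ) : ℝ :=
  min (∫ s in u..(u + Int.fract (v - u)), max (F s) 0)
    (∫ s in v..(v + Int.fract (u - v)), max (-F s) 0)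

theorem lower (F : ℝ → ℝ) (hF : Continuous F) (hper : Function.Periodic F 1)
    {ℓ : ℕ} (x : ℝ) (p q : Fin ℓ → ℝ) (g : Fin ℓ → Fin ℓ) (r : Fin ℓ)
    (hgap : ∀ U T : ℝ, U ≤ T → (∀ (i : Fin ℓ) (k : ℤ), p i + k ∉ Ioo U T) →
      ∃ Y ∈ Icc U T, (∀ s ∈ Ico U Y, 0 ≤ F s) ∧ (∀ s ∈ Ioo Y T, F s ≤ 0))
    (hq : ∀ j, q j = if j = r then x else p (g j))
    (hreach : ∀ j, ∃ n, g^[n] j = r) :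
    ∃ Y ∈ Icc x (x + 1), (∫ s in x..Y, max (-F s) 0) + (∫ s in Y..(x + 1), max (F s) 0)
      ≤ ∑ j, cost F (p j) (q j) := by
  classical
  set fp : ℝ → ℝ := fun s => max (F s) 0 with hfp
  set fm : ℝ → ℝ := fun s => max (-F s) 0 with hfm
  have cfp : Continuous fp := by fun_prop
  have cfm : Continuous fm := by fun_prop
  have pfp : Function.Periodic fp 1 := fun s => by simp only [hfp, hper s]
  have pfm : Function.Periodic fm 1 := fun s => by simp only [hfm, hper s]
  have nfp : ∀ s, 0 ≤ fp s := fun s => le_max_right _ _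
  have nfm : ∀ s, 0 ≤ fm s := fun s => le_max_right _ _
  set dir : Fin ℓ → Prop := fun j => (∫ s in (p j)..(p j + Int.fract (q j - p j)), fp s) ≤
    (∫ s in (q j)..(q j + Int.fract (p j - q j)), fm s) with hdir
  set h : Fin ℓ → ℝ → ℝ := fun j => if dir j
    then indicator {s | Int.fract (s - p j) < Int.fract (q j - p j)} fp
    else indicator {s | Int.fract (s - q j) < Int.fract (p j - q j)} fm with hh
  have hint : ∀ j c e, IntervalIntegrable (h j) MeasureTheory.volume c e := by
    intro j c e
    simp only [hh]
    split_ifs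
    · exact arc_ind_integrable fp cfp _ _ _ _
    · exact arc_ind_integrable fm cfm _ _ _ _
  have hcost : ∀ j, cost F (p j) (q j) = ∫ s in x..(x + 1), h j s := by
    intro j
    by_cases hd : dir j
    · simp only [hh, if_pos hd]
      rw [← arc_eq fp pfp, cost]
      exact min_eq_left hd
    · simp only [hh, if_neg hd]
      rw [← arc_eq fm pfm, cost]
      exact min_eq_right (not_le.1 hd).le
  have hnn : ∀ j s, 0 ≤ h j s := by
    intro j s
    simp only [hh]
    split_ifs
    · exact indicator_nonneg (fun s _ => nfp s) s
    · exact indicator_nonneg (fun s _ => nfm s) s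
  have hcov := cover x p q g r hq hreach dir
  have hCm : ∀ s, (∃ j, ¬ dir j ∧ Int.fract (s - q j) < Int.fract (p j - q j)) →
      fm s ≤ ∑ j, h j s := by
    rintro s ⟨j, hj, hj2⟩
    have : h j s = fm s := by
      simp only [hh, if_neg hj]
      exact indicator_of_mem (s := {s | Int.fract (s - q j) < Int.fract (p j - q j)}) hj2 fm
    rw [← this]
    exact Finset.single_le_sum (f := fun j => h j s) (fun j _ => hnn j s) (Finset.mem_univ j)
  have hCp : ∀ s, (∃ j, dir j ∧ Int.fract (s - p j) < Int.fract (q j - p j)) →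
      fp s ≤ ∑ j, h j s := by
    rintro s ⟨j, hj, hj2⟩
    have : h j s = fp s := by
      simp only [hh, if_pos hj]
      exact indicator_of_mem (s := {s | Int.fract (s - p j) < Int.fract (q j - p j)}) hj2 fp
    rw [← this]
    exact Finset.single_le_sum (f := fun j => h j s) (fun j _ => hnn j s) (Finset.mem_univ j)
  set P : Fin ℓ → ℝ := fun j => x + Int.fract (p j - x) with hP
  have hPm : ∀ j, P j ∈ Ico x (x + 1) := fun j => lift_mem x (p j)
  obtain ⟨U, hU, hUmax⟩ := (insert x ((Finset.univ.filter fun j => ∀ s ∈ Ico x (P j),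
    fm s ≤ ∑ j, h j s).image P)).exists_max_image id ⟨x, Finset.mem_insert_self _ _⟩
  have hxU : x ≤ U := hUmax x (Finset.mem_insert_self _ _)
  have hU2 : U < x + 1 ∧ ∀ s ∈ Ico x U, fm s ≤ ∑ j, h j s := by
    rcases Finset.mem_insert.1 hU with rfl | hU
    · exact ⟨by linarith, fun s hs => absurd hs.2 (not_lt.2 hs.1)⟩
    · obtain ⟨j, hj, rfl⟩ := Finset.mem_image.1 hU
      exact ⟨(hPm j).2, (Finset.mem_filter.1 hj).2⟩
  have hUj : ∀ j, U < P j → ∀ s ∈ Ico (P j) (x + 1), fp s ≤ ∑ j, h j s := by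
    intro j hj
    rcases hcov j with h1 | h1
    · have := hUmax (P j) (Finset.mem_insert_of_mem (Finset.mem_image_of_mem P
        (Finset.mem_filter.2 ⟨Finset.mem_univ j, fun s hs => hCm s (h1 s hs)⟩)))
      simp only [id] at this
      linarith
    · exact fun s hs => hCp s (h1 s hs)
  obtain ⟨T, hT, hTmin⟩ := (insert (x + 1) ((Finset.univ.filter fun j => U < P j).image
    P)).exists_min_image id ⟨x + 1, Finset.mem_insert_self _ _⟩
  have hTx : T ≤ x + 1 := hTmin (x + 1) (Finset.mem_insert_self _ _)
  have hT2 : U < T ∧ ∀ s ∈ Ico T (x + 1), fp s ≤ ∑ j, h j s := by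
    rcases Finset.mem_insert.1 hT with rfl | hT
    · exact ⟨hU2.1, fun s hs => absurd hs.2 (not_lt.2 hs.1)⟩
    · obtain ⟨j, hj, rfl⟩ := Finset.mem_image.1 hT
      have hj := (Finset.mem_filter.1 hj).2
      exact ⟨hj, hUj j hj⟩
  obtain ⟨Y, hY, hY1, hY2⟩ := hgap U T hT2.1.le (by
    intro i k hik
    have h1 : P i = p i + k := lift_unique x (p i) k ⟨by linarith [hik.1], by linarith [hik.2]⟩
    have := hTmin (P i) (Finset.mem_insert_of_mem (Finset.mem_image_of_mem P
        (Finset.mem_filter.2 ⟨Finset.mem_univ i, by rw [h1]; exact hik.1⟩)))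
    simp only [id] at this
    linarith [hik.2])
  have hsn : ∀ s, 0 ≤ ∑ j, h j s := fun s => Finset.sum_nonneg fun j _ => hnn j s
  have hsint : ∀ c e, IntervalIntegrable (fun s => ∑ j, h j s) MeasureTheory.volume c e := by
    intro c e
    have e1 : (fun s => ∑ j, h j s) = ∑ j, h j := by ext s; simp
    rw [e1]
    exact IntervalIntegrable.sum (μ := MeasureTheory.volume) (a := c) (b := e)
      Finset.univ (f := h) (fun j _ => hint j c e)
  refine ⟨Y, ⟨by linarith [hY.1], by linarith [hY.2]⟩, ?_⟩
  have hs : ∑ j, cost F (p j) (q j) = ∫ s in x..(x + 1), ∑ j, h j s := by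
    rw [intervalIntegral.integral_finsetSum fun j _ => hint j _ _]
    exact Finset.sum_congr rfl fun j _ => hcost j
  rw [hs, ← intervalIntegral.integral_add_adjacent_intervals (hsint x Y) (hsint Y (x + 1))]
  apply add_le_add
  · apply intervalIntegral.integral_mono_on_of_le_Ioo (by linarith [hY.1])
      (cfm.intervalIntegrable _ _) (hsint _ _)
    intro s hs
    rcases lt_or_ge s U with h1 | h1
    · exact hU2.2 s ⟨hs.1.le, h1⟩
    · have : fm s = 0 := max_eq_right (by linarith [hY1 s ⟨h1, hs.2⟩])
      change fm s ≤ _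
      rw [this]; exact hsn s
  · apply intervalIntegral.integral_mono_on_of_le_Ioo (by linarith [hY.2])
      (cfp.intervalIntegrable _ _) (hsint _ _)
    intro s hs
    rcases lt_or_ge s T with h1 | h1
    · have : fp s = 0 := max_eq_right (hY2 s ⟨hs.1, h1⟩)
      change fp s ≤ _
      rw [this]; exact hsn s
    · exact hT2.2 s ⟨h1, hs.2⟩

theorem sum_pieces (F : ℝ → ℝ) (hF : Continuous F) {ℓ : ℕ} (x y : ℝ) (hy : y ∈ Icc x (x + 1))
    (P L R : Fin ℓ → ℝ) (hinj : Function.Injective P)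
    (hL : ∀ j, x ≤ L j ∧ L j ≤ P j) (hR : ∀ j, P j ≤ R j ∧ R j ≤ x + 1)
    (hsep : ∀ j h, P j < P h → P j ≤ L h ∧ R j ≤ P h) :
    (∑ j, if P j ≤ y then ∫ s in (L j)..(P j), max (-F s) 0 else ∫ s in (P j)..(R j), max (F s) 0)
      ≤ (∫ s in x..y, max (-F s) 0) + (∫ s in y..(x + 1), max (F s) 0) := by
  classical
  set fp : ℝ → ℝ := fun s => max (F s) 0 with hfp
  set fm : ℝ → ℝ := fun s => max (-F s) 0 with hfm
  have cfp : Continuous fp := by fun_prop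
  have cfm : Continuous fm := by fun_prop
  have nfp : ∀ s, 0 ≤ fp s := fun s => le_max_right _ _
  have nfm : ∀ s, 0 ≤ fm s := fun s => le_max_right _ _
  set H : ℝ → ℝ := fun s => if s ≤ y then fm s else fp s with hH
  have nH : ∀ s, 0 ≤ H s := fun s => by simp only [hH]; split_ifs; exacts [nfm s, nfp s]
  have iH1 : MeasureTheory.IntegrableOn H (Ioc x y) := by
    refine MeasureTheory.IntegrableOn.congr_fun ((cfm.intervalIntegrable x y).1)
      (fun s hs => ?_) measurableSet_Ioc
    simp only [hH, if_pos hs.2]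
  have iH2 : MeasureTheory.IntegrableOn H (Ioc y (x + 1)) := by
    refine MeasureTheory.IntegrableOn.congr_fun ((cfp.intervalIntegrable y (x + 1)).1)
      (fun s hs => ?_) measurableSet_Ioc
    simp only [hH, if_neg (not_le.2 hs.1)]
  have iH : MeasureTheory.IntegrableOn H (Ioc x (x + 1)) := by
    rw [← Ioc_union_Ioc_eq_Ioc hy.1 hy.2]
    exact iH1.union iH2
  set I : Fin ℓ → Set ℝ := fun j => if P j ≤ y then Ioc (L j) (P j) else Ioc (P j) (R j) with hI
  have mI : ∀ j, MeasurableSet (I j) := fun j => by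
    simp only [hI]; split_ifs <;> exact measurableSet_Ioc
  have sI : ∀ j, I j ⊆ Ioc x (x + 1) := fun j => by
    simp only [hI]
    have h1 := hL j
    have h2 := hR j
    split_ifs
    · exact Ioc_subset_Ioc h1.1 (by linarith)
    · exact Ioc_subset_Ioc (by linarith) h2.2
  have hlt : ∀ j h, P j < P h → Disjoint (I j) (I h) := by
    intro j h hjh
    have hs := hsep j h hjh
    rw [Set.disjoint_left]
    intro s
    simp only [hI]
    split_ifs
    · intro h1 h2; linarith [h1.2, h2.1]
    · intro h1 h2; linarith [h1.2, h2.1]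
    · intro h1 h2; linarith
    · intro h1 h2; linarith [h1.2, h2.1]
  have hdis : Pairwise (fun i j => Disjoint (I i) (I j)) := by
    intro j h hjh
    rcases lt_or_gt_of_ne (fun e => hjh (hinj e)) with h1 | h1
    · exact hlt j h h1
    · exact (hlt h j h1).symm
  have e1 : ∀ j, (if P j ≤ y then ∫ s in (L j)..(P j), fm s else ∫ s in (P j)..(R j), fp s)
      = ∫ s in I j, H s := by
    intro j
    simp only [hI]
    split_ifs with h
    · rw [intervalIntegral.integral_of_le (hL j).2]
      refine MeasureTheory.setIntegral_congr_fun measurableSet_Ioc fun s hs => ?_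
      simp only [hH, if_pos (hs.2.trans h)]
    · rw [intervalIntegral.integral_of_le (hR j).1]
      refine MeasureTheory.setIntegral_congr_fun measurableSet_Ioc fun s hs => ?_
      simp only [hH, if_neg (not_le.2 ((not_le.1 h).trans hs.1))]
  have e2 : (∫ s in x..y, fm s) + (∫ s in y..(x + 1), fp s) = ∫ s in Ioc x (x + 1), H s := by
    rw [← Ioc_union_Ioc_eq_Ioc hy.1 hy.2,
      MeasureTheory.setIntegral_union (Ioc_disjoint_Ioc_of_le le_rfl) measurableSet_Ioc iH1 iH2,
      intervalIntegral.integral_of_le hy.1, intervalIntegral.integral_of_le hy.2]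
    congr 1
    · refine MeasureTheory.setIntegral_congr_fun measurableSet_Ioc fun s hs => ?_
      simp only [hH, if_pos hs.2]
    · refine MeasureTheory.setIntegral_congr_fun measurableSet_Ioc fun s hs => ?_
      simp only [hH, if_neg (not_le.2 hs.1)]
  rw [e2, Finset.sum_congr rfl fun j _ => e1 j,
    ← MeasureTheory.integral_iUnion_fintype mI hdis (fun j => iH.mono_set (sI j))]
  exact MeasureTheory.setIntegral_mono_set iH (Eventually.of_forall nH)
    (LE.le.eventuallyLE (iUnion_subset sI))

theorem upper (F : ℝ → ℝ) (hF : Continuous F) (hper : Function.Periodic F 1)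
    {ℓ : ℕ} (x y : ℝ) (hy : y ∈ Icc x (x + 1)) (p : Fin ℓ → ℝ) (hne : Nonempty (Fin ℓ))
    (hgap : ∀ U T : ℝ, U ≤ T → (∀ (i : Fin ℓ) (k : ℤ), p i + k ∉ Ioo U T) →
      ∃ Y ∈ Icc U T, (∀ s ∈ Ico U Y, 0 ≤ F s) ∧ (∀ s ∈ Ioo Y T, F s ≤ 0))
    (hinj : Function.Injective fun j => x + Int.fract (p j - x)) :
    ∃ (r : Fin ℓ) (g : Fin ℓ → Fin ℓ), (∀ j, ∃ n, g^[n] j = r) ∧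
      (∑ j, cost F (p j) (if j = r then x else p (g j))) ≤
        (∫ s in x..y, max (-F s) 0) + (∫ s in y..(x + 1), max (F s) 0) := by
  classical
  set fp : ℝ → ℝ := fun s => max (F s) 0 with hfp
  set fm : ℝ → ℝ := fun s => max (-F s) 0 with hfm
  have cfp : Continuous fp := by fun_prop
  have cfm : Continuous fm := by fun_prop
  have pfp : Function.Periodic fp 1 := fun s => by simp only [hfp, hper s]
  have pfm : Function.Periodic fm 1 := fun s => by simp only [hfm, hper s]
  have nfp : ∀ s, 0 ≤ fp s := fun s => le_max_right _ _
  have nfm : ∀ s, 0 ≤ fm s := fun s => le_max_right _ _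
  set P : Fin ℓ → ℝ := fun j => x + Int.fract (p j - x) with hP
  have hPm : ∀ j, P j ∈ Ico x (x + 1) := fun j => lift_mem x (p j)
  have hPe : ∀ j, ∃ k : ℤ, P j = p j + k := fun j => lift_eq x (p j)
  choose K hK using hPe
  have hpv : ∀ j, ∃ h, (∀ m, P j ≤ P m) ∨ (P h < P j ∧ ∀ m, P m < P j → P m ≤ P h) := by
    intro j
    by_cases hj : ∀ m, P j ≤ P m
    · exact ⟨j, Or.inl hj⟩
    · push Not at hj
      obtain ⟨m, hm⟩ := hj
      obtain ⟨h, h1, h2⟩ := (Finset.univ.filter fun m => P m < P j).exists_max_image P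
        ⟨m, Finset.mem_filter.2 ⟨Finset.mem_univ _, hm⟩⟩
      exact ⟨h, Or.inr ⟨(Finset.mem_filter.1 h1).2,
        fun m hm => h2 m (Finset.mem_filter.2 ⟨Finset.mem_univ _, hm⟩)⟩⟩
  have hnx : ∀ j, ∃ h, (∀ m, P m ≤ P j) ∨ (P j < P h ∧ ∀ m, P j < P m → P h ≤ P m) := by
    intro j
    by_cases hj : ∀ m, P m ≤ P j
    · exact ⟨j, Or.inl hj⟩
    · push Not at hj
      obtain ⟨m, hm⟩ := hj
      obtain ⟨h, h1, h2⟩ := (Finset.univ.filter fun m => P j < P m).exists_min_image P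
        ⟨m, Finset.mem_filter.2 ⟨Finset.mem_univ _, hm⟩⟩
      exact ⟨h, Or.inr ⟨(Finset.mem_filter.1 h1).2,
        fun m hm => h2 m (Finset.mem_filter.2 ⟨Finset.mem_univ _, hm⟩)⟩⟩
  choose pv hpv using hpv
  choose nx hnx using hnx
  obtain ⟨imin, -, hmin⟩ := Finset.univ.exists_min_image P Finset.univ_nonempty
  obtain ⟨imax, -, hmax⟩ := Finset.univ.exists_max_image P Finset.univ_nonempty
  replace hmin : ∀ m, P imin ≤ P m := fun m => hmin m (Finset.mem_univ m)
  replace hmax : ∀ m, P m ≤ P imax := fun m => hmax m (Finset.mem_univ m)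
  have hpv' : ∀ j, j ≠ imin → P (pv j) < P j ∧ ∀ m, P m < P j → P m ≤ P (pv j) := by
    intro j hj
    rcases hpv j with h | h
    · exact absurd (hinj (le_antisymm (h imin) (hmin j))) hj
    · exact h
  have hnx' : ∀ j, j ≠ imax → P j < P (nx j) ∧ ∀ m, P j < P m → P (nx j) ≤ P m := by
    intro j hj
    rcases hnx j with h | h
    · exact absurd (hinj (le_antisymm (hmax j) (h imax))) hj
    · exact h
  set L : Fin ℓ → ℝ := fun j => if j = imin then x else P (pv j) with hLdef
  set R : Fin ℓ → ℝ := fun j => if j = imax then x + 1 else P (nx j) with hRdef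
  have hL : ∀ j, x ≤ L j ∧ L j ≤ P j := by
    intro j
    simp only [hLdef]
    split_ifs with h
    · exact ⟨le_rfl, (hPm j).1⟩
    · exact ⟨(hPm _).1, (hpv' j h).1.le⟩
  have hR : ∀ j, P j ≤ R j ∧ R j ≤ x + 1 := by
    intro j
    simp only [hRdef]
    split_ifs with h
    · exact ⟨(hPm j).2.le, le_rfl⟩
    · exact ⟨(hnx' j h).1.le, (hPm _).2.le⟩
  have hsep : ∀ j h, P j < P h → P j ≤ L h ∧ R j ≤ P h := by
    intro j h hjh
    have h1 : h ≠ imin := by rintro rfl; linarith [hmin j]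
    have h2 : j ≠ imax := by rintro rfl; linarith [hmax h]
    simp only [hLdef, hRdef, if_neg h1, if_neg h2]
    exact ⟨(hpv' h h1).2 j hjh, (hnx' j h2).2 h hjh⟩
  have hsum := sum_pieces F hF x y hy P L R hinj hL hR hsep
  -- cost bounds
  have cp : ∀ (u v u' v' : ℝ) (k m : ℤ), u' = u + k → v' = v + m → u' ≤ v' → v' ≤ u' + 1 →
      cost F u v ≤ ∫ s in u'..v', fp s := fun u v u' v' k m h1 h2 h3 h4 =>
    (min_le_left _ _).trans (arc_le fp pfp nfp u v u' v' k m h1 h2 h3 h4)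
  have cm : ∀ (u v u' v' : ℝ) (k m : ℤ), u' = u + k → v' = v + m → v' ≤ u' → u' ≤ v' + 1 →
      cost F u v ≤ ∫ s in v'..u', fm s := fun u v u' v' k m h1 h2 h3 h4 =>
    (min_le_right _ _).trans (arc_le fm pfm nfm v u v' u' m k h2 h1 h3 h4)
  have cpv : ∀ j, j ≠ imin → cost F (p j) (p (pv j)) ≤ ∫ s in (L j)..(P j), fm s := by
    intro j hj
    simp only [hLdef, if_neg hj]
    exact cm _ _ _ _ (K j) (K (pv j)) (hK _) (hK _) (hpv' j hj).1.le
      (by linarith [(hPm j).2, (hPm (pv j)).1])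
  have cnx : ∀ j, j ≠ imax → cost F (p j) (p (nx j)) ≤ ∫ s in (P j)..(R j), fp s := by
    intro j hj
    simp only [hRdef, if_neg hj]
    exact cp _ _ _ _ (K j) (K (nx j)) (hK _) (hK _) (hnx' j hj).1.le
      (by linarith [(hPm j).1, (hPm (nx j)).2])
  have cminx : cost F (p imin) x ≤ ∫ s in (L imin)..(P imin), fm s := by
    simp only [hLdef, if_true]
    exact cm _ _ _ _ (K imin) 0 (hK _) (by simp) (hPm _).1 (hPm _).2.le
  have cmaxx : cost F (p imax) x ≤ ∫ s in (P imax)..(R imax), fp s := by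
    simp only [hRdef, if_true]
    exact cp _ _ _ _ (K imax) 1 (hK _) (by simp) (hPm _).2.le (by linarith [(hPm imax).1])
  have wlt : WellFounded (fun j h : Fin ℓ => P j < P h) := by
    have : IsTrans (Fin ℓ) (fun j h => P j < P h) := ⟨fun _ _ _ h1 h2 => lt_trans h1 h2⟩
    have : Std.Irrefl (fun j h : Fin ℓ => P j < P h) := ⟨fun _ h => lt_irrefl _ h⟩
    exact Finite.wellFounded_of_trans_of_irrefl _
  have wgt : WellFounded (fun j h : Fin ℓ => P h < P j) := by
    have : IsTrans (Fin ℓ) (fun j h => P h < P j) := ⟨fun _ _ _ h1 h2 => lt_trans h2 h1⟩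
    have : Std.Irrefl (fun j h : Fin ℓ => P h < P j) := ⟨fun _ h => lt_irrefl _ h⟩
    exact Finite.wellFounded_of_trans_of_irrefl _
  -- the two cases
  have caseA : y < P imax → ((∀ j, y < P j) ∨ ∀ s ∈ Ico (P imax - 1) x, 0 ≤ F s) →
      ∃ (r : Fin ℓ) (g : Fin ℓ → Fin ℓ), (∀ j, ∃ n, g^[n] j = r) ∧
      (∑ j, cost F (p j) (if j = r then x else p (g j))) ≤
        (∫ s in x..y, fm s) + (∫ s in y..(x + 1), fp s) := by
    intro hy1 hsign
    refine ⟨imax, fun j => if P j ≤ y then (if j = imin then imax else pv j) else nx j, ?_, ?_⟩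
    · set g : Fin ℓ → Fin ℓ :=
        fun j => if P j ≤ y then (if j = imin then imax else pv j) else nx j with hg
      have r1 : ∀ j, y < P j → ∃ n, g^[n] j = imax := by
        intro j
        induction j using wgt.induction with
        | _ j ih =>
          intro hj
          by_cases h : j = imax
          · exact ⟨0, h⟩
          · have hgj : g j = nx j := by simp only [hg, if_neg (not_le.2 hj)]
            have := (hnx' j h).1
            obtain ⟨n, hn⟩ := ih (nx j) this (hj.trans this)
            exact ⟨n + 1, by rw [Function.iterate_succ_apply, hgj, hn]⟩
      intro j
      induction j using wlt.induction with
      | _ j ih =>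
        by_cases hj : P j ≤ y
        · by_cases h : j = imin
          · exact ⟨1, by simp only [Function.iterate_one, hg, if_pos hj, if_pos h]⟩
          · have hgj : g j = pv j := by simp only [hg, if_pos hj, if_neg h]
            obtain ⟨n, hn⟩ := ih (pv j) (hpv' j h).1
            exact ⟨n + 1, by rw [Function.iterate_succ_apply, hgj, hn]⟩
        · exact r1 j (not_le.1 hj)
    · refine le_trans (Finset.sum_le_sum fun j _ => ?_) hsum
      by_cases hr : j = imax
      · rw [if_pos hr, hr, if_neg (not_le.2 hy1)]; exact cmaxx
      · rw [if_neg hr]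
        by_cases hj : P j ≤ y
        · simp only [if_pos hj]
          by_cases h : j = imin
          · have hs : ∀ s ∈ Ico (P imax - 1) x, 0 ≤ F s := by
              rcases hsign with h1 | h1
              · linarith [h1 j]
              · exact h1
            rw [if_pos h]
            have e0 : L j = x := by simp only [hLdef, if_pos h]
            rw [e0]
            have c1 := cm (p j) (p imax) (P j) (P imax - 1) (K j) (K imax - 1) (hK _)
              (by rw [hK imax]; push_cast; ring) (by linarith [(hPm j).1, (hPm imax).2])
              (by linarith [hmax j])
            rw [← intervalIntegral.integral_add_adjacent_intervals
              (cfm.intervalIntegrable (P imax - 1) x) (cfm.intervalIntegrable x (P j))] at c1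
            have z1 : ∫ s in (P imax - 1)..x, fm s ≤ ∫ s in (P imax - 1)..x, (0 : ℝ) := by
              apply intervalIntegral.integral_mono_on_of_le_Ioo (by linarith [(hPm imax).2])
                (cfm.intervalIntegrable _ _) (by simp)
              intro s hs'
              exact max_le (by linarith [hs s ⟨hs'.1.le, hs'.2⟩]) le_rfl
            rw [intervalIntegral.integral_zero] at z1
            linarith
          · rw [if_neg h]; exact cpv j h
        · simp only [if_neg hj]; exact cnx j hr
  have caseB : P imin ≤ y → ((∀ j, P j ≤ y) ∨ ∀ s ∈ Ioo x (P imin), F s ≤ 0) →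
      ∃ (r : Fin ℓ) (g : Fin ℓ → Fin ℓ), (∀ j, ∃ n, g^[n] j = r) ∧
      (∑ j, cost F (p j) (if j = r then x else p (g j))) ≤
        (∫ s in x..y, fm s) + (∫ s in y..(x + 1), fp s) := by
    intro hy1 hsign
    refine ⟨imin, fun j => if P j ≤ y then pv j else (if j = imax then imin else nx j), ?_, ?_⟩
    · set g : Fin ℓ → Fin ℓ :=
        fun j => if P j ≤ y then pv j else (if j = imax then imin else nx j) with hg
      have r1 : ∀ j, P j ≤ y → ∃ n, g^[n] j = imin := by
        intro j
        induction j using wlt.induction with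
        | _ j ih =>
          intro hj
          by_cases h : j = imin
          · exact ⟨0, h⟩
          · have hgj : g j = pv j := by simp only [hg, if_pos hj]
            have := (hpv' j h).1
            obtain ⟨n, hn⟩ := ih (pv j) this (this.le.trans hj)
            exact ⟨n + 1, by rw [Function.iterate_succ_apply, hgj, hn]⟩
      intro j
      induction j using wgt.induction with
      | _ j ih =>
        by_cases hj : P j ≤ y
        · exact r1 j hj
        · by_cases h : j = imax
          · exact ⟨1, by simp only [Function.iterate_one, hg, if_neg hj, if_pos h]⟩
          · have hgj : g j = nx j := by simp only [hg, if_neg hj, if_neg h]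
            obtain ⟨n, hn⟩ := ih (nx j) (hnx' j h).1
            exact ⟨n + 1, by rw [Function.iterate_succ_apply, hgj, hn]⟩
    · refine le_trans (Finset.sum_le_sum fun j _ => ?_) hsum
      by_cases hr : j = imin
      · rw [if_pos hr, hr, if_pos hy1]; exact cminx
      · rw [if_neg hr]
        by_cases hj : P j ≤ y
        · simp only [if_pos hj]; exact cpv j hr
        · simp only [if_neg hj]
          by_cases h : j = imax
          · have hs : ∀ s ∈ Ioo x (P imin), F s ≤ 0 := by
              rcases hsign with h1 | h1
              · linarith [h1 j]
              · exact h1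
            rw [if_pos h]
            have e0 : R j = x + 1 := by simp only [hRdef, if_pos h]
            rw [e0]
            have c1 := cp (p j) (p imin) (P j) (P imin + 1) (K j) (K imin + 1) (hK _)
              (by rw [hK imin]; push_cast; ring) (by linarith [(hPm j).2, (hPm imin).1])
              (by linarith [hmin j])
            rw [← intervalIntegral.integral_add_adjacent_intervals
              (cfp.intervalIntegrable (P j) (x + 1))
              (cfp.intervalIntegrable (x + 1) (P imin + 1))] at c1
            have z1 : ∫ s in (x + 1)..(P imin + 1), fp s ≤
                ∫ s in (x + 1)..(P imin + 1), (0 : ℝ) := by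
              apply intervalIntegral.integral_mono_on_of_le_Ioo (by linarith [(hPm imin).1])
                (cfp.intervalIntegrable _ _) (by simp)
              intro s hs'
              have h3 := hs (s - 1) ⟨by linarith [hs'.1], by linarith [hs'.2]⟩
              have h4 := hper (s - 1)
              rw [sub_add_cancel] at h4
              exact max_le (by linarith) le_rfl
            rw [intervalIntegral.integral_zero] at z1
            linarith
          · rw [if_neg h]; exact cnx j h
  by_cases h1 : P imax ≤ y
  · exact caseB ((hmin imax).trans h1) (Or.inl fun j => (hmax j).trans h1)
  by_cases h2 : y < P imin
  · exact caseA (not_le.1 h1) (Or.inl fun j => h2.trans_le (hmin j))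
  obtain ⟨Y, hY, hY1, hY2⟩ := hgap (P imax - 1) (P imin)
    (by linarith [(hPm imax).2, (hPm imin).1]) (by
      intro i k hik
      have h3 := hmin i
      have h4 := hmax i
      rw [hK i] at h3 h4
      have h5 : (k : ℝ) < K i := by linarith [hik.2]
      have h6 : (K i : ℝ) < k + 1 := by linarith [hik.1]
      have h7 : k < K i := by exact_mod_cast h5
      have h8 : K i < k + 1 := by exact_mod_cast h6
      omega)
  rcases le_total x Y with h | h
  · exact caseA (not_le.1 h1) (Or.inr fun s hs => hY1 s ⟨hs.1, by linarith [hs.2]⟩)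
  · exact caseB (not_lt.1 h2) (Or.inr fun s hs => hY2 s ⟨by linarith [hs.1], hs.2⟩)

end Bianca

/-- Proposition `biancaneve`: for every `x ∈ 𝕋` (every lift
`x ∈ ℝ`), `W(x) + max_{y∈[x,x+1]} (S(y) − S(x)) = ∫₀¹ F₊(s) ds`; in particular
the left-hand side does not depend on `x`.

Setting: `F` is continuous and 1-periodic, `S(x) = ∫₀ˣ F`, and the zero set of
`F` on the torus has finitely many connected components. The stable components
`K_i = [a i, b i] ⊆ [0,1)` are listed in (clockwise) order, with representative
points `p i ∈ K_i`; the list is exhaustive (every stable component of `{F = 0}`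
in `ℝ` is an integer translate of some `[a i, b i]`). The clockwise/anticlockwise
arc integrals `V₊, V₋` are realized by lifting the second endpoint into
`[u, u+1)` via `Int.fract`, `V = min(V₊,V₋)`. For each root `i`, directed trees
on `{1,…,ℓ}` oriented towards `i` are encoded as maps `f : Fin ℓ → Fin ℓ`
(`f j` = head of the unique arrow leaving `j`) such that every vertex reaches
`i` by iterating `f`; `W(K_i)` is the minimum over such trees of the sum of
`V(K_j, K_{f j})` over `j ≠ i`, and `W(x) = min_i (W(K_i) + V(K_i, x))`
(when `ℓ = 0` both infima over the empty family equal `0` by convention,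
matching `W ≡ 0`). -/
theorem stmt_17
    (F : ℝ → ℝ) (hF : Continuous F) (hFper : ∀ x, F (x + 1) = F x)
    (S : ℝ → ℝ) (hS : ∀ x, S x = ∫ t in (0:ℝ)..x, F t)
    (hfin : Finite (ConnectedComponents {x : ℝ | F x = 0 ∧ x ∈ Icc (0:ℝ) 1}))
    (ℓ : ℕ) (a b p : Fin ℓ → ℝ)
    (hrange : ∀ i, 0 ≤ a i ∧ a i ≤ b i ∧ b i < 1)
    (hord : ∀ i j : Fin ℓ, i < j → b i < a j)
    (hp : ∀ i, p i ∈ Icc (a i) (b i))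
    (hstable : ∀ i, (∀ x ∈ Icc (a i) (b i), F x = 0) ∧
      ∃ ε > 0, (∀ x ∈ Ico (a i - ε) (a i), F x < 0) ∧
        (∀ x ∈ Ioc (b i) (b i + ε), 0 < F x))
    (hexh : ∀ a' b' : ℝ, a' ≤ b' → (∀ x ∈ Icc a' b', F x = 0) →
      (∃ ε > 0, (∀ x ∈ Ico (a' - ε) a', F x < 0) ∧
        (∀ x ∈ Ioc b' (b' + ε), 0 < F x)) →
      ∃ (i : Fin ℓ) (k : ℤ), a' = a i + k ∧ b' = b i + k)
    (Vp Vm : ℝ → ℝ → ℝ)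
    (hVp : ∀ u v, Vp u v = ∫ s in u..(u + Int.fract (v - u)), max (F s) 0)
    (hVm : ∀ u v, Vm u v = ∫ s in v..(v + Int.fract (u - v)), max (-F s) 0)
    (WK : Fin ℓ → ℝ)
    (hWK : ∀ i, WK i = ⨅ g : {f : Fin ℓ → Fin ℓ // ∀ j, ∃ n, f^[n] j = i},
      ∑ j ∈ Finset.univ.erase i, min (Vp (p j) (p (g.1 j))) (Vm (p j) (p (g.1 j))))
    (W : ℝ → ℝ)
    (hW : ∀ x, W x = ⨅ i : Fin ℓ, (WK i + min (Vp (p i) x) (Vm (p i) x))) :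
    ∀ x : ℝ, W x + sSup ((fun y => S y - S x) '' Icc x (x + 1))
      = ∫ s in (0:ℝ)..1, max (F s) 0 := by
  classical
  have hper : Function.Periodic F 1 := hFper
  have hgap : ∀ U T : ℝ, U ≤ T → (∀ (i : Fin ℓ) (k : ℤ), p i + k ∉ Ioo U T) →
      ∃ Y ∈ Icc U T, (∀ s ∈ Ico U Y, 0 ≤ F s) ∧ (∀ s ∈ Ioo Y T, F s ≤ 0) :=
    Bianca.gap F hF hper hfin a b p hp hexh
  have hcost : ∀ u v, min (Vp u v) (Vm u v) = Bianca.cost F u v := by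
    intro u v; rw [hVp, hVm]; rfl
  simp only [hcost] at hW hWK
  intro x
  have cfp : Continuous fun s => max (F s) 0 := by fun_prop
  have cfm : Continuous fun s => max (-F s) 0 := by fun_prop
  have pfp : Function.Periodic (fun s => max (F s) 0) 1 := fun s => by simp only [hper s]
  have hone : ∫ s in (0:ℝ)..1, max (F s) 0 = ∫ s in x..(x + 1), max (F s) 0 := by
    have := pfp.intervalIntegral_add_eq 0 x
    rwa [zero_add] at this
  rw [hone]
  have hΦ : ∀ y, S y - S x = (∫ s in x..(x + 1), max (F s) 0) -
      ((∫ s in x..y, max (-F s) 0) + (∫ s in y..(x + 1), max (F s) 0)) := by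
    intro y
    rw [hS, hS, intervalIntegral.integral_interval_sub_left (hF.intervalIntegrable _ _)
      (hF.intervalIntegrable _ _),
      ← intervalIntegral.integral_add_adjacent_intervals (cfp.intervalIntegrable x y)
        (cfp.intervalIntegrable y (x + 1))]
    have : ∫ s in x..y, F s = (∫ s in x..y, max (F s) 0) - ∫ s in x..y, max (-F s) 0 := by
      rw [← intervalIntegral.integral_sub (cfp.intervalIntegrable _ _)
        (cfm.intervalIntegrable _ _)]
      congr 1
      ext s
      exact (posPart_sub_negPart (F s)).symm
    rw [this]; ring
  have hinj : Function.Injective fun j => x + Int.fract (p j - x) := by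
    intro i j hij
    simp only [add_right_inj] at hij
    obtain ⟨k, hk⟩ := Int.fract_eq_fract.1 hij
    have hpi := hp i
    have hpj := hp j
    have hri := hrange i
    have hrj := hrange j
    have k1 : (k : ℝ) < 1 := by linarith [hpi.2, hpj.1]
    have k2 : (-1 : ℝ) < k := by linarith [hpi.1, hpj.2]
    have k3 : k < 1 := by exact_mod_cast k1
    have k4 : -1 < k := by exact_mod_cast k2
    have k5 : k = 0 := by omega
    rw [k5] at hk
    push_cast at hk
    rcases lt_trichotomy i j with h | h | h
    · linarith [hord i j h, hpi.2, hpj.1]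
    · exact h
    · linarith [hord j i h, hpi.1, hpj.2]
  have hsplit : ∀ (r : Fin ℓ) (g : Fin ℓ → Fin ℓ),
      ∑ j, Bianca.cost F (p j) (if j = r then x else p (g j)) =
        (∑ j ∈ Finset.univ.erase r, Bianca.cost F (p j) (p (g j))) + Bianca.cost F (p r) x := by
    intro r g
    rw [← Finset.sum_erase_add _ _ (Finset.mem_univ r), if_pos rfl]
    congr 1
    refine Finset.sum_congr rfl fun j hj => ?_
    rw [if_neg (Finset.ne_of_mem_erase hj)]
  have hup : ∀ y ∈ Icc x (x + 1), W x ≤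
      (∫ s in x..y, max (-F s) 0) + (∫ s in y..(x + 1), max (F s) 0) := by
    intro y hy
    rcases isEmpty_or_nonempty (Fin ℓ) with he | hne
    · rw [hW, Real.iInf_of_isEmpty]
      exact add_nonneg
        (intervalIntegral.integral_nonneg hy.1 fun s _ => le_max_right _ _)
        (intervalIntegral.integral_nonneg hy.2 fun s _ => le_max_right _ _)
    · obtain ⟨r, g, hg, hle⟩ := Bianca.upper F hF hper x y hy p hne hgap hinj
      rw [hsplit] at hle
      have h1 : W x ≤ WK r + Bianca.cost F (p r) x := by
        rw [hW]
        exact ciInf_le (Set.finite_range _).bddBelow r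
      have h2 : WK r ≤ ∑ j ∈ Finset.univ.erase r, Bianca.cost F (p j) (p (g j)) := by
        rw [hWK]
        exact ciInf_le (Set.finite_range fun g : {f : Fin ℓ → Fin ℓ // ∀ j, ∃ n, f^[n] j = r} =>
          ∑ j ∈ Finset.univ.erase r, Bianca.cost F (p j) (p (g.1 j))).bddBelow ⟨g, hg⟩
      linarith
  have hlow : ∃ Y ∈ Icc x (x + 1),
      (∫ s in x..Y, max (-F s) 0) + (∫ s in Y..(x + 1), max (F s) 0) ≤ W x := by
    rcases isEmpty_or_nonempty (Fin ℓ) with he | hne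
    · obtain ⟨Y, hY, hY1, hY2⟩ := hgap x (x + 1) (by linarith) (fun i => isEmptyElim i)
      refine ⟨Y, hY, ?_⟩
      rw [hW, Real.iInf_of_isEmpty]
      have z1 : ∫ s in x..Y, max (-F s) 0 ≤ ∫ s in x..Y, (0 : ℝ) := by
        apply intervalIntegral.integral_mono_on_of_le_Ioo hY.1
          (cfm.intervalIntegrable _ _) (by simp)
        intro s hs
        exact max_le (by linarith [hY1 s ⟨hs.1.le, hs.2⟩]) le_rfl
      have z2 : ∫ s in Y..(x + 1), max (F s) 0 ≤ ∫ s in Y..(x + 1), (0 : ℝ) := by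
        apply intervalIntegral.integral_mono_on_of_le_Ioo hY.2
          (cfp.intervalIntegrable _ _) (by simp)
        intro s hs
        exact max_le (hY2 s hs) le_rfl
      rw [intervalIntegral.integral_zero] at z1 z2
      linarith
    · obtain ⟨r, hr⟩ := exists_eq_ciInf_of_finite
        (f := fun i : Fin ℓ => WK i + Bianca.cost F (p i) x)
      have : Nonempty {f : Fin ℓ → Fin ℓ // ∀ j, ∃ n, f^[n] j = r} :=
        ⟨⟨fun _ => r, fun j => ⟨1, rfl⟩⟩⟩
      obtain ⟨g, hg⟩ := exists_eq_ciInf_of_finite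
        (f := fun g : {f : Fin ℓ → Fin ℓ // ∀ j, ∃ n, f^[n] j = r} =>
          ∑ j ∈ Finset.univ.erase r, Bianca.cost F (p j) (p (g.1 j)))
      obtain ⟨Y, hY, hle⟩ := Bianca.lower F hF hper x p
        (fun j => if j = r then x else p (g.1 j)) g.1 r hgap (fun j => rfl) g.2
      refine ⟨Y, hY, hle.trans ?_⟩
      rw [hsplit, hW, ← hr, hWK]
      exact add_le_add_left hg.le _
  have hmax : IsGreatest ((fun y => S y - S x) '' Icc x (x + 1))
      ((∫ s in x..(x + 1), max (F s) 0) - W x) := by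
    constructor
    · obtain ⟨Y, hY, hle⟩ := hlow
      refine ⟨Y, hY, ?_⟩
      simp only [hΦ Y]
      rw [le_antisymm hle (hup Y hY)]
    · rintro _ ⟨y, hy, rfl⟩
      simp only [hΦ y]
      linarith [hup y hy]
  rw [hmax.csSup_eq]
  ring
end

section
/- Suppose ℓ ≥ 2. For indices i, j ∈ {1,…,ℓ} (mod ℓ) set t(i,j) = V₋(K_j, K_i) + V₊(K_{j+1}, K_i). Then W(K_i) = min_{1≤j≤ℓ} t(i,j). Moreover, t(i,J) = min_{1≤j≤ℓ} t(i,j) holds if and only if ΔS(K_i, A_J) = max_{y∈[x̄, x̄+1]} (S(y) − S(x̄)) for some (equivalently, every) x̄ ∈ ℝ whose projection lies in K_i. -/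
open Set Filter Topology


/-- Generic isolation lemma: finitely many components means that near a zero the zero set is one component. -/
lemma aux_iso (F : ℝ → ℝ)
    (hfin : Finite (ConnectedComponents {x : ℝ | F x = 0 ∧ x ∈ Icc (0:ℝ) 1}))
    (x : ℝ) (hx : F x = 0) (hx1 : x ∈ Icc (0:ℝ) 1) :
    ∃ ε > 0, ∀ y ∈ Icc (0:ℝ) 1, |y - x| < ε → F y = 0 → ∀ z ∈ uIcc x y, F z = 0 := by
  set X := {x : ℝ | F x = 0 ∧ x ∈ Icc (0:ℝ) 1} with hX
  let x0 : X := ⟨x, hx, hx1⟩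
  have hopen : IsOpen (connectedComponent x0) := by
    have : DiscreteTopology (ConnectedComponents X) := inferInstance
    have h := (isOpen_discrete ({(x0 : ConnectedComponents X)} : Set (ConnectedComponents X))).preimage
      ConnectedComponents.continuous_coe
    rwa [connectedComponents_preimage_singleton] at h
  rw [Metric.isOpen_iff] at hopen
  obtain ⟨ε, hε, hb⟩ := hopen x0 mem_connectedComponent
  refine ⟨ε, hε, fun y hy hyx hFy z hz => ?_⟩
  have hy' : (⟨y, hFy, hy⟩ : X) ∈ connectedComponent x0 := by
    apply hb
    simp only [Metric.mem_ball, Subtype.dist_eq, Real.dist_eq, x0]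
    exact hyx
  have hpre : IsPreconnected (Subtype.val '' (connectedComponent x0)) :=
    isPreconnected_connectedComponent.image _ continuous_subtype_val.continuousOn
  have hoc := hpre.ordConnected
  have := hoc.uIcc_subset (mem_image_of_mem _ mem_connectedComponent) (mem_image_of_mem _ hy') hz
  obtain ⟨w, -, hw⟩ := this
  rw [← hw]; exact w.2.1

lemma aux_const_sign (F : ℝ → ℝ) (hF : Continuous F) (s : Set ℝ) (hs : s.OrdConnected)
    (hne : ∀ y ∈ s, F y ≠ 0) : (∀ y ∈ s, 0 < F y) ∨ (∀ y ∈ s, F y < 0) := by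
  by_contra! h
  obtain ⟨⟨y, hy, hy0⟩, ⟨z, hz, hz0⟩⟩ := h
  have := hs.uIcc_subset hy hz
  have h2 := intermediate_value_uIcc (a := y) (b := z) (f := F) hF.continuousOn
  have h0 : (0:ℝ) ∈ uIcc (F y) (F z) := by
    rw [mem_uIcc]; left; exact ⟨hy0, hz0⟩
  obtain ⟨w, hw, hw0⟩ := h2 h0
  exact hne w (this hw) hw0

lemma aux_shift (F : ℝ → ℝ) (hFper : ∀ x, F (x + 1) = F x) (x : ℝ) (k : ℤ) : F (x + k) = F x := by
  have h : Function.Periodic F 1 := hFper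
  have := h.int_mul k x
  simpa using this

lemma aux_right (F : ℝ → ℝ) (hF : Continuous F) (hFper : ∀ x, F (x + 1) = F x)
    (hfin : Finite (ConnectedComponents {x : ℝ | F x = 0 ∧ x ∈ Icc (0:ℝ) 1})) (x : ℝ) :
    ∃ ε > 0, (∀ y ∈ Ioc x (x + ε), 0 < F y) ∨ (∀ y ∈ Ioc x (x + ε), F y < 0) ∨
      (∀ y ∈ Ioc x (x + ε), F y = 0) := by
  by_cases hx : F x = 0
  swap
  · have : ∀ᶠ y in 𝓝 x, F y ≠ 0 := hF.continuousAt.eventually_ne hx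
    obtain ⟨ε, hε, h⟩ := Metric.eventually_nhds_iff.1 this
    refine ⟨ε / 2, by positivity, ?_⟩
    have := aux_const_sign F hF (Ioc x (x + ε / 2)) ordConnected_Ioc (fun y hy => h (by
      rw [Real.dist_eq, abs_lt]; constructor <;> linarith [hy.1, hy.2]))
    tauto
  have hfl : Int.fract x = x + ((-⌊x⌋ : ℤ) : ℝ) := by
    push_cast; rw [Int.fract]; ring
  have h0 := Int.fract_nonneg x
  have h1 := Int.fract_lt_one x
  obtain ⟨ε, hε, h⟩ := aux_iso F hfin (Int.fract x) (by rw [hfl, aux_shift F hFper, hx])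
    ⟨h0, h1.le⟩
  set δ := min (ε / 2) (1 - Int.fract x) with hδ
  have hδ0 : 0 < δ := lt_min (by positivity) (by linarith)
  have hδ1 : δ ≤ ε / 2 := min_le_left _ _
  have hδ2 : δ ≤ 1 - Int.fract x := min_le_right _ _
  have key : ∀ y ∈ Ioc x (x + δ), F y = 0 → ∀ z ∈ Icc x y, F z = 0 := by
    intro y hy hFy z hz
    have := h (y + ((-⌊x⌋ : ℤ) : ℝ)) ⟨by linarith [hy.1], by linarith [hy.2]⟩
      (by rw [abs_lt]; constructor <;> linarith [hy.1, hy.2]) (by rw [aux_shift F hFper, hFy])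
      (z + ((-⌊x⌋ : ℤ) : ℝ)) (by rw [mem_uIcc]; left; constructor <;> linarith [hz.1, hz.2])
    rwa [aux_shift F hFper] at this
  by_cases hz : ∃ y ∈ Ioc x (x + δ), F y = 0
  · obtain ⟨y, hy, hFy⟩ := hz
    exact ⟨y - x, by linarith [hy.1], Or.inr (Or.inr fun z hz =>
      key y hy hFy z ⟨hz.1.le, by linarith [hz.2]⟩)⟩
  · push Not at hz
    have := aux_const_sign F hF (Ioc x (x + δ)) ordConnected_Ioc hz
    exact ⟨δ, hδ0, by tauto⟩

lemma aux_left (F : ℝ → ℝ) (hF : Continuous F) (hFper : ∀ x, F (x + 1) = F x)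
    (hfin : Finite (ConnectedComponents {x : ℝ | F x = 0 ∧ x ∈ Icc (0:ℝ) 1})) (x : ℝ) :
    ∃ ε > 0, (∀ y ∈ Ico (x - ε) x, 0 < F y) ∨ (∀ y ∈ Ico (x - ε) x, F y < 0) ∨
      (∀ y ∈ Ico (x - ε) x, F y = 0) := by
  by_cases hx : F x = 0
  swap
  · have : ∀ᶠ y in 𝓝 x, F y ≠ 0 := hF.continuousAt.eventually_ne hx
    obtain ⟨ε, hε, h⟩ := Metric.eventually_nhds_iff.1 this
    refine ⟨ε / 2, by positivity, ?_⟩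
    have := aux_const_sign F hF (Ico (x - ε / 2) x) ordConnected_Ico (fun y hy => h (by
      rw [Real.dist_eq, abs_lt]; constructor <;> linarith [hy.1, hy.2]))
    tauto
  have h0 : 0 < x + ((-(⌈x⌉ - 1) : ℤ) : ℝ) := by
    have := Int.ceil_lt_add_one x
    push_cast; linarith
  have h1 : x + ((-(⌈x⌉ - 1) : ℤ) : ℝ) ≤ 1 := by
    have := Int.le_ceil x
    push_cast; linarith
  set m : ℤ := -(⌈x⌉ - 1)
  obtain ⟨ε, hε, h⟩ := aux_iso F hfin (x + m) (by rw [aux_shift F hFper, hx])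
    ⟨h0.le, h1⟩
  set δ := min (ε / 2) (x + m) with hδ
  have hδ0 : 0 < δ := lt_min (by positivity) (by linarith)
  have hδ1 : δ ≤ ε / 2 := min_le_left _ _
  have hδ2 : δ ≤ x + m := min_le_right _ _
  have key : ∀ y ∈ Ico (x - δ) x, F y = 0 → ∀ z ∈ Icc y x, F z = 0 := by
    intro y hy hFy z hz
    have := h (y + m) ⟨by linarith [hy.1], by linarith [hy.2]⟩
      (by rw [abs_lt]; constructor <;> linarith [hy.1, hy.2]) (by rw [aux_shift F hFper, hFy])
      (z + m) (by rw [mem_uIcc]; right; constructor <;> linarith [hz.1, hz.2])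
    rwa [aux_shift F hFper] at this
  by_cases hz : ∃ y ∈ Ico (x - δ) x, F y = 0
  · obtain ⟨y, hy, hFy⟩ := hz
    exact ⟨x - y, by linarith [hy.2], Or.inr (Or.inr fun z hz =>
      key y hy hFy z ⟨by linarith [hz.1], hz.2.le⟩)⟩
  · push Not at hz
    have := aux_const_sign F hF (Ico (x - δ) x) ordConnected_Ico hz
    exact ⟨δ, hδ0, by tauto⟩

lemma aux_stable (F : ℝ → ℝ) (hF : Continuous F) (hFper : ∀ x, F (x + 1) = F x)
    (hfin : Finite (ConnectedComponents {x : ℝ | F x = 0 ∧ x ∈ Icc (0:ℝ) 1}))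
    (x y : ℝ) (hxy : x < y) (hx : F x < 0) (hy : 0 < F y) :
    ∃ a' b' : ℝ, x < a' ∧ b' < y ∧ a' ≤ b' ∧ (∀ x ∈ Icc a' b', F x = 0) ∧
      (∃ ε > 0, (∀ x ∈ Ico (a' - ε) a', F x < 0) ∧
        (∀ x ∈ Ioc b' (b' + ε), 0 < F x)) := by
  -- the right end
  let T : Set ℝ := {z | z ∈ Icc x y ∧ 0 < F z}
  have hTne : T.Nonempty := ⟨y, ⟨hxy.le, le_rfl⟩, hy⟩
  have hTbdd : BddBelow T := ⟨x, fun z hz => hz.1.1⟩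
  set b' := sInf T with hb'
  have hglb : IsGLB T b' := isGLB_csInf hTne hTbdd
  have hxb : x ≤ b' := le_csInf hTne (fun z hz => hz.1.1)
  have hby : b' ≤ y := csInf_le hTbdd ⟨⟨hxy.le, le_rfl⟩, hy⟩
  have hnonpos : ∀ z, x ≤ z → z < b' → F z ≤ 0 := by
    intro z hxz hzb
    by_contra! h
    exact absurd (hglb.1 ⟨⟨hxz, by linarith⟩, h⟩) (not_le.2 hzb)
  have hFb_nonneg : 0 ≤ F b' := by
    have : b' ∈ closure T := hglb.mem_closure hTne
    have hc : IsClosed {z | 0 ≤ F z} := isClosed_le continuous_const hF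
    exact closure_minimal (fun z hz => hz.2.le) hc this
  have hxb' : x < b' := lt_of_le_of_ne hxb (fun h => by rw [← h] at hFb_nonneg; linarith)
  have hFb_nonpos : F b' ≤ 0 := by
    have : b' ∈ closure (Ico x b') := by
      rw [closure_Ico hxb'.ne]; exact ⟨hxb, le_rfl⟩
    have hc : IsClosed {z | F z ≤ 0} := isClosed_le hF continuous_const
    exact closure_minimal (fun z hz => hnonpos z hz.1 hz.2) hc this
  have hFb : F b' = 0 := le_antisymm hFb_nonpos hFb_nonneg
  have hby' : b' < y := lt_of_le_of_ne hby (fun h => by rw [h] at hFb; linarith)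
  obtain ⟨ε1, hε1, hs1⟩ : ∃ ε > 0, ∀ z ∈ Ioc b' (b' + ε), 0 < F z := by
    obtain ⟨ε, hε, h⟩ := aux_right F hF hFper hfin b'
    have : ∃ z ∈ Ioc b' (b' + ε), 0 < F z := by
      obtain ⟨z, hz, hz2⟩ := (isGLB_lt_iff hglb).1 (show b' < b' + ε by linarith)
      refine ⟨z, ⟨lt_of_le_of_ne (hglb.1 hz) ?_, hz2.le⟩, hz.2⟩
      intro h; have := hz.2; rw [← h] at this; linarith
    obtain ⟨z, hz, hz2⟩ := this
    rcases h with h | h | h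
    · exact ⟨ε, hε, h⟩
    · have := h z hz; linarith
    · have := h z hz; linarith
  -- the left end
  let T' : Set ℝ := {z | z ∈ Icc x b' ∧ F z < 0}
  have hT'ne : T'.Nonempty := ⟨x, ⟨le_rfl, hxb⟩, hx⟩
  have hT'bdd : BddAbove T' := ⟨b', fun z hz => hz.1.2⟩
  set a' := sSup T' with ha'
  have hlub : IsLUB T' a' := isLUB_csSup hT'ne hT'bdd
  have hab : a' ≤ b' := csSup_le hT'ne (fun z hz => hz.1.2)
  have hxa : x ≤ a' := le_csSup hT'bdd ⟨⟨le_rfl, hxb⟩, hx⟩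
  have hzero : ∀ z, a' < z → z ≤ b' → F z = 0 := by
    intro z h1 h2
    rcases h2.eq_or_lt with h | h
    · rw [h, hFb]
    · apply le_antisymm (hnonpos z (by linarith) h)
      by_contra! h'
      exact absurd (hlub.1 ⟨⟨by linarith, h2⟩, h'⟩) (not_le.2 h1)
  have hFa : F a' = 0 := by
    rcases hab.eq_or_lt with h | h
    · rw [h, hFb]
    have : a' ∈ closure (Ioc a' b') := by
      rw [closure_Ioc h.ne]; exact ⟨le_rfl, hab⟩
    have hc : IsClosed {z | F z = 0} := isClosed_eq hF continuous_const
    exact closure_minimal (fun z hz => hzero z hz.1 hz.2) hc this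
  have hxa' : x < a' := lt_of_le_of_ne hxa (fun h => by rw [← h] at hFa; linarith)
  obtain ⟨ε2, hε2, hs2⟩ : ∃ ε > 0, ∀ z ∈ Ico (a' - ε) a', F z < 0 := by
    obtain ⟨ε, hε, h⟩ := aux_left F hF hFper hfin a'
    have : ∃ z ∈ Ico (a' - ε) a', F z < 0 := by
      obtain ⟨z, hz, hz2⟩ := (lt_isLUB_iff hlub).1 (show a' - ε < a' by linarith)
      refine ⟨z, ⟨hz2.le, lt_of_le_of_ne (hlub.1 hz) ?_⟩, hz.2⟩
      intro h; have := hz.2; rw [h] at this; linarith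
    obtain ⟨z, hz, hz2⟩ := this
    rcases h with h | h | h
    · have := h z hz; linarith
    · exact ⟨ε, hε, h⟩
    · have := h z hz; linarith
  refine ⟨a', b', hxa', hby', hab, ?_, min ε1 ε2, lt_min hε1 hε2, ?_, ?_⟩
  · intro z hz
    rcases hz.1.eq_or_lt with h | h
    · rw [← h, hFa]
    · exact hzero z h hz.2
  · intro z hz
    exact hs2 z ⟨by linarith [hz.1, min_le_right ε1 ε2], hz.2⟩
  · intro z hz
    exact hs1 z ⟨hz.1, by linarith [hz.2, min_le_left ε1 ε2]⟩

lemma comb_lower {ι : Type*} [Fintype ι] [DecidableEq ι] (ℓ : ℕ) (hℓ : 0 < ℓ) (r : ι → ℕ) (i : ι)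
    (hr0 : ∀ j, r j = 0 → j = i) (hri : r i = 0)
    (hrsurj : ∀ n < ℓ, ∃ j, r j = n)
    (U D : ℕ → ℝ) (hU : ∀ k, 0 ≤ U k) (hD : ∀ k, 0 ≤ D k)
    (up dn : ι → ι → ℝ)
    (hup : ∀ j j', (∑ k ∈ (if r j ≤ r j' then Finset.Ico (r j) (r j') else Finset.Ico (r j) ℓ), U k)
      ≤ up j j')
    (hdn : ∀ j j', (∑ k ∈ (if r j' ≤ r j then Finset.Ico (r j') (r j) else Finset.range (r j)), D k)
      ≤ dn j j')
    (g : ι → ι) (hg : ∀ j, ∃ n, g^[n] j = i) :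
    ∃ n < ℓ, (∑ k ∈ Finset.range n, D k) + ∑ k ∈ Finset.Ico (n + 1) ℓ, U k ≤
      ∑ j ∈ Finset.univ.erase i, min (up j (g j)) (dn j (g j)) := by
  classical
  let A : ι → Finset ℕ := fun j => if up j (g j) ≤ dn j (g j) then
    (if r j ≤ r (g j) then Finset.Ico (r j) (r (g j)) else Finset.Ico (r j) ℓ) else ∅
  let B : ι → Finset ℕ := fun j => if up j (g j) ≤ dn j (g j) then ∅ else
    (if r (g j) ≤ r j then Finset.Ico (r (g j)) (r j) else Finset.range (r j))
  let CU := (Finset.univ.erase i).biUnion A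
  let CD := (Finset.univ.erase i).biUnion B
  have union_le : ∀ (f : ℕ → ℝ) (hf : ∀ k, 0 ≤ f k) (s : Finset ι) (A : ι → Finset ℕ),
      ∑ k ∈ s.biUnion A, f k ≤ ∑ j ∈ s, ∑ k ∈ A j, f k := by
    intro f hf s A
    induction s using Finset.induction_on with
    | empty => simp
    | insert x s hx ih =>
      rw [Finset.biUnion_insert, Finset.sum_insert hx]
      have := Finset.sum_union_inter (s₁ := A x) (s₂ := s.biUnion A) (f := f)
      have h2 : 0 ≤ ∑ k ∈ A x ∩ s.biUnion A, f k := Finset.sum_nonneg fun k _ => hf k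
      linarith
  have hcost : ∑ k ∈ CU, U k + ∑ k ∈ CD, D k ≤
      ∑ j ∈ Finset.univ.erase i, min (up j (g j)) (dn j (g j)) := by
    calc _ ≤ (∑ j ∈ Finset.univ.erase i, ∑ k ∈ A j, U k) +
          ∑ j ∈ Finset.univ.erase i, ∑ k ∈ B j, D k :=
          add_le_add (union_le U hU _ _) (union_le D hD _ _)
      _ = ∑ j ∈ Finset.univ.erase i, (∑ k ∈ A j, U k + ∑ k ∈ B j, D k) := by
          rw [Finset.sum_add_distrib]
      _ ≤ _ := by
          apply Finset.sum_le_sum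
          intro j _
          by_cases h : up j (g j) ≤ dn j (g j)
          · simp only [A, B, if_pos h, Finset.sum_empty, add_zero, min_eq_left h]
            exact hup j (g j)
          · simp only [A, B, if_neg h, Finset.sum_empty, zero_add, min_eq_right (not_le.1 h).le]
            exact hdn j (g j)
  have good : ∀ n j, g^[n] j = i → (∀ k < r j, k ∈ CD) ∨ (∀ k < ℓ, r j ≤ k → k ∈ CU) := by
    intro n
    induction n with
    | zero => intro j hj; left; simp at hj; subst hj; simp [hri]
    | succ n ih =>
      intro j hj
      by_cases hji : j = i
      · left; subst hji; simp [hri]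
      have ihj := ih (g j) (by simpa using hj)
      have hAC : ∀ k ∈ A j, k ∈ CU := fun k hk =>
        Finset.mem_biUnion.2 ⟨j, by simp [hji], hk⟩
      have hBC : ∀ k ∈ B j, k ∈ CD := fun k hk =>
        Finset.mem_biUnion.2 ⟨j, by simp [hji], hk⟩
      by_cases h : up j (g j) ≤ dn j (g j)
      · simp only [A, if_pos h] at hAC
        split_ifs at hAC with h2
        · simp only [Finset.mem_Ico] at hAC
          rcases ihj with h3 | h3
          · left; intro k hk; exact h3 k (by omega)
          · right; intro k hk hk2
            by_cases h4 : k < r (g j)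
            · exact hAC k ⟨hk2, h4⟩
            · exact h3 k hk (by omega)
        · simp only [Finset.mem_Ico] at hAC
          right; intro k hk hk2; exact hAC k ⟨hk2, hk⟩
      · simp only [B, if_neg h] at hBC
        split_ifs at hBC with h2
        · simp only [Finset.mem_Ico] at hBC
          rcases ihj with h3 | h3
          · left; intro k hk
            by_cases h4 : k < r (g j)
            · exact h3 k h4
            · exact hBC k ⟨by omega, hk⟩
          · right; intro k hk hk2; exact h3 k hk (by omega)
        · simp only [Finset.mem_range] at hBC
          left; exact hBC
  let Pn : ℕ → Prop := fun n => n < ℓ ∧ ∀ k < n, k ∈ CD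
  have hP0 : Pn 0 := ⟨hℓ, by simp⟩
  obtain ⟨n, ⟨hnl, hn⟩, hmax⟩ : ∃ n, Pn n ∧ ¬ Pn (n + 1) := by
    by_contra! h
    have : ∀ n, Pn n := fun n => by
      induction n with
      | zero => exact hP0
      | succ n ih => exact h n ih
    exact absurd (this ℓ).1 (lt_irrefl _)
  refine ⟨n, hnl, ?_⟩
  have h1 : Finset.range n ⊆ CD := fun k hk => hn k (Finset.mem_range.1 hk)
  have h2 : Finset.Ico (n + 1) ℓ ⊆ CU := by
    intro k hk
    rw [Finset.mem_Ico] at hk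
    obtain ⟨j, hj⟩ := hrsurj (n + 1) (by omega)
    obtain ⟨m, hm⟩ := hg j
    rcases good m j hm with h | h
    · exact absurd ⟨by omega, fun k hk => h k (by omega)⟩ hmax
    · exact h k hk.2 (by omega)
  have e1 := Finset.sum_le_sum_of_subset_of_nonneg h1 (f := D) (fun k _ _ => hD k)
  have e2 := Finset.sum_le_sum_of_subset_of_nonneg h2 (f := U) (fun k _ _ => hU k)
  linarith

lemma comb_upper {ι : Type*} [Fintype ι] [DecidableEq ι] (ℓ : ℕ) (r : ι → ℕ) (i : ι)
    (hr0 : ∀ j, r j = 0 → j = i) (hri : r i = 0) (hinj : Function.Injective r)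
    (hlt : ∀ j, r j < ℓ)
    (hrsurj : ∀ n < ℓ, ∃ j, r j = n)
    (U D : ℕ → ℝ) 
    (up dn : ι → ι → ℝ)
    (hup : ∀ j j', (r j' = r j + 1 ∨ (r j' = 0 ∧ r j + 1 = ℓ)) → up j j' ≤ U (r j))
    (hdn : ∀ j j', r j = r j' + 1 → dn j j' ≤ D (r j'))
    (n : ℕ) (hn : n < ℓ) :
    ∃ g : ι → ι, (∀ j, ∃ n, g^[n] j = i) ∧ 
      ∑ j ∈ Finset.univ.erase i, min (up j (g j)) (dn j (g j)) ≤
      (∑ k ∈ Finset.range n, D k) + ∑ k ∈ Finset.Ico (n + 1) ℓ, U k := by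
  have hstep : ∀ j, ∃ j', (r j = 0 ∧ j' = i) ∨ (0 < r j ∧ r j ≤ n ∧ r j = r j' + 1) ∨
      (n < r j ∧ (r j' = r j + 1 ∨ (r j' = 0 ∧ r j + 1 = ℓ))) := by
    intro j
    by_cases h0 : r j = 0
    · exact ⟨i, Or.inl ⟨h0, rfl⟩⟩
    by_cases h1 : r j ≤ n
    · obtain ⟨j', hj'⟩ := hrsurj (r j - 1) (by omega)
      exact ⟨j', by omega⟩
    by_cases h2 : r j + 1 = ℓ
    · exact ⟨i, by omega⟩
    · obtain ⟨j', hj'⟩ := hrsurj (r j + 1) (by have := hlt j; omega)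
      exact ⟨j', by omega⟩
  choose g hg using hstep
  refine ⟨g, ?_, ?_⟩
  · have h1 : ∀ m j, r j = m → m ≤ n → ∃ n, g^[n] j = i := by
      intro m
      induction m with
      | zero => intro j hj _; exact ⟨0, by simpa using hr0 j hj⟩
      | succ m ih =>
        intro j hj hm
        obtain ⟨k, hk⟩ := ih (g j) (by have := hg j; omega) (by omega)
        exact ⟨k + 1, by simpa using hk⟩
    have h2 : ∀ m j, r j + m = ℓ → n < r j → ∃ n, g^[n] j = i := by
      intro m
      induction m with
      | zero => intro j hj _; have := hlt j; omega
      | succ m ih =>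
        intro j hj hm
        rcases hg j with h | h | ⟨-, h | h⟩
        · omega
        · omega
        · obtain ⟨k, hk⟩ := ih (g j) (by omega) (by omega)
          exact ⟨k + 1, by simpa using hk⟩
        · exact ⟨1, by simpa using hr0 _ h.1⟩
    intro j
    by_cases h : r j ≤ n
    · exact h1 _ j rfl h
    · exact h2 (ℓ - r j) j (by have := hlt j; omega) (by omega)
  · calc _ ≤ ∑ j ∈ Finset.univ.erase i, (if r j ≤ n then D (r j - 1) else U (r j)) := by
          apply Finset.sum_le_sum
          intro j hj
          have hji : j ≠ i := (Finset.mem_erase.1 hj).1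
          have : r j ≠ 0 := fun h => hji (hr0 j h)
          split_ifs with h
          · apply (min_le_right _ _).trans
            have h2 : r j = r (g j) + 1 := by have := hg j; omega
            have := hdn j (g j) h2
            rwa [h2, Nat.add_sub_cancel]
          · exact (min_le_left _ _).trans (hup j (g j) (by have := hg j; omega))
      _ = ∑ m ∈ Finset.Ico 1 ℓ, (if m ≤ n then D (m - 1) else U m) := by
          apply Finset.sum_nbij r
          · intro j hj
            have hji : j ≠ i := (Finset.mem_erase.1 hj).1
            have : r j ≠ 0 := fun h => hji (hr0 j h)
            have := hlt j
            rw [Finset.mem_Ico]; omega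
          · exact hinj.injOn
          · intro m hm
            simp only [Finset.coe_Ico, mem_Ico] at hm
            obtain ⟨j, hj⟩ := hrsurj m hm.2
            refine ⟨j, ?_, hj⟩
            have : j ≠ i := by rintro rfl; omega
            simp [this]
          · intro j _; rfl
      _ = _ := by
          rw [← Finset.sum_Ico_consecutive _ (show 1 ≤ n + 1 by omega) (show n + 1 ≤ ℓ by omega)]
          congr 1
          · rw [Finset.sum_Ico_eq_sum_range]
            apply Finset.sum_congr (by simp)
            intro k hk
            rw [Finset.mem_range] at hk
            rw [if_pos (by omega)]
            congr 1; omega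
          · apply Finset.sum_congr rfl
            intro k hk
            rw [Finset.mem_Ico] at hk
            rw [if_neg (by omega)]

lemma aux_arc (f : ℝ → ℝ) (hper : ∀ x, f (x + 1) = f x) (u v u' v' : ℝ)
    (hu : ∃ k : ℤ, u' = u + k) (hv : ∃ k : ℤ, v' = v + k) (h1 : u' ≤ v') (h2 : v' < u' + 1) :
    ∫ s in u..(u + Int.fract (v - u)), f s = ∫ s in u'..v', f s := by
  obtain ⟨k, hk⟩ := hu
  obtain ⟨m, hm⟩ := hv
  have hfr : Int.fract (v - u) = v' - u' := by
    rw [Int.fract_eq_iff]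
    refine ⟨by linarith, by linarith, k - m, ?_⟩
    push_cast; rw [hk, hm]; ring
  have h := intervalIntegral.integral_comp_add_right (a := u) (b := u + Int.fract (v - u)) f (k : ℝ)
  have h' : ∀ s, f (s + k) = f s := fun s => aux_shift f hper s k
  simp only [h'] at h
  rw [h, hfr, hk]
  congr 1
  ring

lemma core (F : ℝ → ℝ) (hF : Continuous F) (hFper : ∀ x, F (x + 1) = F x)
    (S : ℝ → ℝ) (hS : ∀ x y, ∫ t in x..y, F t = S y - S x)
    (ℓ : ℕ) [NeZero ℓ] (p : Fin ℓ → ℝ) (i : Fin ℓ)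
    (Vp Vm : ℝ → ℝ → ℝ)
    (hVp : ∀ u v, Vp u v = ∫ s in u..(u + Int.fract (v - u)), max (F s) 0)
    (hVm : ∀ u v, Vm u v = ∫ s in v..(v + Int.fract (u - v)), max (-F s) 0)
    (t : Fin ℓ → ℝ)
    (ht : ∀ j : Fin ℓ, t j = Vm (p j) (p i) + Vp (p (j + 1)) (p i))
    (P Q : ℕ → ℝ) (hPQ : ∀ n, P n ≤ Q n) (hQP : ∀ n, Q n ≤ P (n + 1)) (hP : StrictMono P)
    (hPℓ : ∀ n, P (n + ℓ) = P n + 1)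
    (hpos : ∀ n, ∀ x ∈ Icc (P n) (Q n), 0 ≤ F x)
    (hneg : ∀ n, ∀ x ∈ Icc (Q n) (P (n + 1)), F x ≤ 0)
    (r : Fin ℓ → ℕ) (hinj : Function.Injective r) (hri : r i = 0) (hlt : ∀ j, r j < ℓ)
    (hrsurj : ∀ n < ℓ, ∃ j, r j = n)
    (hr1 : ∀ j, r (j + 1) = r j + 1 ∨ (r j + 1 = ℓ ∧ r (j + 1) = 0))
    (hrP : ∀ j, ∃ k : ℤ, P (r j) = p j + k) :
    ((⨅ g : {f : Fin ℓ → Fin ℓ // ∀ j, ∃ n, f^[n] j = i},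
      ∑ j ∈ Finset.univ.erase i, min (Vp (p j) (p (g.1 j))) (Vm (p j) (p (g.1 j)))) = ⨅ j, t j) ∧
    ∃ C : ℝ, ∀ j, t j = C - S (Q (r j)) := by
  have hFp : Continuous fun s => max (F s) 0 := hF.max continuous_const
  have hFm : Continuous fun s => max (-F s) 0 := hF.neg.max continuous_const
  have hFpper : ∀ x, (fun s => max (F s) 0) (x + 1) = (fun s => max (F s) 0) x := by
    intro x; simp only [hFper]
  have hFmper : ∀ x, (fun s => max (-F s) 0) (x + 1) = (fun s => max (-F s) 0) x := by
    intro x; simp only [hFper]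
  let U : ℕ → ℝ := fun n => S (Q n) - S (P n)
  let D : ℕ → ℝ := fun n => S (Q n) - S (P (n + 1))
  have iU : ∀ n, ∫ s in (P n)..(P (n + 1)), max (F s) 0 = U n := by
    intro n
    rw [← intervalIntegral.integral_add_adjacent_intervals
      (hFp.intervalIntegrable (P n) (Q n)) (hFp.intervalIntegrable (Q n) (P (n + 1)))]
    have e1 : ∫ s in (P n)..(Q n), max (F s) 0 = ∫ s in (P n)..(Q n), F s :=
      intervalIntegral.integral_congr fun x hx => by
        rw [uIcc_of_le (hPQ n)] at hx; exact max_eq_left (hpos n x hx)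
    have e2 : ∫ s in (Q n)..(P (n + 1)), max (F s) 0 = ∫ s in (Q n)..(P (n + 1)), (0 : ℝ) :=
      intervalIntegral.integral_congr fun x hx => by
        rw [uIcc_of_le (hQP n)] at hx; exact max_eq_right (hneg n x hx)
    rw [e1, e2, hS]; simp [U]
  have iD : ∀ n, ∫ s in (P n)..(P (n + 1)), max (-F s) 0 = D n := by
    intro n
    rw [← intervalIntegral.integral_add_adjacent_intervals
      (hFm.intervalIntegrable (P n) (Q n)) (hFm.intervalIntegrable (Q n) (P (n + 1)))]
    have e1 : ∫ s in (P n)..(Q n), max (-F s) 0 = ∫ s in (P n)..(Q n), (0 : ℝ) :=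
      intervalIntegral.integral_congr fun x hx => by
        rw [uIcc_of_le (hPQ n)] at hx; exact max_eq_right (by have := hpos n x hx; linarith)
    have e2 : ∫ s in (Q n)..(P (n + 1)), max (-F s) 0 = ∫ s in (Q n)..(P (n + 1)), -F s :=
      intervalIntegral.integral_congr fun x hx => by
        rw [uIcc_of_le (hQP n)] at hx; exact max_eq_left (by have := hneg n x hx; linarith)
    rw [e1, e2, intervalIntegral.integral_neg, hS]; simp [D]
  have sU : ∀ m n, m ≤ n → ∫ s in (P m)..(P n), max (F s) 0 = ∑ k ∈ Finset.Ico m n, U k := by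
    intro m n hmn
    rw [← intervalIntegral.sum_integral_adjacent_intervals_Ico hmn
      (fun k _ => hFp.intervalIntegrable _ _)]
    exact Finset.sum_congr rfl fun k _ => iU k
  have sD : ∀ m n, m ≤ n → ∫ s in (P m)..(P n), max (-F s) 0 = ∑ k ∈ Finset.Ico m n, D k := by
    intro m n hmn
    rw [← intervalIntegral.sum_integral_adjacent_intervals_Ico hmn
      (fun k _ => hFm.intervalIntegrable _ _)]
    exact Finset.sum_congr rfl fun k _ => iD k
  have hU : ∀ k, 0 ≤ U k := fun k => by
    rw [← iU]; exact intervalIntegral.integral_nonneg ((hPQ k).trans (hQP k)) fun _ _ => le_max_right _ _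
  have hD : ∀ k, 0 ≤ D k := fun k => by
    rw [← iD]; exact intervalIntegral.integral_nonneg ((hPQ k).trans (hQP k)) fun _ _ => le_max_right _ _
  have hrPℓ : ∀ j, ∃ k : ℤ, P (r j + ℓ) = p j + k := by
    intro j
    obtain ⟨k, hk⟩ := hrP j
    exact ⟨k + 1, by rw [hPℓ, hk]; push_cast; ring⟩
  -- arc costs
  have vp1 : ∀ j j', r j ≤ r j' → Vp (p j) (p j') = ∑ k ∈ Finset.Ico (r j) (r j'), U k := by
    intro j j' h
    rw [hVp, ← sU _ _ h]
    apply aux_arc _ hFpper _ _ _ _ (hrP j) (hrP j') (hP.monotone h)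
    rw [← hPℓ]; exact hP (by have := hlt j'; omega)
  have vp2 : ∀ j j', r j' < r j → Vp (p j) (p j') = ∑ k ∈ Finset.Ico (r j) (r j' + ℓ), U k := by
    intro j j' h
    have := hlt j
    rw [hVp, ← sU _ _ (by omega)]
    apply aux_arc _ hFpper _ _ _ _ (hrP j) (hrPℓ j') (hP.monotone (by omega))
    rw [← hPℓ]; exact hP (by omega)
  have vm1 : ∀ j j', r j' ≤ r j → Vm (p j) (p j') = ∑ k ∈ Finset.Ico (r j') (r j), D k := by
    intro j j' h
    rw [hVm, ← sD _ _ h]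
    apply aux_arc _ hFmper _ _ _ _ (hrP j') (hrP j) (hP.monotone h)
    rw [← hPℓ]; exact hP (by have := hlt j; omega)
  have vm2 : ∀ j j', r j < r j' → ∑ k ∈ Finset.range (r j), D k ≤ Vm (p j) (p j') := by
    intro j j' h
    have := hlt j'
    have e : Vm (p j) (p j') = ∑ k ∈ Finset.Ico (r j') (r j + ℓ), D k := by
      rw [hVm, ← sD _ _ (by omega)]
      apply aux_arc _ hFmper _ _ _ _ (hrP j') (hrPℓ j) (hP.monotone (by omega))
      rw [← hPℓ]; exact hP (by omega)
    have hSper : ∀ n, S (P (n + ℓ)) = S (P n) + (S 1 - S 0) := by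
      intro n
      have h1 : Function.Periodic F 1 := hFper
      have h2 := h1.intervalIntegral_add_eq (P n) 0
      rw [hS, hS] at h2
      rw [hPℓ]; simp at h2; linarith
    have hDper : ∀ n, D (n + ℓ) = D n := by
      intro n
      rw [← iD, ← iD, show n + ℓ + 1 = n + 1 + ℓ by ring, hPℓ, hPℓ]
      rw [← intervalIntegral.integral_comp_add_right (fun s => max (-F s) 0) (1 : ℝ)]
      simp only [hFper]
    rw [e, ← Finset.sum_Ico_consecutive _ (show r j' ≤ ℓ by omega) (show ℓ ≤ r j + ℓ by omega)]
    have e2 : ∑ k ∈ Finset.Ico ℓ (r j + ℓ), D k = ∑ k ∈ Finset.range (r j), D k := by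
      rw [Finset.sum_Ico_eq_sum_range]
      apply Finset.sum_congr (by simp)
      intro k _
      rw [add_comm, hDper]
    rw [e2]
    have : 0 ≤ ∑ k ∈ Finset.Ico (r j') ℓ, D k := Finset.sum_nonneg fun k _ => hD k
    linarith
  have hr0 : ∀ j, r j = 0 → j = i := fun j hj => hinj (by rw [hj, hri])
  have hℓ : 0 < ℓ := NeZero.pos ℓ
  -- formula for t
  have tform : ∀ j, t j = (∑ k ∈ Finset.range (r j), D k) + ∑ k ∈ Finset.Ico (r j + 1) ℓ, U k := by
    intro j
    rw [ht, vm1 j i (by omega), hri, Finset.range_eq_Ico]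
    congr 1
    rcases hr1 j with h | ⟨h, h'⟩
    · rw [vp2 _ _ (by omega), hri, h, zero_add]
    · rw [vp1 _ _ (by omega), hri, h', h]; simp
  refine ⟨?_, ?_⟩
  · have hupper := fun n hn => comb_upper ℓ r i hr0 hri hinj hlt hrsurj U D
      (fun j j' => Vp (p j) (p j')) (fun j j' => Vm (p j) (p j'))
      (by
        rintro j j' (h | ⟨h, h'⟩)
        · rw [vp1 _ _ (by omega), h]; simp
        · by_cases h0 : r j = 0
          · rw [vp1 _ _ (by omega), h, h0]; simpa using hU 0
          · rw [vp2 _ _ (by omega), h, zero_add, ← h']; simp)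
      (by
        intro j j' h
        rw [vm1 _ _ (by omega), h]; simp) n hn
    have hne : Nonempty {f : Fin ℓ → Fin ℓ // ∀ j, ∃ n, f^[n] j = i} := by
      obtain ⟨g, hg, -⟩ := hupper 0 hℓ
      exact ⟨⟨g, hg⟩⟩
    apply le_antisymm
    · apply le_ciInf
      intro j
      obtain ⟨g, hg, hle⟩ := hupper (r j) (hlt j)
      rw [tform]
      exact (ciInf_le (Set.finite_range _).bddBelow ⟨g, hg⟩).trans hle
    · apply le_ciInf
      rintro ⟨g, hg⟩
      obtain ⟨n, hn, hle⟩ := comb_lower ℓ hℓ r i hr0 hri hrsurj U D hU hD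
        (fun j j' => Vp (p j) (p j')) (fun j j' => Vm (p j) (p j'))
        (by
          intro j j'
          split_ifs with h
          · rw [vp1 _ _ h]
          · rw [vp2 _ _ (by omega)]
            exact Finset.sum_le_sum_of_subset_of_nonneg
              (Finset.Ico_subset_Ico_right (by omega)) (fun k _ _ => hU k))
        (by
          intro j j'
          split_ifs with h
          · rw [vm1 _ _ h]
          · exact vm2 _ _ (by omega)) g hg
      obtain ⟨j, rfl⟩ := hrsurj n hn
      rw [← tform] at hle
      exact (ciInf_le (Set.finite_range _).bddBelow j).trans hle
  · refine ⟨(∑ k ∈ Finset.range ℓ, U k) + S (P 0), fun j => ?_⟩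
    rw [tform]
    have h1 : ∀ n, ∑ k ∈ Finset.range n, D k = ∑ k ∈ Finset.range n, U k - (S (P n) - S (P 0)) := by
      intro n
      induction n with
      | zero => simp
      | succ n ih => rw [Finset.sum_range_succ, Finset.sum_range_succ, ih]; simp only [U, D]; ring
    have h2 := Finset.sum_range_add_sum_Ico U (show r j + 1 ≤ ℓ from hlt j)
    rw [h1, ← h2, Finset.sum_range_succ]
    simp only [U]; ring

/-- Lemma `cuore`: suppose `ℓ ≥ 2`. With
`t(i,j) = V₋(K_j,K_i) + V₊(K_{j+1},K_i)` one has `W(K_i) = min_{1≤j≤ℓ} t(i,j)`;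
moreover `t(i,J)` realizes the minimum if and only if
`ΔS(K_i, A_J) = max_{y∈[x̄,x̄+1]} (S(y) − S(x̄))` for every lift `x̄` lying in
`K_i`.

Setting: `F` continuous, 1-periodic, `S(x) = ∫₀ˣ F`, zero set on the torus with
finitely many connected components; stable components `K_i = [a i, b i] ⊆ [0,1)`
in clockwise order with representatives `p i`, and totally unstable components
`A_i = [c i, d i]` with representatives `q i`, `A_i` lying clockwise between
`K_i` and `K_{i+1}`. Arc integrals `V₊, V₋` and the clockwise `ΔS` are realized
by lifting the second endpoint via `Int.fract`; directed trees rooted at `i`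
oriented towards the root are encoded as maps `f : Fin ℓ → Fin ℓ` such that
every vertex reaches `i` under iteration, and
`W(K_i) = min_{trees} Σ_{j≠i} V(K_j, K_{f j})`. -/
theorem stmt_18
    (F : ℝ → ℝ) (hF : Continuous F) (hFper : ∀ x, F (x + 1) = F x)
    (S : ℝ → ℝ) (hS : ∀ x, S x = ∫ t in (0:ℝ)..x, F t)
    (hfin : Finite (ConnectedComponents {x : ℝ | F x = 0 ∧ x ∈ Icc (0:ℝ) 1}))
    (ℓ : ℕ) [NeZero ℓ] (hl2 : 2 ≤ ℓ)
    (a b p : Fin ℓ → ℝ)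
    (hrange : ∀ i, 0 ≤ a i ∧ a i ≤ b i ∧ b i < 1)
    (hord : ∀ i j : Fin ℓ, i < j → b i < a j)
    (hp : ∀ i, p i ∈ Icc (a i) (b i))
    (hstable : ∀ i, (∀ x ∈ Icc (a i) (b i), F x = 0) ∧
      ∃ ε > 0, (∀ x ∈ Ico (a i - ε) (a i), F x < 0) ∧
        (∀ x ∈ Ioc (b i) (b i + ε), 0 < F x))
    (hexh : ∀ a' b' : ℝ, a' ≤ b' → (∀ x ∈ Icc a' b', F x = 0) →
      (∃ ε > 0, (∀ x ∈ Ico (a' - ε) a', F x < 0) ∧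
        (∀ x ∈ Ioc b' (b' + ε), 0 < F x)) →
      ∃ (i : Fin ℓ) (k : ℤ), a' = a i + k ∧ b' = b i + k)
    (c d q : Fin ℓ → ℝ)
    (hq : ∀ i, q i ∈ Icc (c i) (d i))
    (hbetween : ∀ i : Fin ℓ, b i < c i ∧ c i ≤ d i ∧
      d i < a (i + 1) + (if (i : ℕ) + 1 = ℓ then (1:ℝ) else 0))
    (hunstable : ∀ i, (∀ x ∈ Icc (c i) (d i), F x = 0) ∧
      ∃ ε > 0, (∀ x ∈ Ico (c i - ε) (c i), 0 < F x) ∧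
        (∀ x ∈ Ioc (d i) (d i + ε), F x < 0))
    (Vp Vm : ℝ → ℝ → ℝ)
    (hVp : ∀ u v, Vp u v = ∫ s in u..(u + Int.fract (v - u)), max (F s) 0)
    (hVm : ∀ u v, Vm u v = ∫ s in v..(v + Int.fract (u - v)), max (-F s) 0)
    (WK : Fin ℓ → ℝ)
    (hWK : ∀ i, WK i = ⨅ g : {f : Fin ℓ → Fin ℓ // ∀ j, ∃ n, f^[n] j = i},
      ∑ j ∈ Finset.univ.erase i, min (Vp (p j) (p (g.1 j))) (Vm (p j) (p (g.1 j))))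
    (t : Fin ℓ → Fin ℓ → ℝ)
    (ht : ∀ i j : Fin ℓ, t i j = Vm (p j) (p i) + Vp (p (j + 1)) (p i)) :
    ∀ i : Fin ℓ,
      (WK i = ⨅ j : Fin ℓ, t i j) ∧
      (∀ J : Fin ℓ, (t i J = ⨅ j : Fin ℓ, t i j) ↔
        (∀ x ∈ Icc (a i) (b i),
          S (x + Int.fract (q J - x)) - S x
            = sSup ((fun y => S y - S x) '' Icc x (x + 1)))) := by
  intro i
  have hℓ : 0 < ℓ := NeZero.pos ℓ
  have hFint : ∀ x y, IntervalIntegrable F MeasureTheory.volume x y :=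
    fun x y => hF.intervalIntegrable x y
  have hSd : ∀ x y, ∫ t in x..y, F t = S y - S x := by
    intro x y
    rw [hS, hS, intervalIntegral.integral_interval_sub_left (hFint _ _) (hFint _ _)]
  have hsh := aux_shift F hFper
  -- no stable component strictly between consecutive ones
  have hno : ∀ (j : Fin ℓ) (x y : ℝ), b j ≤ x →
      y ≤ a (j + 1) + (if (j : ℕ) + 1 = ℓ then (1:ℝ) else 0) → x < y → F x < 0 → 0 < F y → False := by
    intro j x y hx hy hxy hFx hFy
    obtain ⟨a', b', hxa, hby, hab, hz, hst⟩ := aux_stable F hF hFper hfin x y hxy hFx hFy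
    obtain ⟨m, k, rfl, rfl⟩ := hexh a' b' hab hz hst
    have hm := hrange m
    have hj := hrange j
    have hj1 := hrange (j + 1)
    have e1 : b j < a m + k := by linarith
    have e2 : b m + k < a (j + 1) + (if (j : ℕ) + 1 = ℓ then (1:ℝ) else 0) := by linarith
    have hk0 : 0 ≤ k := by
      by_contra! h
      have : (k : ℝ) ≤ -1 := by exact_mod_cast (by omega : k ≤ -1)
      linarith
    split_ifs at e2 with hw
    · have hk1 : k ≤ 1 := by
        by_contra! h
        have : (2 : ℝ) ≤ k := by exact_mod_cast (by omega : 2 ≤ k)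
        linarith
      have hjz : ((j + 1 : Fin ℓ) : ℕ) = 0 := by
        rw [Fin.val_add, Fin.coe_ofNat_eq_mod, Nat.add_mod_mod, hw, Nat.mod_self]
      obtain rfl | rfl : k = 0 ∨ k = 1 := by omega
      · have : ¬ m ≤ j := by
          intro hle
          rcases hle.eq_or_lt with h | h
          · subst h; simp at e1; linarith
          · have := hord _ _ h; simp at e1; linarith
        have h3 := m.2
        have h4 : (j : ℕ) < m := by simpa using this
        omega
      · have : ¬ (j + 1) ≤ m := by
          intro hle
          rcases hle.eq_or_lt with h | h
          · rw [h] at e2; simp at e2; linarith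
          · have := hord _ _ h; simp at e2; linarith
        have h4 : (m : ℕ) < ((j + 1 : Fin ℓ) : ℕ) := by simpa using this
        omega
    · have hk1 : k = 0 := by
        by_contra! h
        have : (1 : ℝ) ≤ k := by exact_mod_cast (by omega : 1 ≤ k)
        linarith
      subst hk1
      have hjz : ((j + 1 : Fin ℓ) : ℕ) = j + 1 := by
        rw [Fin.val_add, Fin.coe_ofNat_eq_mod, Nat.add_mod_mod, Nat.mod_eq_of_lt (by omega)]
      have h1 : ¬ m ≤ j := by
        intro hle
        rcases hle.eq_or_lt with h | h
        · subst h; simp at e1; linarith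
        · have := hord _ _ h; simp at e1; linarith
      have h2 : ¬ (j + 1) ≤ m := by
        intro hle
        rcases hle.eq_or_lt with h | h
        · rw [h] at e2; simp at e2; linarith
        · have := hord _ _ h; simp at e2; linarith
      have h3 : (j : ℕ) < m := by simpa using h1
      have h4 : (m : ℕ) < ((j + 1 : Fin ℓ) : ℕ) := by simpa using h2
      omega
  have hpos0 : ∀ j, ∀ x ∈ Icc (p j) (q j), 0 ≤ F x := by
    intro j x hx
    have hb := hbetween j
    by_cases h1 : x ≤ b j
    · exact ((hstable j).1 x ⟨(hp j).1.trans hx.1, h1⟩).ge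
    by_cases h2 : c j ≤ x
    · exact ((hunstable j).1 x ⟨h2, hx.2.trans (hq j).2⟩).ge
    push Not at h1 h2
    by_contra! hneg
    obtain ⟨ε, hε, h3, -⟩ := (hunstable j).2
    have hy1 : x < max ((x + c j) / 2) (c j - ε) := lt_max_of_lt_left (by linarith)
    have hy2 : max ((x + c j) / 2) (c j - ε) < c j := max_lt (by linarith) (by linarith)
    exact hno j x _ h1.le (by linarith) hy1 hneg (h3 _ ⟨le_max_right _ _, hy2⟩)
  have hneg0 : ∀ j, ∀ x ∈ Icc (q j) (p (j + 1) + (if (j : ℕ) + 1 = ℓ then (1:ℝ) else 0)), F x ≤ 0 := by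
    intro j x hx
    have hb := hbetween j
    by_cases h1 : x ≤ d j
    · exact ((hunstable j).1 x ⟨(hq j).1.trans hx.1, h1⟩).le
    by_cases h2 : a (j + 1) + (if (j : ℕ) + 1 = ℓ then (1:ℝ) else 0) ≤ x
    · have hpj := hp (j + 1)
      split_ifs at h2 hx with hw
      · have := (hstable (j + 1)).1 (x - 1) ⟨by linarith, by linarith [hx.2, hpj.2]⟩
        rw [← hFper] at this; simp at this; exact this.le
      · exact ((hstable (j + 1)).1 x ⟨by linarith, by linarith [hx.2, hpj.2]⟩).le
    push Not at h1 h2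
    by_contra! hpos
    obtain ⟨ε, hε, -, h3⟩ := (hunstable j).2
    have hy1 : min ((x + d j) / 2) (d j + ε) < x := min_lt_of_left_lt (by linarith)
    have hy2 : d j < min ((x + d j) / 2) (d j + ε) := lt_min (by linarith) (by linarith)
    exact hno j _ x (by linarith) h2.le hy1 (h3 _ ⟨hy2, min_le_right _ _⟩) hpos
  -- lifts
  let lft : (Fin ℓ → ℝ) → ℕ → ℝ := fun f N => f (Fin.ofNat ℓ N) + ((N / ℓ : ℕ) : ℝ)
  have lft_succ : ∀ f N, lft f (N + 1) = f (Fin.ofNat ℓ N + 1) +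
      (if ((Fin.ofNat ℓ N : Fin ℓ) : ℕ) + 1 = ℓ then (1:ℝ) else 0) + ((N / ℓ : ℕ) : ℝ) := by
    intro f N
    have e1 : (Fin.ofNat ℓ (N + 1) : Fin ℓ) = Fin.ofNat ℓ N + 1 := by
      apply Fin.ext
      rw [Fin.val_add, Fin.coe_ofNat_eq_mod]
      simp [Fin.ofNat, Nat.add_mod]
    have e2 : (((Fin.ofNat ℓ N : Fin ℓ) : ℕ) + 1 = ℓ) ↔ ℓ ∣ N + 1 := by
      have hlt := Nat.mod_lt N hℓ
      simp only [Fin.ofNat]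
      rw [Nat.dvd_iff_mod_eq_zero, ← Nat.mod_add_mod]
      constructor
      · intro h; rw [h, Nat.mod_self]
      · intro h
        by_contra h'
        rw [Nat.mod_eq_of_lt (by omega)] at h
        omega
    simp only [lft, e1, Nat.succ_div, e2]
    split_ifs <;> push_cast <;> ring
  have lft_ℓ : ∀ f N, lft f (N + ℓ) = lft f N + 1 := by
    intro f N
    have e1 : (Fin.ofNat ℓ (N + ℓ) : Fin ℓ) = Fin.ofNat ℓ N := by
      apply Fin.ext; simp [Fin.ofNat]
    simp only [lft, e1, Nat.add_div_right N hℓ]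
    push_cast; ring
  have hap : ∀ N, lft a N ≤ lft p N := fun N => by simp only [lft]; linarith [(hp (Fin.ofNat ℓ N)).1]
  have hpb : ∀ N, lft p N ≤ lft b N := fun N => by simp only [lft]; linarith [(hp (Fin.ofNat ℓ N)).2]
  have hbq : ∀ N, lft b N < lft q N := fun N => by
    simp only [lft]; linarith [(hq (Fin.ofNat ℓ N)).1, (hbetween (Fin.ofNat ℓ N)).1]
  have hqa : ∀ N, lft q N < lft a (N + 1) := fun N => by
    rw [lft_succ]; simp only [lft]
    linarith [(hq (Fin.ofNat ℓ N)).2, (hbetween (Fin.ofNat ℓ N)).2.2]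
  have hPmono : StrictMono (lft p) := strictMono_nat_of_lt_succ fun N => by
    linarith [hpb N, hbq N, hqa N, hap (N + 1)]
  have hBmono : StrictMono (lft b) := strictMono_nat_of_lt_succ fun N => by
    linarith [hpb (N + 1), hbq N, hqa N, hap (N + 1)]
  have hAmono : StrictMono (lft a) := strictMono_nat_of_lt_succ fun N => by
    linarith [hpb N, hbq N, hqa N, hap N]
  have hposN : ∀ N, ∀ x ∈ Icc (lft p N) (lft q N), 0 ≤ F x := by
    intro N x hx
    have h := hpos0 (Fin.ofNat ℓ N) (x + ((-((N / ℓ : ℕ) : ℤ) : ℤ) : ℝ))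
      (by simp only [lft] at hx; rw [Int.cast_neg, Int.cast_natCast]
          exact ⟨by linarith [hx.1], by linarith [hx.2]⟩)
    rwa [hsh] at h
  have hnegN : ∀ N, ∀ x ∈ Icc (lft q N) (lft p (N + 1)), F x ≤ 0 := by
    intro N x hx
    rw [lft_succ] at hx
    have h := hneg0 (Fin.ofNat ℓ N) (x + ((-((N / ℓ : ℕ) : ℤ) : ℤ) : ℝ))
      (by simp only [lft] at hx; rw [Int.cast_neg, Int.cast_natCast]
          exact ⟨by linarith [hx.1], by linarith [hx.2]⟩)
    rwa [hsh] at h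
  -- relative index
  let r : Fin ℓ → ℕ := fun j => if (i : ℕ) ≤ j then (j : ℕ) - i else (j : ℕ) + ℓ - i
  have hrval : ∀ j, ((i : ℕ) + r j = j) ∨ ((i : ℕ) + r j = j + ℓ) := by
    intro j
    have := i.2
    simp only [r]; split_ifs <;> omega
  have hlt : ∀ j, r j < ℓ := by
    intro j
    have := i.2
    have := j.2
    simp only [r]; split_ifs <;> omega
  have hri : r i = 0 := by simp [r]
  have hinj : Function.Injective r := by
    intro j j' h
    apply Fin.ext
    have := j.2
    have := j'.2
    have := hrval j
    have := hrval j'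
    omega
  have hrsurj : ∀ n < ℓ, ∃ j, r j = n := by
    intro n hn
    have hi := i.2
    by_cases h : (i : ℕ) + n < ℓ
    · refine ⟨⟨i + n, h⟩, ?_⟩
      have := hrval ⟨i + n, h⟩
      have := hlt ⟨i + n, h⟩
      simp only at *
      omega
    · refine ⟨⟨i + n - ℓ, by omega⟩, ?_⟩
      have := hrval ⟨i + n - ℓ, by omega⟩
      have := hlt ⟨i + n - ℓ, by omega⟩
      simp only at *
      omega
  have hr1 : ∀ j, r (j + 1) = r j + 1 ∨ (r j + 1 = ℓ ∧ r (j + 1) = 0) := by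
    intro j
    have h1 : ((j + 1 : Fin ℓ) : ℕ) = ((j : ℕ) + 1) % ℓ := by
      rw [Fin.val_add, Fin.coe_ofNat_eq_mod, Nat.add_mod_mod]
    have := hrval j
    have := hrval (j + 1)
    have := hlt j
    have := hlt (j + 1)
    have := j.2
    have := i.2
    by_cases h : (j : ℕ) + 1 < ℓ
    · rw [Nat.mod_eq_of_lt h] at h1
      omega
    · have h2 : (j : ℕ) + 1 = ℓ := by omega
      rw [h2, Nat.mod_self] at h1
      omega
  have hlr : ∀ (f : Fin ℓ → ℝ) j, ∃ k : ℤ, lft f (i + r j) = f j + k := by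
    intro f j
    have e : (Fin.ofNat ℓ (i + r j) : Fin ℓ) = j := by
      apply Fin.ext
      have := j.2
      rcases hrval j with h | h <;> rw [h] <;> simp [Fin.ofNat, Nat.mod_eq_of_lt]
    refine ⟨((((i : ℕ) + r j) / ℓ : ℕ) : ℤ), ?_⟩
    simp only [lft, e]
    push_cast; rfl
  have hl0 : ∀ f : Fin ℓ → ℝ, lft f i = f i := by
    intro f
    have e : (Fin.ofNat ℓ (i : ℕ) : Fin ℓ) = i := by
      apply Fin.ext; simp [Fin.ofNat, Nat.mod_eq_of_lt]
    simp [lft, e, Nat.div_eq_of_lt i.2]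
  obtain ⟨hW, C, hC⟩ := core F hF hFper S hSd ℓ p i Vp Vm hVp hVm (t i) (ht i)
    (fun n => lft p (i + n)) (fun n => lft q (i + n))
    (fun n => ((hpb _).trans (hbq _).le)) (fun n => ((hqa _).le.trans (hap _)))
    (fun m n h => hPmono (by omega)) (fun n => by rw [← lft_ℓ, add_assoc])
    (fun n => hposN _) (fun n => hnegN _) r hinj hri hlt hrsurj hr1 (hlr p)
  refine ⟨(hWK i).trans hW, fun J => ?_⟩
  -- location of Q
  have hQloc : ∀ x ∈ Icc (a i) (b i), ∀ j, x < lft q (i + r j) ∧ lft q (i + r j) < x + 1 := by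
    intro x hx j
    constructor
    · have h1 := hBmono.monotone (show (i : ℕ) ≤ i + r j by omega)
      rw [hl0] at h1
      linarith [hbq (i + r j), hx.2]
    · have h1 := hAmono.monotone (show (i : ℕ) + r j + 1 ≤ i + ℓ by have := hlt j; omega)
      rw [lft_ℓ, hl0] at h1
      linarith [hqa (i + r j), hx.1]
  have hQfract : ∀ x ∈ Icc (a i) (b i), ∀ j, x + Int.fract (q j - x) = lft q (i + r j) := by
    intro x hx j
    obtain ⟨k, hk⟩ := hlr q j
    obtain ⟨h1, h2⟩ := hQloc x hx j
    have : Int.fract (q j - x) = lft q (i + r j) - x := by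
      rw [Int.fract_eq_iff]
      exact ⟨by linarith, by linarith, -k, by rw [hk]; push_cast; ring⟩
    rw [this]; ring
  have hSup : ∀ n, ∀ y ∈ Icc (lft p n) (lft p (n + 1)), S y ≤ S (lft q n) := by
    intro n y hy
    by_cases h : y ≤ lft q n
    · have := intervalIntegral.integral_nonneg (μ := MeasureTheory.volume) h
        (fun u hu => hposN n u ⟨hy.1.trans hu.1, hu.2⟩)
      rw [hSd] at this; linarith
    · push Not at h
      have := intervalIntegral.integral_nonneg (μ := MeasureTheory.volume) (f := fun u => - F u) h.le
        (fun u hu => by have := hnegN n u ⟨hu.1, hu.2.trans hy.2⟩; linarith)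
      rw [intervalIntegral.integral_neg, hSd] at this; linarith
  have hKc : ∀ x ∈ Icc (a i) (b i), ∀ y ∈ Icc (a i) (b i), S x = S y := by
    intro x hx y hy
    have : ∫ s in x..y, F s = ∫ s in x..y, (0:ℝ) :=
      intervalIntegral.integral_congr fun u hu =>
        (hstable i).1 u (ordConnected_Icc.uIcc_subset hx hy hu)
    rw [hSd] at this; simp at this; linarith
  have hKc1 : ∀ x ∈ Icc (a i) (b i), ∀ y ∈ Icc (a i) (b i), S (x + 1) = S (y + 1) := by
    intro x hx y hy
    have : ∫ s in (x + 1)..(y + 1), F s = ∫ s in (x + 1)..(y + 1), (0:ℝ) :=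
      intervalIntegral.integral_congr fun u hu => by
        have h : u - 1 ∈ uIcc x y := by
          rw [mem_uIcc] at hu ⊢
          rcases hu with hu | hu
          · left; constructor <;> linarith [hu.1, hu.2]
          · right; constructor <;> linarith [hu.1, hu.2]
        have := (hstable i).1 (u - 1) (ordConnected_Icc.uIcc_subset hx hy h)
        rw [← hFper] at this; simpa using this
    rw [hSd] at this; simp at this; linarith
  have hcov : ∀ m : ℕ, ∀ y, lft p i ≤ y → y ≤ lft p (i + m) → 0 < m →
      ∃ n < m, y ∈ Icc (lft p (i + n)) (lft p (i + n + 1)) := by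
    intro m
    induction m with
    | zero => intro y _ _ h; omega
    | succ m ih =>
      intro y h1 h2 _
      by_cases h : lft p (i + m) ≤ y
      · exact ⟨m, by omega, h, h2⟩
      · have hm : 0 < m := by
          by_contra h0
          have : m = 0 := by omega
          subst this; exact h h1
        obtain ⟨n, hn, hy⟩ := ih y h1 (not_le.1 h).le hm
        exact ⟨n, by omega, hy⟩
  have hmax0 : ∀ y ∈ Icc (p i) (p i + 1), ∃ j, S y ≤ S (lft q (i + r j)) := by
    intro y hy
    obtain ⟨n, hn, hy'⟩ := hcov ℓ y (by rw [hl0]; exact hy.1) (by rw [lft_ℓ, hl0]; exact hy.2) hℓ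
    obtain ⟨j, rfl⟩ := hrsurj n hn
    exact ⟨j, hSup _ y hy'⟩
  have hmaxx : ∀ x ∈ Icc (a i) (b i), ∀ y ∈ Icc x (x + 1), ∃ j, S y ≤ S (lft q (i + r j)) := by
    intro x hx y hy
    by_cases h1 : y < p i
    · rw [hKc y ⟨hx.1.trans hy.1, h1.le.trans (hp i).2⟩ (p i) (hp i)]
      exact hmax0 _ ⟨le_rfl, by linarith⟩
    by_cases h2 : p i + 1 < y
    · have := hKc1 (y - 1) ⟨by linarith [(hp i).1], by linarith [hy.2, hx.2]⟩ (p i) (hp i)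
      rw [sub_add_cancel] at this
      rw [this]
      exact hmax0 _ ⟨by linarith, le_rfl⟩
    · exact hmax0 y ⟨by linarith, by linarith⟩
  constructor
  · intro hJ x hx
    rw [hQfract x hx J]
    have hQJ : ∀ j, S (lft q (i + r j)) ≤ S (lft q (i + r J)) := by
      intro j
      have h1 : t i J ≤ t i j := hJ ▸ ciInf_le (Set.finite_range _).bddBelow j
      have h2 := hC j
      have h3 := hC J
      linarith
    symm
    apply IsGreatest.csSup_eq
    obtain ⟨e1, e2⟩ := hQloc x hx J
    refine ⟨⟨_, ⟨e1.le, e2.le⟩, rfl⟩, ?_⟩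
    rintro _ ⟨y, hy, rfl⟩
    obtain ⟨j, hj⟩ := hmaxx x hx y hy
    have := hQJ j
    simp only
    linarith
  · intro h
    have h1 := h (p i) (hp i)
    rw [hQfract _ (hp i)] at h1
    have hScont : Continuous S := by
      have : S = fun x => ∫ t in (0:ℝ)..x, F t := funext hS
      rw [this]
      exact intervalIntegral.continuous_primitive (fun _ _ => hFint _ _) 0
    have hbdd : BddAbove ((fun y => S y - S (p i)) '' Icc (p i) (p i + 1)) :=
      (isCompact_Icc.image (hScont.sub continuous_const)).bddAbove
    apply le_antisymm
    · apply le_ciInf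
      intro j
      obtain ⟨e1, e2⟩ := hQloc (p i) (hp i) j
      have h4 : S (lft q (i + r j)) - S (p i) ≤ _ := le_csSup hbdd ⟨_, ⟨e1.le, e2.le⟩, rfl⟩
      have h2 := hC j
      have h3 := hC J
      linarith
    · exact ciInf_le (Set.finite_range _).bddBelow J
end
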